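/- arXiv:1410.1610 — 9 statements merged into one kernel-verified Lean document; each statement's English description precedes it below -/
import Mathlib

section
/- Let n and m be natural numbers, let X₁, X₂ be n×n real matrices, let Y₁, Y₂ be m×m real matrices, and for i = 1, 2 let Mᵢ be the (n+m)×(n+m) block matrix [[Xᵢ, J_{n,m}], [J_{m,n}, Yᵢ]], where J_{n,m} denotes the n×m all-ones matrix. If X₁ and X₂ are cospectral, J − X₁ and J − X₂ are cospectral, Y₁ and Y₂ are cospectral, and J − Y₁ and J − Y₂ are cospectral, then M₁ and M₂ are cospectral and J − M₁ and J − M₂ are cospectral. -/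
/-!
For an invertible square matrix `A`, write `σ(A)` for the sum of the entries of `A⁻¹`. The matrix
determinant lemma gives `det (A + c J) = det A * (1 + c σ(A))`. Together with the Schur complement
it yields, for invertible `A` and `B`,
`det [[A, -J], [-J, B]] = det A * det B * (1 - σ(A) σ(B))`.
With `A = tI - X` the characteristic polynomial of `X` at `t` is `det A`, and that of `J - X` at
`-t` is, up to the sign `(-1) ^ n`, equal to `det (A + J) = det A * (1 + σ(A))`. Hence the two
characteristic polynomials attached to `X` determine `σ(tI - X)`; likewise for `Y`. So the
characteristic polynomials of `M₁` and `M₂` agree at every `t` that is a root of neither `X₁.charpoly`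
nor `Y₁.charpoly`, and therefore they are equal. The complement `J - M` is block diagonal with blocks
`J - X` and `J - Y`.
-/

open Matrix

/-- The sum of the entries of `A⁻¹`; meaningful only for invertible `A`. -/
noncomputable def invSum {n : ℕ} (A : Matrix (Fin n) (Fin n) ℝ) : ℝ := ∑ i, ∑ j, A⁻¹ i j

/-- The matrix determinant lemma for a multiple of the all-ones matrix. -/
lemma det_add_smul_ones {n : ℕ} (A : Matrix (Fin n) (Fin n) ℝ) (hA : A.det ≠ 0) (c : ℝ) :
    (A + c • Matrix.of fun _ _ => (1 : ℝ)).det = A.det * (1 + c * invSum A) := by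
  have h := det_add_replicateCol_mul_replicateRow (ι := Unit) (isUnit_iff_ne_zero.mpr hA)
    (fun _ => c) (fun _ => 1)
  have e : (c • Matrix.of fun _ _ => (1 : ℝ) : Matrix (Fin n) (Fin n) ℝ)
      = replicateCol Unit (fun _ : Fin n => c) * replicateRow Unit (fun _ : Fin n => (1 : ℝ)) := by
    ext i j
    simp [Matrix.mul_apply]
  rw [e, h, det_unique (n := Unit)]
  congr 1
  simp only [Matrix.add_apply, Matrix.one_apply_eq, Matrix.mul_apply, replicateRow_apply,
    replicateCol_apply, one_mul, invSum, add_right_inj]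
  rw [← Finset.sum_mul, Finset.sum_comm, mul_comm]

lemma det_fromBlocks_neg_ones {n m : ℕ} (A : Matrix (Fin n) (Fin n) ℝ)
    (B : Matrix (Fin m) (Fin m) ℝ) (hA : A.det ≠ 0) (hB : B.det ≠ 0) :
    (fromBlocks A (-Matrix.of fun _ _ => 1) (-Matrix.of fun _ _ => 1) B).det
      = A.det * B.det * (1 - invSum A * invSum B) := by
  let _ := A.invertibleOfIsUnitDet (isUnit_iff_ne_zero.mpr hA)
  have e : B - (-Matrix.of fun _ _ => 1 : Matrix (Fin m) (Fin n) ℝ) * ⅟A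
        * (-Matrix.of fun _ _ => 1 : Matrix (Fin n) (Fin m) ℝ)
      = B + (-invSum A) • Matrix.of fun _ _ => (1 : ℝ) := by
    rw [Matrix.invOf_eq_nonsing_inv]
    ext i j
    simp only [Matrix.neg_mul, Matrix.mul_neg, neg_neg, Matrix.sub_apply, Matrix.add_apply,
      Matrix.mul_apply, Matrix.smul_apply, Matrix.of_apply, invSum, one_mul, mul_one, smul_eq_mul]
    rw [Finset.sum_comm]
    ring
  rw [det_fromBlocks₁₁, e, det_add_smul_ones B hB]
  ring

/-- The characteristic polynomial of `J - X` at `-t` is, up to sign, `det (tI - X + J)`. -/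
lemma eval_charpoly_ones_sub {n : ℕ} (X : Matrix (Fin n) (Fin n) ℝ) (t : ℝ) :
    ((Matrix.of fun _ _ => (1 : ℝ)) - X).charpoly.eval (-t)
      = (-1) ^ n * (scalar (Fin n) t - X + (1 : ℝ) • Matrix.of fun _ _ => (1 : ℝ)).det := by
  have e : scalar (Fin n) (-t) - ((Matrix.of fun _ _ => (1 : ℝ)) - X)
      = -(scalar (Fin n) t - X + (1 : ℝ) • Matrix.of fun _ _ => (1 : ℝ)) := by
    rw [map_neg, one_smul]
    abel
  rw [eval_charpoly, e, det_neg, Fintype.card_fin]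

lemma invSum_eq_of_cospectral {n : ℕ} {X₁ X₂ : Matrix (Fin n) (Fin n) ℝ}
    (hX : X₁.charpoly = X₂.charpoly)
    (hXc : ((Matrix.of fun _ _ => (1 : ℝ)) - X₁).charpoly
          = ((Matrix.of fun _ _ => (1 : ℝ)) - X₂).charpoly)
    {t : ℝ} (ht : X₁.charpoly.eval t ≠ 0) :
    invSum (scalar (Fin n) t - X₁) = invSum (scalar (Fin n) t - X₂) := by
  have hd : (scalar (Fin n) t - X₁).det = (scalar (Fin n) t - X₂).det := by
    rw [← eval_charpoly, ← eval_charpoly, hX]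
  rw [eval_charpoly] at ht
  have h := congrArg (Polynomial.eval (-t)) hXc
  rw [eval_charpoly_ones_sub, eval_charpoly_ones_sub, det_add_smul_ones _ ht,
    det_add_smul_ones _ (hd ▸ ht), ← hd] at h
  have h' := mul_left_cancel₀ ht (mul_left_cancel₀ (pow_ne_zero n (by norm_num)) h)
  linarith

lemma eval_charpoly_fromBlocks_ones {n m : ℕ} (X : Matrix (Fin n) (Fin n) ℝ)
    (Y : Matrix (Fin m) (Fin m) ℝ) {t : ℝ} (hX : X.charpoly.eval t ≠ 0)
    (hY : Y.charpoly.eval t ≠ 0) :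
    (fromBlocks X (Matrix.of fun _ _ => 1) (Matrix.of fun _ _ => 1) Y).charpoly.eval t
      = X.charpoly.eval t * Y.charpoly.eval t
        * (1 - invSum (scalar (Fin n) t - X) * invSum (scalar (Fin m) t - Y)) := by
  rw [eval_charpoly] at hX hY
  rw [eval_charpoly, eval_charpoly, eval_charpoly, ← det_fromBlocks_neg_ones _ _ hX hY]
  congr 1
  ext (i | i) (j | j) <;> simp [Matrix.diagonal_apply]

lemma ones_sub_fromBlocks_ones {n m : ℕ} (X : Matrix (Fin n) (Fin n) ℝ)
    (Y : Matrix (Fin m) (Fin m) ℝ) :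
    (Matrix.of fun _ _ => (1 : ℝ))
        - fromBlocks X (Matrix.of fun _ _ => 1) (Matrix.of fun _ _ => 1) Y
      = fromBlocks ((Matrix.of fun _ _ => (1 : ℝ)) - X) 0 0
          ((Matrix.of fun _ _ => (1 : ℝ)) - Y) := by
  ext (i | i) (j | j) <;> simp

/-- If `X₁, X₂` are cospectral, `J - X₁, J - X₂` are cospectral,
`Y₁, Y₂` are cospectral and `J - Y₁, J - Y₂` are cospectral, then the block matrices
`Mᵢ = [[Xᵢ, J],[J, Yᵢ]]` are cospectral, as are `J - M₁` and `J - M₂`. -/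
theorem stmt_0 (n m : ℕ) (X₁ X₂ : Matrix (Fin n) (Fin n) ℝ)
    (Y₁ Y₂ : Matrix (Fin m) (Fin m) ℝ)
    (M₁ M₂ : Matrix (Fin n ⊕ Fin m) (Fin n ⊕ Fin m) ℝ)
    (hM₁ : M₁ = Matrix.fromBlocks X₁ (Matrix.of fun _ _ => 1) (Matrix.of fun _ _ => 1) Y₁)
    (hM₂ : M₂ = Matrix.fromBlocks X₂ (Matrix.of fun _ _ => 1) (Matrix.of fun _ _ => 1) Y₂)
    (hX : X₁.charpoly = X₂.charpoly)
    (hXc : ((Matrix.of fun _ _ => (1 : ℝ)) - X₁).charpoly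
          = ((Matrix.of fun _ _ => (1 : ℝ)) - X₂).charpoly)
    (hY : Y₁.charpoly = Y₂.charpoly)
    (hYc : ((Matrix.of fun _ _ => (1 : ℝ)) - Y₁).charpoly
          = ((Matrix.of fun _ _ => (1 : ℝ)) - Y₂).charpoly) :
    M₁.charpoly = M₂.charpoly ∧
    ((Matrix.of fun _ _ => (1 : ℝ)) - M₁).charpoly
      = ((Matrix.of fun _ _ => (1 : ℝ)) - M₂).charpoly := by
  subst hM₁ hM₂
  constructor
  · -- Multiplying by the nonzero factor `X₁.charpoly * Y₁.charpoly` takes care of the finitely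
    -- many `t` at which a diagonal block of `tI - M₁` is singular.
    have hne : X₁.charpoly * Y₁.charpoly ≠ 0 :=
      mul_ne_zero X₁.charpoly_monic.ne_zero Y₁.charpoly_monic.ne_zero
    refine mul_left_cancel₀ hne (Polynomial.funext fun t => ?_)
    simp only [Polynomial.eval_mul]
    by_cases hx : X₁.charpoly.eval t = 0
    · simp [hx]
    by_cases hy : Y₁.charpoly.eval t = 0
    · simp [hy]
    rw [eval_charpoly_fromBlocks_ones X₁ Y₁ hx hy,
      eval_charpoly_fromBlocks_ones X₂ Y₂ (hX ▸ hx) (hY ▸ hy),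
      invSum_eq_of_cospectral hX hXc hx, invSum_eq_of_cospectral hY hYc hy, hX, hY]
  · rw [ones_sub_fromBlocks_ones, ones_sub_fromBlocks_ones, charpoly_fromBlocks_zero₁₂,
      charpoly_fromBlocks_zero₁₂, hXc, hYc]
end

section
/- Let n and m be natural numbers, let X₁, X₂ be n×n real matrices, let Y₁, Y₂ be m×m real matrices, and for i = 1, 2 let Mᵢ be the (n+m)×(n+m) block matrix [[Xᵢ, J_{n,m}], [J_{m,n}, Yᵢ]], where J_{n,m} denotes the n×m all-ones matrix. If M₁ and M₂ are cospectral, J − M₁ and J − M₂ are cospectral, Y₁ and Y₂ are cospectral, and J − Y₁ and J − Y₂ are cospectral, then X₁ and X₂ are cospectral and J − X₁ and J − X₂ are cospectral. -/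
/-!
Put `p_X = det (t - X)` and `q_X = det (t - X + J)`, the characteristic polynomials of `X` and
`X - J`. Since `J - M = diag (J - X, J - Y)`, the characteristic polynomial of `J - M` is the product
of those of `J - X` and `J - Y`; cancelling the latter settles `J - X` and, after a sign change, `q_X`.

On the other hand `t - M` is the all-ones (rank one) update `diag (t - X + J, t - Y + J) - J`, and the
matrix determinant lemma turns this into
`p_M = p_X * q_Y + q_X * p_Y - q_X * q_Y` (`charpoly_fromBlocks_ones`).
Here `q_Y` is monic, so `p_X` is determined by `p_M`, `p_Y`, `q_X`, `q_Y`.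
-/

open Matrix

/-- The matrix determinant lemma for subtracting the all-ones matrix. -/
lemma det_sub_ones {ι R : Type*} [Fintype ι] [DecidableEq ι] [CommRing R]
    (A : Matrix ι ι R) (hA : IsUnit A.det) :
    (A - of fun _ _ => 1).det = A.det * (1 - ∑ i, ∑ j, A⁻¹ i j) := by
  have h := det_add_replicateCol_mul_replicateRow (ι := Unit) hA (fun _ => -1) (fun _ => 1)
  have e : A + replicateCol Unit (fun _ : ι => (-1 : R)) * replicateRow Unit (fun _ : ι => (1 : R))
      = A - of fun _ _ => 1 := by
    ext i j
    simp [Matrix.mul_apply, sub_eq_add_neg]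
  rw [e] at h
  rw [h, det_unique (n := Unit), Finset.sum_comm (f := fun i j => A⁻¹ i j)]
  simp [Matrix.mul_apply, sub_eq_add_neg]

lemma det_fromBlocks_sub_ones_of_isUnit {ι κ R : Type*} [Fintype ι] [DecidableEq ι]
    [Fintype κ] [DecidableEq κ] [CommRing R] (A : Matrix ι ι R) (B : Matrix κ κ R)
    (hA : IsUnit A.det) (hB : IsUnit B.det) :
    (fromBlocks A 0 0 B - of fun _ _ => 1).det
      = (A - of fun _ _ => 1).det * B.det + A.det * (B - of fun _ _ => 1).det
        - A.det * B.det := by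
  have hu : IsUnit (fromBlocks A 0 0 B).det := by
    rw [det_fromBlocks_zero₂₁]
    exact hA.mul hB
  have hiff : IsUnit A ↔ IsUnit B :=
    iff_of_true ((isUnit_iff_isUnit_det A).2 hA) ((isUnit_iff_isUnit_det B).2 hB)
  rw [det_sub_ones _ hu, det_sub_ones _ hA, det_sub_ones _ hB,
    inv_fromBlocks_zero₂₁_of_isUnit_iff _ _ _ hiff, det_fromBlocks_zero₂₁]
  simp only [Fintype.sum_sum_type, fromBlocks_apply₁₁, fromBlocks_apply₁₂, fromBlocks_apply₂₁,
    fromBlocks_apply₂₂, Matrix.mul_zero, Matrix.zero_mul, neg_zero, Matrix.zero_apply,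
    Finset.sum_const_zero, add_zero, zero_add]
  ring

/-- Over a domain, nonzero determinants become units in the fraction field, where
`det_fromBlocks_sub_ones_of_isUnit` applies. -/
lemma det_fromBlocks_sub_ones {ι κ R : Type*} [Fintype ι] [DecidableEq ι]
    [Fintype κ] [DecidableEq κ] [CommRing R] [IsDomain R] (A : Matrix ι ι R) (B : Matrix κ κ R)
    (hA : A.det ≠ 0) (hB : B.det ≠ 0) :
    (fromBlocks A 0 0 B - of fun _ _ => 1).det
      = (A - of fun _ _ => 1).det * B.det + A.det * (B - of fun _ _ => 1).det
        - A.det * B.det := by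
  set f := algebraMap R (FractionRing R)
  have hf : Function.Injective f := IsFractionRing.injective R (FractionRing R)
  have hunit {d : R} (hd : d ≠ 0) : IsUnit (f d) :=
    ((map_ne_zero_iff f hf).2 hd).isUnit
  have h := det_fromBlocks_sub_ones_of_isUnit (f.mapMatrix A) (f.mapMatrix B)
    (by rw [← RingHom.map_det]; exact hunit hA) (by rw [← RingHom.map_det]; exact hunit hB)
  have eb : fromBlocks (f.mapMatrix A) 0 0 (f.mapMatrix B)
      = f.mapMatrix (fromBlocks A 0 0 B) := by
    simp [fromBlocks_map]
  rw [eb] at h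
  have e₁ : f.mapMatrix A - (of fun _ _ => 1) = f.mapMatrix (A - of fun _ _ => 1) := by
    ext i j
    simp
  have e₂ : f.mapMatrix B - (of fun _ _ => 1) = f.mapMatrix (B - of fun _ _ => 1) := by
    ext i j
    simp
  have e₃ : f.mapMatrix (fromBlocks A 0 0 B) - (of fun _ _ => 1)
      = f.mapMatrix (fromBlocks A 0 0 B - of fun _ _ => 1) := by
    ext i j
    simp
  rw [e₁, e₂, e₃] at h
  simp only [← RingHom.map_det] at h
  apply hf
  simpa only [map_sub, map_add, map_mul] using h

lemma charmatrix_sub_ones {ι : Type*} [Fintype ι] [DecidableEq ι] (X : Matrix ι ι ℝ) :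
    (X - of fun _ _ => 1).charmatrix - (of fun _ _ => 1) = X.charmatrix := by
  ext1 i j
  simp [charmatrix_apply]
  ring

/-- The characteristic polynomial of the join-type block matrix `[[X, J], [J, Y]]`. -/
lemma charpoly_fromBlocks_ones {ι κ : Type*} [Fintype ι] [DecidableEq ι]
    [Fintype κ] [DecidableEq κ] (X : Matrix ι ι ℝ) (Y : Matrix κ κ ℝ) :
    (fromBlocks X (of fun _ _ => 1) (of fun _ _ => 1) Y).charpoly
      = X.charpoly * (Y - of fun _ _ => 1).charpoly
        + (X - of fun _ _ => 1).charpoly * Y.charpoly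
        - (X - of fun _ _ => 1).charpoly * (Y - of fun _ _ => 1).charpoly := by
  have h := det_fromBlocks_sub_ones (X - of fun _ _ => 1).charmatrix
    (Y - of fun _ _ => 1).charmatrix (by exact (charpoly_monic _).ne_zero)
    (by exact (charpoly_monic _).ne_zero)
  rw [charmatrix_sub_ones, charmatrix_sub_ones] at h
  have e : fromBlocks (X - of fun _ _ => 1).charmatrix 0 0 (Y - of fun _ _ => 1).charmatrix
      - (of fun _ _ => 1)
      = (fromBlocks X (of fun _ _ => 1) (of fun _ _ => 1) Y).charmatrix := by
    ext1 (i | i) (j | j) <;> simp [charmatrix_apply, diagonal_apply] <;> ring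
  rw [e] at h
  exact h

lemma charpoly_neg_congr {ι : Type*} [Fintype ι] [DecidableEq ι] {A B : Matrix ι ι ℝ}
    (h : A.charpoly = B.charpoly) : (-A).charpoly = (-B).charpoly := by
  have key (C : Matrix ι ι ℝ) (t : ℝ) :
      (-C).charpoly.eval t = (-1) ^ Fintype.card ι * C.charpoly.eval (-t) := by
    rw [eval_charpoly, eval_charpoly, ← det_neg]
    congr 1
    ext i j
    by_cases hij : i = j <;> simp [hij, add_comm]
  apply Polynomial.funext
  intro t
  rw [key, key, h]


open Matrix

/-- If the block matrices `Mᵢ = [[Xᵢ, J],[J, Yᵢ]]` are cospectral,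
`J - M₁, J - M₂` are cospectral, `Y₁, Y₂` are cospectral and `J - Y₁, J - Y₂` are
cospectral, then `X₁, X₂` are cospectral and `J - X₁, J - X₂` are cospectral. -/
theorem stmt_1 (n m : ℕ) (X₁ X₂ : Matrix (Fin n) (Fin n) ℝ)
    (Y₁ Y₂ : Matrix (Fin m) (Fin m) ℝ)
    (M₁ M₂ : Matrix (Fin n ⊕ Fin m) (Fin n ⊕ Fin m) ℝ)
    (hM₁ : M₁ = Matrix.fromBlocks X₁ (Matrix.of fun _ _ => 1) (Matrix.of fun _ _ => 1) Y₁)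
    (hM₂ : M₂ = Matrix.fromBlocks X₂ (Matrix.of fun _ _ => 1) (Matrix.of fun _ _ => 1) Y₂)
    (hM : M₁.charpoly = M₂.charpoly)
    (hMc : ((Matrix.of fun _ _ => (1 : ℝ)) - M₁).charpoly
          = ((Matrix.of fun _ _ => (1 : ℝ)) - M₂).charpoly)
    (hY : Y₁.charpoly = Y₂.charpoly)
    (hYc : ((Matrix.of fun _ _ => (1 : ℝ)) - Y₁).charpoly
          = ((Matrix.of fun _ _ => (1 : ℝ)) - Y₂).charpoly) :
    X₁.charpoly = X₂.charpoly ∧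
    ((Matrix.of fun _ _ => (1 : ℝ)) - X₁).charpoly
      = ((Matrix.of fun _ _ => (1 : ℝ)) - X₂).charpoly := by
  subst hM₁ hM₂
  set jn : Matrix (Fin n) (Fin n) ℝ := of fun _ _ => 1
  set jm : Matrix (Fin m) (Fin m) ℝ := of fun _ _ => 1
  have hblock (X : Matrix (Fin n) (Fin n) ℝ) (Y : Matrix (Fin m) (Fin m) ℝ) :
      ((of fun _ _ => (1 : ℝ)) - fromBlocks X (of fun _ _ => 1) (of fun _ _ => 1) Y).charpoly
        = (jn - X).charpoly * (jm - Y).charpoly := by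
    rw [← charpoly_fromBlocks_zero₁₂ (M₂₁ := 0)]
    congr 1
    ext (i | i) (j | j) <;> simp [jn, jm]
  have hXc : (jn - X₁).charpoly = (jn - X₂).charpoly := by
    rw [hblock, hblock, hYc] at hMc
    exact mul_right_cancel₀ (charpoly_monic _).ne_zero hMc
  refine ⟨?_, hXc⟩
  have hXn : (X₁ - jn).charpoly = (X₂ - jn).charpoly := by
    simpa using charpoly_neg_congr hXc
  have hYn : (Y₁ - jm).charpoly = (Y₂ - jm).charpoly := by
    simpa using charpoly_neg_congr hYc
  rw [charpoly_fromBlocks_ones, charpoly_fromBlocks_ones] at hM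
  change X₁.charpoly * (Y₁ - jm).charpoly + (X₁ - jn).charpoly * Y₁.charpoly
      - (X₁ - jn).charpoly * (Y₁ - jm).charpoly
    = X₂.charpoly * (Y₂ - jm).charpoly + (X₂ - jn).charpoly * Y₂.charpoly
      - (X₂ - jn).charpoly * (Y₂ - jm).charpoly at hM
  rw [hXn, hYn, hY] at hM
  apply mul_right_cancel₀ (charpoly_monic (Y₂ - jm)).ne_zero
  linear_combination hM
end

section
/- Let G be a finite simple graph on n vertices. Then at least one of the following holds: (i) every finite simple graph H on n vertices such that φ_T(H) = φ_T(G) and φ_T(co(H)) = φ_T(co(G)) is isomorphic to G; or (ii) every vertex of G belongs to the 2-core of G or to the 2-core of co(G). -/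
/-!
Graphs with the same `φ_T` have Hashimoto matrices with equal power traces
(`trace_pow_eq_of_charpoly_eq`). Three consequences matter. The size of `T` is twice the number of
edges; `tr T³` is the number of ordered triangles; and `tr T⁴` vanishes exactly when there is no
4-cycle. By Goodman's identity (`goodman`), the numbers of triangles in a graph and in its
complement, together with the number of edges, determine the sum `∑ d²` of the squared degrees.
So the pair `φ_T(G)`, `φ_T(co G)` determines `∑ d²` (`sum_degree_sq_eq_of_phiT_eq`).

Suppose a vertex `v` lies outside the 2-core of `G` and outside that of `co G`. If `v` had two
neighbours and two non-neighbours, then among `v` and these four vertices one would find a cycle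
of length 3, 4 or 5 through `v` in `G` or in `co G`. Hence `v` has degree at most one in one of the
two graphs (`degree_small`). Let `F` be the other one, in which `v` has at most one non-neighbour.
Since no 3- or 4-cycle of `F` passes through `v`, the graph `F` is either a star, up to isolated
vertices, or a spider, that is, a star centred at `v` with one further vertex hanging from a leaf
(`shape_of_subsingleton`).

Finally these shapes are recognised by the invariants above. Let `c` be a vertex of maximal degree
`D` in a triangle-free graph with `m` edges, `r` of which avoid `c`. Then
`∑ d² ≤ D² + D + r(r + 1) + 2r` and `∑ d² ≤ 2Dm`. The value `∑ d² = m² + m` attained by stars forces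
`r = 0` (`exists_starAt`). The value `∑ d² = m² - m + 4` attained by spiders, which have `n = m + 1`
vertices, forces `r = 1`, except when `m = 4` and `D = 2`; that case is excluded because all degrees
would be 0 or 2, which is impossible for four edges without triangles and 4-cycles
(`exists_spiderAt`). So any `H` with the same two polynomials is isomorphic to `G`, either directly
or after passing to complements.
-/

open Matrix

noncomputable section
open scoped Classical

/-- The type of oriented edges of a simple graph: ordered pairs of adjacent vertices. -/
def OrientedEdge {V : Type*} (G : SimpleGraph V) : Type _ :=
  {p : V × V // G.Adj p.1 p.2}

instance {V : Type*} [Fintype V] (G : SimpleGraph V) : Fintype (OrientedEdge G) :=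
  Subtype.fintype _

instance {V : Type*} [DecidableEq V] (G : SimpleGraph V) : DecidableEq (OrientedEdge G) :=
  Subtype.instDecidableEq

/-- Hashimoto's oriented edge matrix `T(G)`: the entry at `((u,v),(v',w))` is `1` if
`v = v'` and `u ≠ w`, and `0` otherwise. -/
def hashimotoMatrix {V : Type*} (G : SimpleGraph V) :
    Matrix (OrientedEdge G) (OrientedEdge G) ℝ :=
  Matrix.of fun e f => if e.1.2 = f.1.1 ∧ e.1.1 ≠ f.1.2 then 1 else 0

/-- `φ_T(G)`, the characteristic polynomial of the Hashimoto oriented edge matrix. -/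
def phiT {V : Type*} [Fintype V] [DecidableEq V] (G : SimpleGraph V) : Polynomial ℝ :=
  (hashimotoMatrix G).charpoly

/-- A vertex `v` belongs to the 2-core of `G` if some subgraph of `G` containing `v`
has minimum degree at least `2`. -/
def InTwoCore {V : Type*} [Fintype V] (G : SimpleGraph V) (v : V) : Prop :=
  ∃ H : G.Subgraph, v ∈ H.verts ∧ ∀ u ∈ H.verts, 2 ≤ H.degree u

/-! ### Power traces are determined by the characteristic polynomial -/

/-- For complex matrices `det (q(A))` is determined by the characteristic polynomial of `A`: up to
a factor depending only on `q` and the size of `A`, it is the product of the values of that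
polynomial at the roots of `q`. -/
lemma det_aeval_eq_of_charpoly_eq {m n : Type*} [Fintype m] [DecidableEq m] [Fintype n]
    [DecidableEq n] (A : Matrix m m ℂ) (B : Matrix n n ℂ) (h : A.charpoly = B.charpoly)
    (q : Polynomial ℂ) :
    (Polynomial.aeval A q).det = (Polynomial.aeval B q).det := by
  have hc : Fintype.card m = Fintype.card n := by
    rw [← A.charpoly_natDegree_eq_dim, h, B.charpoly_natDegree_eq_dim]
  let f : Polynomial ℂ →* ℂ :=
    (Matrix.detMonoidHom).comp (Polynomial.aeval A : Polynomial ℂ →ₐ[ℂ] Matrix m m ℂ).toRingHom.toMonoidHom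
  let g : Polynomial ℂ →* ℂ :=
    (Matrix.detMonoidHom).comp (Polynomial.aeval B : Polynomial ℂ →ₐ[ℂ] Matrix n n ℂ).toRingHom.toMonoidHom
  have hC : ∀ a : ℂ, f (Polynomial.C a) = g (Polynomial.C a) := by
    intro a
    simp [f, g, Matrix.algebraMap_eq_diagonal, hc]
  have hX : ∀ r : ℂ, f (Polynomial.X - Polynomial.C r) = g (Polynomial.X - Polynomial.C r) := by
    intro r
    have h1 := A.eval_charpoly r
    have h2 := B.eval_charpoly r
    have h3 : (A - algebraMap ℂ _ r).det = (B - algebraMap ℂ _ r).det := by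
      rw [← neg_sub, Matrix.det_neg, ← neg_sub (algebraMap ℂ _ r) B, Matrix.det_neg, hc]
      rw [h] at h1
      congr 1
      rw [Matrix.algebraMap_eq_diagonal, Matrix.algebraMap_eq_diagonal]
      exact h1.symm.trans h2
    simpa [f, g] using h3
  have key : f q = g q := by
    rw [(IsAlgClosed.splits q).eq_prod_roots]
    rw [map_mul, map_mul, hC, map_multiset_prod, map_multiset_prod, Multiset.map_map,
      Multiset.map_map]
    congr 2
    exact Multiset.map_congr rfl fun r _ => hX r
  exact key

/-- Applying the previous lemma to `q = x - X ^ k` shows that `A ^ k` and `B ^ k` have the same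
characteristic polynomial, hence the same trace. -/
lemma trace_pow_eq_of_charpoly_eq {m n : Type*} [Fintype m] [DecidableEq m] [Fintype n]
    [DecidableEq n] (A : Matrix m m ℝ) (B : Matrix n n ℝ) (h : A.charpoly = B.charpoly)
    (k : ℕ) : (A ^ k).trace = (B ^ k).trace := by
  have hC : (A.map (algebraMap ℝ ℂ)).charpoly = (B.map (algebraMap ℝ ℂ)).charpoly := by
    rw [Matrix.charpoly_map, Matrix.charpoly_map, h]
  set A' := A.map (algebraMap ℝ ℂ) with hA'
  set B' := B.map (algebraMap ℝ ℂ) with hB'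
  have hp : (A' ^ k).charpoly = (B' ^ k).charpoly := by
    apply Polynomial.funext
    intro x
    have := det_aeval_eq_of_charpoly_eq A' B' hC (Polynomial.C x - Polynomial.X ^ k)
    rw [Matrix.eval_charpoly, Matrix.eval_charpoly]
    simpa [Matrix.algebraMap_eq_diagonal, Pi.algebraMap_def] using this
  have ht : (A' ^ k).trace = (B' ^ k).trace := by
    rw [Matrix.trace_eq_sum_roots_charpoly, Matrix.trace_eq_sum_roots_charpoly, hp]
  have e1 : A' ^ k = (A ^ k).map (algebraMap ℝ ℂ) := by
    rw [Matrix.map_pow]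
  have e2 : B' ^ k = (B ^ k).map (algebraMap ℝ ℂ) := by
    rw [Matrix.map_pow]
  rw [e1, e2] at ht
  have e3 : (((A ^ k).trace : ℝ) : ℂ) = (((B ^ k).trace : ℝ) : ℂ) := by
    simpa [Matrix.trace] using ht
  exact_mod_cast e3

/-! ### Graph invariants read off from the Hashimoto matrix -/

/-- The `0/1` indicator of adjacency. -/
def ind {V : Type*} (G : SimpleGraph V) (u w : V) : ℝ := if G.Adj u w then 1 else 0

/-- The number of ordered triangles of `G`, as a real number. -/
def tri {V : Type*} [Fintype V] (G : SimpleGraph V) : ℝ :=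
  ∑ a, ∑ b, ∑ c, ind G a b * ind G b c * ind G c a

section
variable {V : Type*}

lemma ind_nonneg (G : SimpleGraph V) (u w : V) : 0 ≤ ind G u w := by
  unfold ind; split_ifs <;> norm_num

lemma ind_comm (G : SimpleGraph V) (u w : V) : ind G u w = ind G w u := by
  simp [ind, G.adj_comm]

variable [Fintype V]

lemma degree_eq_sum_ind (G : SimpleGraph V) (u : V) : (G.degree u : ℝ) = ∑ w, ind G u w := by
  simp [ind, SimpleGraph.degree, SimpleGraph.neighborFinset_eq_filter]

lemma sum_orientedEdge (G : SimpleGraph V) (F : V → V → ℝ) :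
    ∑ e : OrientedEdge G, F e.1.1 e.1.2 = ∑ u, ∑ w, ind G u w * F u w := by
  rw [← Fintype.sum_prod_type' (fun u w => ind G u w * F u w)]
  simp only [ind, ite_mul, one_mul, zero_mul]
  rw [← Finset.sum_filter]
  exact (Finset.sum_subtype (Finset.univ.filter fun p : V × V => G.Adj p.1 p.2)
    (by simp) (fun p => F p.1 p.2)).symm

variable [DecidableEq V]

/-- The size of the Hashimoto matrix is the number of oriented edges. -/
lemma sum_degree_eq_of_phiT_eq {G H : SimpleGraph V} (h : phiT H = phiT G) :
    ∑ v, (H.degree v : ℝ) = ∑ v, (G.degree v : ℝ) := by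
  have key : ∀ K : SimpleGraph V, ∑ v, (K.degree v : ℝ) = ((phiT K).natDegree : ℝ) := by
    intro K
    rw [phiT, Matrix.charpoly_natDegree_eq_dim]
    have := sum_orientedEdge K (fun _ _ => 1)
    simp only [Finset.sum_const, Finset.card_univ, mul_one, nsmul_eq_mul] at this
    rw [this]
    exact Finset.sum_congr rfl fun v _ => degree_eq_sum_ind K v
  rw [key, key, h]

lemma trace_hashimoto_cube (G : SimpleGraph V) : (hashimotoMatrix G ^ 3).trace = tri G := by
  have h1 : (hashimotoMatrix G ^ 3).trace = ∑ e : OrientedEdge G, ∑ f : OrientedEdge G,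
      ∑ g : OrientedEdge G,
        hashimotoMatrix G e f * hashimotoMatrix G f g * hashimotoMatrix G g e := by
    rw [pow_succ, pow_two]
    simp only [Matrix.trace, Matrix.diag, Matrix.mul_apply, Finset.sum_mul]
    exact Finset.sum_congr rfl fun e _ => Finset.sum_comm
  let K : V → V → V → V → ℝ := fun a b c d => if b = c ∧ a ≠ d then 1 else 0
  have hK : ∀ e f, hashimotoMatrix G e f = K e.1.1 e.1.2 f.1.1 f.1.2 := fun e f => by
    simp [hashimotoMatrix, K]
  simp only [h1, hK]
  rw [sum_orientedEdge G (fun a b => ∑ f : OrientedEdge G, ∑ g : OrientedEdge G,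
    K a b f.1.1 f.1.2 * K f.1.1 f.1.2 g.1.1 g.1.2 * K g.1.1 g.1.2 a b)]
  unfold tri
  refine Finset.sum_congr rfl fun a _ => Finset.sum_congr rfl fun b _ => ?_
  rw [sum_orientedEdge G (fun c d => ∑ g : OrientedEdge G,
    K a b c d * K c d g.1.1 g.1.2 * K g.1.1 g.1.2 a b), Finset.mul_sum]
  rw [Finset.sum_eq_single b, Finset.mul_sum]
  · refine Finset.sum_congr rfl fun d _ => ?_
    rw [sum_orientedEdge G (fun e f => K a b b d * K b d e f * K e f a b)]
    rw [Finset.sum_eq_single d, Finset.sum_eq_single a]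
    · by_cases h1 : G.Adj a b
      · by_cases h2 : G.Adj b d
        · by_cases h3 : G.Adj d a
          · simp [ind, K, h1, h2, h3, h1.ne', h2.ne', h3.ne']
          · simp [ind, h3]
        · simp [ind, h2]
      · simp [ind, h1]
    · intro f _ hf; simp [K, hf]
    · simp
    · intro e _ he; simp [K, Ne.symm he]
    · simp
  · intro c _ hc
    simp [K, Ne.symm hc]
  · simp

/-- `G` contains no 4-cycle. -/
def FourCycleFree (G : SimpleGraph V) : Prop :=
  ∀ a b c d, G.Adj a b → G.Adj b c → G.Adj c d → G.Adj d a → a ≠ c → b ≠ d → False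

omit [Fintype V] [DecidableEq V] in
lemma hashimoto_eq_one {G : SimpleGraph V} {e f : OrientedEdge G}
    (h : e.1.2 = f.1.1) (h' : e.1.1 ≠ f.1.2) : hashimotoMatrix G e f = 1 :=
  if_pos ⟨h, h'⟩

omit [Fintype V] [DecidableEq V] in
lemma of_hashimoto_ne_zero {G : SimpleGraph V} {e f : OrientedEdge G}
    (h : hashimotoMatrix G e f ≠ 0) : e.1.2 = f.1.1 ∧ e.1.1 ≠ f.1.2 := by
  by_contra hn
  exact h (if_neg hn)

/-- `tr T⁴` counts closed non-backtracking walks of length 4, which run around 4-cycles. -/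
lemma trace_hashimoto_four (G : SimpleGraph V) :
    (hashimotoMatrix G ^ 4).trace = 0 ↔ FourCycleFree G := by
  have h1 : (hashimotoMatrix G ^ 4).trace = ∑ e : OrientedEdge G, ∑ f : OrientedEdge G,
      (∑ g : OrientedEdge G, hashimotoMatrix G e g * hashimotoMatrix G g f) *
      (∑ g : OrientedEdge G, hashimotoMatrix G f g * hashimotoMatrix G g e) := by
    rw [show 4 = 2 + 2 from rfl, pow_add, pow_two]
    simp only [Matrix.trace, Matrix.diag, Matrix.mul_apply]
  have h0 : ∀ e f, 0 ≤ hashimotoMatrix G e f := fun e f => by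
    simp only [hashimotoMatrix, Matrix.of_apply]; split_ifs <;> norm_num
  have h2 : ∀ e f, 0 ≤ ∑ g, hashimotoMatrix G e g * hashimotoMatrix G g f := fun e f =>
    Finset.sum_nonneg fun g _ => mul_nonneg (h0 _ _) (h0 _ _)
  constructor
  · intro h a b c d hab hbc hcd hda hac hbd
    have edge : ∀ {u w}, G.Adj u w → ∃ e : OrientedEdge G, e.1 = (u, w) := fun h => ⟨⟨_, h⟩, rfl⟩
    obtain ⟨e, he⟩ := edge hab
    obtain ⟨f, hf⟩ := edge hbc
    obtain ⟨g, hg⟩ := edge hcd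
    obtain ⟨k, hk⟩ := edge hda
    have one : ∀ {e f g : OrientedEdge G} {a b c d : V}, e.1 = (a, b) → f.1 = (b, c) →
        g.1 = (c, d) → a ≠ c → b ≠ d →
        0 < ∑ f, hashimotoMatrix G e f * hashimotoMatrix G f g := by
      intro e f g a b c d he hf hg hac hbd
      refine Finset.sum_pos' (fun g _ => mul_nonneg (h0 _ _) (h0 _ _))
        ⟨f, Finset.mem_univ _, ?_⟩
      rw [hashimoto_eq_one (by rw [he, hf]) (by rw [he, hf]; exact hac),
        hashimoto_eq_one (by rw [hf, hg]) (by rw [hf, hg]; exact hbd)]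
      norm_num
    have hpos := mul_pos (one he hf hg hac hbd) (one hg hk he hac.symm hbd.symm)
    rw [h1] at h
    refine h.not_gt (Finset.sum_pos' (fun e _ => Finset.sum_nonneg fun f _ =>
      mul_nonneg (h2 _ _) (h2 _ _)) ⟨e, Finset.mem_univ _, ?_⟩)
    exact Finset.sum_pos' (fun f _ => mul_nonneg (h2 _ _) (h2 _ _)) ⟨g, Finset.mem_univ _, hpos⟩
  · intro h
    rw [h1]
    refine Finset.sum_eq_zero fun e _ => Finset.sum_eq_zero fun f _ => ?_
    rw [Finset.sum_mul_sum]
    refine Finset.sum_eq_zero fun g _ => Finset.sum_eq_zero fun k _ => ?_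
    by_contra hne
    rw [← ne_eq, mul_ne_zero_iff, mul_ne_zero_iff, mul_ne_zero_iff] at hne
    obtain ⟨⟨h3, h4⟩, h5, h6⟩ := hne
    have k3 := of_hashimoto_ne_zero h3
    have k4 := of_hashimoto_ne_zero h4
    have k5 := of_hashimoto_ne_zero h5
    have k6 := of_hashimoto_ne_zero h6
    obtain ⟨⟨a, b⟩, hab⟩ := e
    obtain ⟨⟨c, d⟩, hcd⟩ := f
    obtain ⟨⟨p, q⟩, hpq⟩ := g
    obtain ⟨⟨r, s⟩, hrs⟩ := k
    dsimp only at *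
    obtain ⟨rfl, k3⟩ := k3
    obtain ⟨rfl, k4⟩ := k4
    obtain ⟨rfl, k5⟩ := k5
    obtain ⟨rfl, k6⟩ := k6
    exact h _ _ _ _ hab hpq hcd hrs k3 k4

omit [DecidableEq V] in
lemma tri_eq_zero_iff (G : SimpleGraph V) :
    tri G = 0 ↔ ∀ a b c, G.Adj a b → G.Adj b c → G.Adj c a → False := by
  have h0 : ∀ a b c, 0 ≤ ind G a b * ind G b c * ind G c a := fun a b c =>
    mul_nonneg (mul_nonneg (ind_nonneg _ _ _) (ind_nonneg _ _ _)) (ind_nonneg _ _ _)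
  constructor
  · intro h a b c hab hbc hca
    unfold tri at h
    rw [Finset.sum_eq_zero_iff_of_nonneg (fun _ _ => Finset.sum_nonneg fun _ _ =>
      Finset.sum_nonneg fun _ _ => h0 _ _ _)] at h
    have h := h a (Finset.mem_univ _)
    rw [Finset.sum_eq_zero_iff_of_nonneg (fun _ _ =>
      Finset.sum_nonneg fun _ _ => h0 _ _ _)] at h
    have h := h b (Finset.mem_univ _)
    rw [Finset.sum_eq_zero_iff_of_nonneg (fun _ _ => h0 _ _ _)] at h
    have h := h c (Finset.mem_univ _)
    simp [ind, hab, hbc, hca] at h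
  · intro h
    refine Finset.sum_eq_zero fun a _ => Finset.sum_eq_zero fun b _ =>
      Finset.sum_eq_zero fun c _ => ?_
    have := h a b c
    by_cases h1 : G.Adj a b <;> by_cases h2 : G.Adj b c <;> by_cases h3 : G.Adj c a <;>
      simp_all [ind]

/-- Goodman's identity: every triple of vertices that is neither a triangle of `G` nor one of the
complement contains exactly two pairs (edge, non-edge) sharing a vertex. -/
lemma goodman (G : SimpleGraph V) :
    tri G + tri Gᶜ + 3 * ∑ b, (G.degree b : ℝ) * (Fintype.card V - 1 - G.degree b) =
      tri (⊤ : SimpleGraph V) := by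
  have hE : ∀ u w, ind (⊤ : SimpleGraph V) u w = ind G u w + ind Gᶜ u w := by
    intro u w
    by_cases h : u = w
    · subst h; simp [ind]
    · by_cases h' : G.Adj u w <;> simp [ind, h, h']
  have hz : ∀ u w, ind G u w * ind Gᶜ u w = 0 := by
    intro u w
    by_cases h' : G.Adj u w <;> simp [ind, h']
  have hd : ∀ b, (Fintype.card V - 1 - G.degree b : ℝ) = ∑ w, ind Gᶜ b w := by
    intro b
    rw [← degree_eq_sum_ind, SimpleGraph.degree_compl]
    have := G.degree_lt_card_verts b
    rw [Nat.cast_sub (by omega), Nat.cast_sub (by omega)]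
    simp
  -- a mixed pair at `b` has distinct endpoints, so the third pair is an edge of `⊤`
  have hmix : ∑ b, (G.degree b : ℝ) * (Fintype.card V - 1 - G.degree b) =
      ∑ a, ∑ b, ∑ c, ind G a b * ind Gᶜ b c * (ind G c a + ind Gᶜ c a) := by
    rw [Finset.sum_comm]
    refine Finset.sum_congr rfl fun b _ => ?_
    rw [hd, degree_eq_sum_ind, Finset.sum_mul_sum]
    refine Finset.sum_congr rfl fun a _ => Finset.sum_congr rfl fun c _ => ?_
    rw [← hE, ind_comm G b a]
    by_cases h : c = a
    · subst h
      have := hz c b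
      rw [ind_comm Gᶜ b c, this, zero_mul]
    · simp [ind, h]
  have rot : ∀ f : V → V → V → ℝ, ∑ a, ∑ b, ∑ c, f a b c = ∑ a, ∑ b, ∑ c, f b c a := by
    intro f
    conv_rhs => rw [Finset.sum_comm]
    exact Finset.sum_congr rfl fun a _ => Finset.sum_comm
  rw [hmix]
  set f : V → V → V → ℝ := fun a b c => ind G a b * ind Gᶜ b c * (ind G c a + ind Gᶜ c a) with hf
  have h3 : 3 * ∑ a, ∑ b, ∑ c, f a b c = ∑ a, ∑ b, ∑ c, (f a b c + f b c a + f c a b) := by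
    simp only [Finset.sum_add_distrib]
    have e1 := rot f
    have e2 := rot (fun a b c => f b c a)
    linarith
  rw [h3]
  unfold tri
  simp only [← Finset.sum_add_distrib, hE, hf]
  refine Finset.sum_congr rfl fun a _ => Finset.sum_congr rfl fun b _ =>
    Finset.sum_congr rfl fun c _ => ?_
  ring

lemma sum_degree_sq_eq_of_phiT_eq {G H : SimpleGraph V} (h : phiT H = phiT G)
    (hc : phiT Hᶜ = phiT Gᶜ) :
    ∑ v, (H.degree v : ℝ) ^ 2 = ∑ v, (G.degree v : ℝ) ^ 2 := by
  have ht : ∀ {K L : SimpleGraph V}, phiT K = phiT L → tri K = tri L := fun {K L} e => by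
    rw [← trace_hashimoto_cube, ← trace_hashimoto_cube, trace_pow_eq_of_charpoly_eq _ _ e]
  have key : ∀ K : SimpleGraph V, ∑ b, (K.degree b : ℝ) * (Fintype.card V - 1 - K.degree b) =
      (Fintype.card V - 1) * ∑ b, (K.degree b : ℝ) - ∑ b, (K.degree b : ℝ) ^ 2 := fun K => by
    rw [Finset.mul_sum, ← Finset.sum_sub_distrib]
    exact Finset.sum_congr rfl fun b _ => by ring
  have e1 := goodman G
  have e2 := goodman H
  rw [key, ht h, ht hc, sum_degree_eq_of_phiT_eq h] at e2
  rw [key] at e1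
  linarith

end

/-! ### Stars and spiders -/

/-- Every edge of `F` contains `c`: up to isolated vertices, `F` is a star with centre `c`. -/
def StarAt {V : Type*} (F : SimpleGraph V) (c : V) : Prop :=
  ∀ u w, F.Adj u w → u = c ∨ w = c

/-- `F` is the spanning tree in which the centre `c` is adjacent to all vertices but `x`, and
the remaining vertex `x` hangs from the neighbour `b` of `c`. -/
structure SpiderAt {V : Type*} (F : SimpleGraph V) (c x b : V) : Prop where
  xc : x ≠ c
  bc : b ≠ c
  bx : b ≠ x
  adj_iff : ∀ u w, F.Adj u w ↔ (u = c ∧ w ≠ c ∧ w ≠ x) ∨ (w = c ∧ u ≠ c ∧ u ≠ x) ∨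
    (u = x ∧ w = b) ∨ (u = b ∧ w = x)

section
variable {V : Type*}

/-- The graph `F` with all edges at `c` removed, described by its adjacency relation. -/
def IsDeletion (F F₀ : SimpleGraph V) (c : V) : Prop :=
  ∀ u w, F₀.Adj u w ↔ F.Adj u w ∧ u ≠ c ∧ w ≠ c

lemma exists_isDeletion (F : SimpleGraph V) (c : V) : ∃ F₀, IsDeletion F F₀ c :=
  ⟨F.deleteIncidenceSet c, fun _ _ => SimpleGraph.deleteIncidenceSet_adj⟩

variable [Fintype V] [DecidableEq V]

omit [DecidableEq V] in
lemma sum_degree_real (F : SimpleGraph V) :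
    ∑ v, (F.degree v : ℝ) = 2 * (F.edgeFinset.card : ℝ) := by
  exact_mod_cast F.sum_degrees_eq_twice_card_edges

lemma degree_add_degree_le (F : SimpleGraph V) {u w : V} (h : F.Adj u w) :
    F.degree u + F.degree w ≤ F.edgeFinset.card + 1 := by
  rw [← F.card_incidenceFinset_eq_degree u, ← F.card_incidenceFinset_eq_degree w,
    ← Finset.card_union_add_card_inter]
  refine Nat.add_le_add (Finset.card_le_card (Finset.union_subset
    (F.incidenceFinset_subset u) (F.incidenceFinset_subset w))) ?_
  refine (Finset.card_le_card (t := {s(u, w)}) fun e he => ?_).trans_eq (Finset.card_singleton _)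
  rw [Finset.mem_inter, SimpleGraph.mem_incidenceFinset, SimpleGraph.mem_incidenceFinset] at he
  have : e ∈ F.incidenceSet u ∩ F.incidenceSet w := he
  rw [F.incidenceSet_inter_incidenceSet_of_adj h] at this
  simpa using this

/-- The sum over all edges `vw` of `d(v) + d(w)` equals `∑ d²`, and `d(v) + d(w) ≤ m + 1`. -/
lemma sum_degree_sq_le (F : SimpleGraph V) :
    ∑ v, (F.degree v : ℝ) ^ 2 ≤ F.edgeFinset.card * (F.edgeFinset.card + 1) := by
  have e1 : ∑ v, (F.degree v : ℝ) ^ 2 = ∑ v, ∑ u, ind F v u * F.degree v :=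
    Finset.sum_congr rfl fun v _ => by rw [← Finset.sum_mul, ← degree_eq_sum_ind, pow_two]
  have e2 : ∑ v, (F.degree v : ℝ) ^ 2 = ∑ v, ∑ u, ind F v u * F.degree u := by
    rw [e1, Finset.sum_comm]
    exact Finset.sum_congr rfl fun v _ => Finset.sum_congr rfl fun u _ => by rw [ind_comm]
  have e3 : ∑ v, ∑ u, ind F v u * ((F.degree v : ℝ) + F.degree u) ≤
      ∑ v, ∑ u, ind F v u * (F.edgeFinset.card + 1) := by
    refine Finset.sum_le_sum fun v _ => Finset.sum_le_sum fun u _ => ?_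
    by_cases h : F.Adj v u
    · have := degree_add_degree_le F h
      simp only [ind, h, if_true, one_mul]
      exact_mod_cast this
    · simp [ind, h]
  simp only [mul_add, Finset.sum_add_distrib] at e3
  rw [← e1, ← e2] at e3
  have e4 : ∑ v, ∑ u, ind F v u = 2 * (F.edgeFinset.card : ℝ) := by
    rw [← sum_degree_real]
    exact Finset.sum_congr rfl fun v _ => (degree_eq_sum_ind F v).symm
  simp only [← Finset.sum_mul, e4] at e3
  linarith

omit [DecidableEq V] in
lemma sum_degree_sq_le_max (F : SimpleGraph V) {D : ℕ} (h : ∀ v, F.degree v ≤ D) :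
    ∑ v, (F.degree v : ℝ) ^ 2 ≤ 2 * D * F.edgeFinset.card := by
  have : ∑ v, (F.degree v : ℝ) ^ 2 ≤ ∑ v, (D : ℝ) * F.degree v :=
    Finset.sum_le_sum fun v _ => by
      have : (F.degree v : ℝ) ≤ D := by exact_mod_cast h v
      nlinarith [Nat.cast_nonneg (α := ℝ) (F.degree v)]
  rw [← Finset.mul_sum, sum_degree_real] at this
  linarith

variable {F F₀ : SimpleGraph V} {c : V}

omit [DecidableEq V] in
lemma IsDeletion.degree_self (h : IsDeletion F F₀ c) : F₀.degree c = 0 := by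
  rw [← F₀.card_neighborFinset_eq_degree, Finset.card_eq_zero, Finset.eq_empty_iff_forall_notMem]
  intro w hw
  rw [SimpleGraph.mem_neighborFinset, h] at hw
  exact hw.2.1 rfl

lemma IsDeletion.degree_eq (h : IsDeletion F F₀ c) (w : V) :
    (F.degree w : ℝ) = F₀.degree w + ind F w c + if w = c then (F.degree c : ℝ) else 0 := by
  by_cases hw : w = c
  · subst hw
    simp [h.degree_self, ind]
  · rw [degree_eq_sum_ind, degree_eq_sum_ind]
    have : ∑ u, ind F w u = ∑ u, (ind F₀ w u + if u = c then ind F w c else 0) := by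
      refine Finset.sum_congr rfl fun u _ => ?_
      by_cases hu : u = c
      · subst hu
        have : ¬ F₀.Adj w u := by rw [h]; tauto
        simp [ind, this]
      · simp [ind, h w u, hu, hw]
    rw [this, Finset.sum_add_distrib]
    simp [hw]

lemma IsDeletion.card_edges (h : IsDeletion F F₀ c) :
    F.edgeFinset.card = F.degree c + F₀.edgeFinset.card := by
  have e := sum_degree_real F
  have e0 := sum_degree_real F₀
  have : ∑ v, (F.degree v : ℝ) = ∑ v, (F₀.degree v : ℝ) + F.degree c + F.degree c := by
    rw [Finset.sum_congr rfl fun w _ => h.degree_eq w, Finset.sum_add_distrib,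
      Finset.sum_add_distrib]
    congr 1
    · congr 1
      rw [degree_eq_sum_ind]
      exact Finset.sum_congr rfl fun w _ => ind_comm F w c
    · simp
  have : (F.edgeFinset.card : ℝ) = F.degree c + F₀.edgeFinset.card := by linarith
  exact_mod_cast this

lemma IsDeletion.sum_sq (h : IsDeletion F F₀ c) :
    ∑ v, (F.degree v : ℝ) ^ 2 = (F.degree c : ℝ) ^ 2 + F.degree c +
      ∑ v, (F₀.degree v : ℝ) ^ 2 + 2 * ∑ v, ind F v c * F₀.degree v := by
  have hp : ∀ w, (F.degree w : ℝ) ^ 2 = (if w = c then (F.degree c : ℝ) ^ 2 else 0) +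
      ind F c w + (F₀.degree w : ℝ) ^ 2 + 2 * (ind F w c * F₀.degree w) := by
    intro w
    rw [h.degree_eq w, ind_comm F c w]
    by_cases hw : w = c
    · subst hw; simp [h.degree_self, ind]
    · have : ind F w c = 0 ∨ ind F w c = 1 := by
        unfold ind; split_ifs <;> simp
      rcases this with h | h
      · simp [hw, h]
      · simp [hw, h]; ring
  rw [Finset.sum_congr rfl fun w _ => hp w]
  simp only [Finset.sum_add_distrib, ← Finset.mul_sum, ← degree_eq_sum_ind]
  simp

/-- With `D = d(c)` and `r` the number of edges avoiding `c`, a triangle-free graph satisfies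
`∑ d² ≤ D² + D + r(r + 1) + 2r`. -/
lemma IsDeletion.sum_sq_le (h : IsDeletion F F₀ c)
    (ht : ∀ a b c, F.Adj a b → F.Adj b c → F.Adj c a → False) :
    ∑ v, (F.degree v : ℝ) ^ 2 ≤ (F.degree c : ℝ) ^ 2 + F.degree c +
      F₀.edgeFinset.card * (F₀.edgeFinset.card + 1) + 2 * F₀.edgeFinset.card := by
  have e1 := sum_degree_sq_le F₀
  -- an edge avoiding `c` has at most one end in the neighbourhood of `c`
  have e2 : ∑ v, ind F v c * F₀.degree v ≤ ∑ v, (1 - ind F v c) * F₀.degree v := by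
    have l : ∑ v, ind F v c * F₀.degree v = ∑ v, ∑ u, ind F v c * ind F₀ v u :=
      Finset.sum_congr rfl fun v _ => by rw [degree_eq_sum_ind, Finset.mul_sum]
    have r : ∑ v, (1 - ind F v c) * F₀.degree v = ∑ v, ∑ u, (1 - ind F u c) * ind F₀ v u := by
      rw [Finset.sum_comm]
      refine Finset.sum_congr rfl fun v _ => ?_
      rw [degree_eq_sum_ind, Finset.mul_sum]
      exact Finset.sum_congr rfl fun u _ => by rw [ind_comm F₀]
    rw [l, r]
    refine Finset.sum_le_sum fun v _ => Finset.sum_le_sum fun u _ => ?_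
    by_cases hvu : F₀.Adj v u
    · have hvu' := ((h v u).1 hvu).1
      by_cases h1 : F.Adj v c
      · by_cases h2 : F.Adj u c
        · exact (ht _ _ _ hvu' h2 h1.symm).elim
        · simp [ind, h1, h2]
      · by_cases h2 : F.Adj u c <;> simp [ind, h1, h2, hvu]
    · simp [ind, hvu]
  have e3 := sum_degree_real F₀
  simp only [sub_mul, one_mul, Finset.sum_sub_distrib, e3] at e2
  rw [h.sum_sq]
  linarith

lemma IsDeletion.starAt_iff (h : IsDeletion F F₀ c) :
    StarAt F c ↔ F₀.edgeFinset.card = 0 := by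
  rw [Finset.card_eq_zero, SimpleGraph.edgeFinset_eq_empty]
  constructor
  · intro hs
    ext u w
    rw [h]
    have := hs u w
    simp only [SimpleGraph.bot_adj, iff_false]
    tauto
  · rintro rfl u w huw
    have := h u w
    simp only [SimpleGraph.bot_adj, false_iff] at this
    tauto

lemma StarAt.card_edges (h : StarAt F c) : F.edgeFinset.card = F.degree c := by
  obtain ⟨F₀, h0⟩ := exists_isDeletion F c
  rw [h0.card_edges, h0.starAt_iff.1 h, add_zero]

omit [Fintype V] [DecidableEq V] in
lemma StarAt.triangleFree (h : StarAt F c) :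
    ∀ a b c, F.Adj a b → F.Adj b c → F.Adj c a → False := by
  intro a b d hab hbd hda
  have := h _ _ hab
  have := h _ _ hbd
  have := h _ _ hda
  have := hab.ne
  have := hbd.ne
  have := hda.ne
  grind

lemma StarAt.sum_sq (h : StarAt F c) :
    ∑ v, (F.degree v : ℝ) ^ 2 = F.edgeFinset.card ^ 2 + F.edgeFinset.card := by
  obtain ⟨F₀, h0⟩ := exists_isDeletion F c
  have h1 := h0.sum_sq
  have h2 := h0.starAt_iff.1 h
  rw [Finset.card_eq_zero, SimpleGraph.edgeFinset_eq_empty] at h2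
  subst h2
  rw [h1, h.card_edges]
  simp

/-- Among triangle-free graphs with `m` edges, stars are those with `∑ d² = m² + m`. -/
lemma exists_starAt [Nonempty V] (ht : ∀ a b c, F.Adj a b → F.Adj b c → F.Adj c a → False)
    (hs : ∑ v, (F.degree v : ℝ) ^ 2 = F.edgeFinset.card ^ 2 + F.edgeFinset.card) :
    ∃ c, StarAt F c := by
  obtain ⟨c, hc⟩ := Finite.exists_max (fun v => F.degree v)
  refine ⟨c, ?_⟩
  obtain ⟨F₀, h0⟩ := exists_isDeletion F c
  rw [h0.starAt_iff]
  have h1 := h0.sum_sq_le ht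
  have h2 := sum_degree_sq_le_max F hc
  rw [hs, h0.card_edges] at h1 h2
  generalize F.degree c = D at *
  generalize F₀.edgeFinset.card = r at *
  norm_cast at h1 h2
  have h3 : D * r ≤ r := by nlinarith
  rcases Nat.eq_zero_or_pos r with hr | hr
  · exact hr
  · have : D ≤ 1 := by
      by_contra hD
      nlinarith
    interval_cases D <;> nlinarith

omit [DecidableEq V] in
lemma SpiderAt.isDeletion_edges {x b : V} (h : SpiderAt F c x b) (h0 : IsDeletion F F₀ c) :
    F₀.edgeFinset = {s(x, b)} := by
  ext e
  induction e using Sym2.ind with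
  | _ u w =>
    have h1 := h.xc
    have h2 := h.bc
    rw [SimpleGraph.mem_edgeFinset, SimpleGraph.mem_edgeSet, h0, h.adj_iff,
      Finset.mem_singleton, Sym2.eq_iff]
    grind

lemma SpiderAt.degree_center {x b : V} (h : SpiderAt F c x b) :
    F.degree c + 2 = Fintype.card V := by
  have : F.neighborFinset c = Finset.univ \ {c, x} := by
    ext w
    have h1 := h.xc
    have h2 := h.bc
    rw [SimpleGraph.mem_neighborFinset, h.adj_iff]
    simp only [Finset.mem_sdiff, Finset.mem_univ, Finset.mem_insert, Finset.mem_singleton]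
    grind
  have h2 : ({c, x} : Finset V).card = 2 := Finset.card_pair h.xc.symm
  have h3 := Finset.card_le_univ ({c, x} : Finset V)
  rw [← F.card_neighborFinset_eq_degree, this, Finset.card_sdiff_of_subset (Finset.subset_univ _),
    Finset.card_univ, h2]
  omega

lemma SpiderAt.card_edges {x b : V} (h : SpiderAt F c x b) :
    F.edgeFinset.card = F.degree c + 1 := by
  obtain ⟨F₀, h0⟩ := exists_isDeletion F c
  rw [h0.card_edges, h.isDeletion_edges h0, Finset.card_singleton]

omit [Fintype V] [DecidableEq V] in
lemma SpiderAt.triangleFree {x b : V} (h : SpiderAt F c x b) :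
    ∀ a b c, F.Adj a b → F.Adj b c → F.Adj c a → False := by
  intro a b d hab hbd hda
  have := h.xc
  have := h.bc
  have := h.bx
  rw [h.adj_iff] at hab hbd hda
  grind

omit [Fintype V] [DecidableEq V] in
lemma SpiderAt.fourCycleFree {x b : V} (h : SpiderAt F c x b) : FourCycleFree F := by
  intro a b d e hab hbd hda hea hac hbd
  have := h.xc
  have := h.bc
  have := h.bx
  rw [h.adj_iff] at *
  grind

lemma SpiderAt.sum_sq {x b : V} (h : SpiderAt F c x b) :
    ∑ v, (F.degree v : ℝ) ^ 2 + F.edgeFinset.card = F.edgeFinset.card ^ 2 + 4 := by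
  obtain ⟨F₀, h0⟩ := exists_isDeletion F c
  have hr : F₀.edgeFinset.card = 1 := by rw [h.isDeletion_edges h0, Finset.card_singleton]
  have h1 := h0.sum_sq_le h.triangleFree
  have h2 := h0.sum_sq
  have h3 : ∑ v, (F₀.degree v : ℝ) ≤ ∑ v, (F₀.degree v : ℝ) ^ 2 :=
    Finset.sum_le_sum fun v _ => by exact_mod_cast Nat.le_self_pow two_ne_zero _
  rw [sum_degree_real, hr] at h3
  have hxb : F₀.Adj b x := by
    rw [h0, h.adj_iff]
    exact ⟨by tauto, h.bc, h.xc⟩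
  have hbc : F.Adj b c := by
    rw [h.adj_iff]
    exact Or.inr (Or.inl ⟨rfl, h.bc, h.bx⟩)
  have h4 : ind F b c * F₀.degree b ≤ ∑ v, ind F v c * F₀.degree v :=
    Finset.single_le_sum (f := fun v => ind F v c * (F₀.degree v : ℝ))
      (fun v _ => mul_nonneg (ind_nonneg _ _ _) (Nat.cast_nonneg _)) (Finset.mem_univ b)
  have h5 : (1 : ℝ) ≤ F₀.degree b := by
    exact_mod_cast (F₀.degree_pos_iff_exists_adj b).2 ⟨x, hxb⟩
  rw [ind, if_pos hbc] at h4
  rw [hr] at h1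
  rw [h.card_edges]
  push_cast at *
  nlinarith

/-- A triangle-free graph on `n` vertices with a vertex `c` of degree `n - 2` and exactly one edge
avoiding `c` is a spider. -/
lemma spiderAt_of_degree (ht : ∀ a b c, F.Adj a b → F.Adj b c → F.Adj c a → False)
    (h0 : IsDeletion F F₀ c) (hr : F₀.edgeFinset.card = 1)
    (hD : F.degree c + 2 = Fintype.card V) : ∃ x b, SpiderAt F c x b := by
  have hx : (Finset.univ \ (insert c (F.neighborFinset c))).card = 1 := by
    rw [Finset.card_sdiff_of_subset (Finset.subset_univ _), Finset.card_insert_of_notMem (by simp),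
      Finset.card_univ, F.card_neighborFinset_eq_degree]
    omega
  obtain ⟨x, hx⟩ := Finset.card_eq_one.1 hx
  have hx' : ∀ w, (w ≠ c ∧ ¬ F.Adj c w) ↔ w = x := by
    intro w
    have := Finset.ext_iff.1 hx w
    simpa using this
  obtain ⟨e, he⟩ := Finset.card_eq_one.1 hr
  have hxc := ((hx' x).2 rfl).1
  have hcx := ((hx' x).2 rfl).2
  have hedge : ∀ u w, (F.Adj u w ∧ u ≠ c ∧ w ≠ c) ↔ s(u, w) = e := by
    intro u w
    rw [← h0 u w, ← F₀.mem_edgeSet, ← SimpleGraph.mem_edgeFinset, he, Finset.mem_singleton]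
  -- the remaining edge cannot join two neighbours of `c`, so it contains `x`
  have hb : ∃ b, e = s(x, b) := by
    induction e using Sym2.ind with
    | _ p q =>
      obtain ⟨hpq, hp, hq⟩ := (hedge p q).2 rfl
      by_cases h1 : p = x
      · exact ⟨q, by rw [h1]⟩
      by_cases h2 : q = x
      · exact ⟨p, by rw [h2, Sym2.eq_swap]⟩
      have h3 : F.Adj c p := by
        by_contra h; exact h1 ((hx' p).1 ⟨hp, h⟩)
      have h4 : F.Adj c q := by
        by_contra h; exact h2 ((hx' q).1 ⟨hq, h⟩)
      exact (ht _ _ _ h3 hpq h4.symm).elim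
  obtain ⟨b, rfl⟩ := hb
  obtain ⟨hxb, -, hbc⟩ := (hedge x b).2 rfl
  refine ⟨x, b, hxc, hbc, hxb.ne', fun u w => ?_⟩
  have h1 := hx' w
  have h2 := hx' u
  have h3 := hedge u w
  have h4 : ¬ F.Adj c c := F.loopless.irrefl c
  have h5 := F.adj_comm u w
  rw [Sym2.eq_iff] at h3
  by_cases hu : u = c
  · subst hu
    grind
  · by_cases hw : w = c
    · subst hw; grind
    · grind

/-- Among graphs with `m ≥ 3` edges on `m + 1` vertices containing neither a triangle nor a
4-cycle, spiders are those with `∑ d² = m² - m + 4`. -/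
lemma exists_spiderAt [Nonempty V] (ht : ∀ a b c, F.Adj a b → F.Adj b c → F.Adj c a → False)
    (hf : FourCycleFree F) (hm : 3 ≤ F.edgeFinset.card)
    (hn : F.edgeFinset.card + 1 = Fintype.card V)
    (hs : ∑ v, (F.degree v : ℝ) ^ 2 + F.edgeFinset.card = F.edgeFinset.card ^ 2 + 4) :
    ∃ c x b, SpiderAt F c x b := by
  obtain ⟨c, hc⟩ := Finite.exists_max (fun v => F.degree v)
  refine ⟨c, ?_⟩
  obtain ⟨F₀, h0⟩ := exists_isDeletion F c
  have h1 := h0.sum_sq_le ht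
  have h2 := sum_degree_sq_le_max F hc
  have h3 := h0.sum_sq
  have h4 : 0 ≤ ∑ v, (F₀.degree v : ℝ) ^ 2 := Finset.sum_nonneg fun v _ => sq_nonneg _
  have h5 : 0 ≤ ∑ v, ind F v c * F₀.degree v :=
    Finset.sum_nonneg fun v _ => mul_nonneg (ind_nonneg _ _ _) (Nat.cast_nonneg _)
  have hmc := h0.card_edges
  have h6 : (F.degree c : ℝ) ^ 2 + F.degree c + F.edgeFinset.card ≤ F.edgeFinset.card ^ 2 + 4 := by
    linarith
  have h7 : (F.edgeFinset.card : ℝ) ^ 2 + 4 ≤ F.degree c ^ 2 + F.degree c +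
      F₀.edgeFinset.card * (F₀.edgeFinset.card + 1) + 2 * F₀.edgeFinset.card +
      F.edgeFinset.card := by linarith
  have h8 : (F.edgeFinset.card : ℝ) ^ 2 + 4 ≤ 2 * F.degree c * F.edgeFinset.card +
      F.edgeFinset.card := by linarith
  norm_cast at h6 h7 h8
  have key : F₀.edgeFinset.card = 1 ∨ (F.edgeFinset.card = 4 ∧ F.degree c = 2) := by
    clear h1 h2 h3 h4 h5 hs hc
    rw [hmc] at h6 h7 h8 hm ⊢
    generalize F.degree c = D at *
    generalize F₀.edgeFinset.card = r at *
    rcases Nat.lt_or_ge r 2 with hr | hr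
    · interval_cases r
      · exfalso; nlinarith
      · exact Or.inl rfl
    · right
      have hD : D ≤ 2 := by
        by_contra hD
        push Not at hD
        obtain ⟨s, rfl⟩ := Nat.exists_eq_add_of_le hr
        obtain ⟨E, rfl⟩ := Nat.exists_eq_add_of_le hD
        nlinarith
      have hr' : r ≤ 4 := by
        interval_cases D <;> nlinarith
      interval_cases D <;> interval_cases r <;> omega
  rcases key with hr | ⟨hm4, hD⟩
  · exact spiderAt_of_degree ht h0 hr (by omega)
  · -- all degrees are `0` or `2`, and the component of `c` has at least five vertices
    exfalso
    rw [hm4] at hs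
    have hsum := sum_degree_real F
    rw [hm4] at hsum
    have hz : ∑ v, (F.degree v : ℝ) * (2 - F.degree v) = 0 := by
      have : ∀ v, (F.degree v : ℝ) * (2 - F.degree v) =
        2 * F.degree v - (F.degree v : ℝ) ^ 2 := fun v => by ring
      simp only [this, Finset.sum_sub_distrib, ← Finset.mul_sum, hsum]
      push_cast at hs ⊢
      linarith
    rw [hD] at hc
    rw [Finset.sum_eq_zero_iff_of_nonneg (fun v _ => by
      have : (F.degree v : ℝ) ≤ 2 := by exact_mod_cast hc v
      exact mul_nonneg (Nat.cast_nonneg _) (by linarith))] at hz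
    have h2 : ∀ v w, F.Adj v w → F.degree v = 2 := by
      intro v w hvw
      have := (F.degree_pos_iff_exists_adj v).2 ⟨w, hvw⟩
      have hz := hz v (Finset.mem_univ _)
      rcases mul_eq_zero.1 hz with h | h
      · have : F.degree v = 0 := by exact_mod_cast h
        omega
      · have : (F.degree v : ℝ) = 2 := by linarith
        exact_mod_cast this
    have other : ∀ v w, F.Adj v w → ∃ x, x ≠ w ∧ F.Adj v x := by
      intro v w hvw
      have h := h2 v w hvw
      rw [← F.card_neighborFinset_eq_degree] at h
      obtain ⟨x, hx, hxw⟩ := Finset.exists_mem_ne (s := F.neighborFinset v) (by omega) w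
      exact ⟨x, hxw, by simpa using hx⟩
    obtain ⟨a, hca⟩ := (F.degree_pos_iff_exists_adj c).1 (by omega)
    obtain ⟨b, hba, hcb⟩ := other c a hca
    obtain ⟨x, hxc, hax⟩ := other a c hca.symm
    obtain ⟨y, hyc, hby⟩ := other b c hcb.symm
    have hxy : x ≠ y := by
      rintro rfl
      exact hf c a x b hca hax hby.symm hcb.symm hxc.symm hba.symm
    have hxb : x ≠ b := by
      rintro rfl
      exact ht _ _ _ hca hax hcb.symm
    have hya : y ≠ a := by
      rintro rfl
      exact ht _ _ _ hcb hby hca.symm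
    have hle : ∑ v ∈ ({c, a, b, x, y} : Finset V), F.degree v ≤ ∑ v, F.degree v :=
      Finset.sum_le_sum_of_subset (Finset.subset_univ _)
    have hsum' : ∑ v, F.degree v = 8 := by
      rw [F.sum_degrees_eq_twice_card_edges, hm4]
    rw [hsum', Finset.sum_insert, Finset.sum_insert, Finset.sum_insert, Finset.sum_insert,
      Finset.sum_singleton, h2 c a hca, h2 a c hca.symm, h2 b c hcb.symm, h2 x a hax.symm,
      h2 y b hby.symm] at hle
    · omega
    · simpa using hxy
    · simpa using ⟨hxb.symm, hby.ne⟩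
    · simpa using ⟨hba.symm, hax.ne, hya.symm⟩
    · simpa using ⟨hca.ne, hcb.ne, hxc.symm, hyc.symm⟩

end

/-! ### Recognising stars and spiders up to isomorphism -/

section
variable {V : Type*} [Fintype V] [DecidableEq V]

omit [DecidableEq V] in
/-- Two graphs whose adjacency is given by the same rule in terms of vertex colourings with colour
classes of equal sizes are isomorphic. The sizes need only be compared for all colours but one. -/
lemma iso_of_colouring {F F' : SimpleGraph V} (R : Fin 4 → Fin 4 → Prop) (col col' : V → Fin 4)
    (hF : ∀ u w, F.Adj u w ↔ R (col u) (col w)) (hF' : ∀ u w, F'.Adj u w ↔ R (col' u) (col' w))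
    (h : ∀ i, i ≠ 2 → (Finset.univ.filter fun v => col' v = i).card =
      (Finset.univ.filter fun v => col v = i).card) : Nonempty (F' ≃g F) := by
  have e1 := Finset.card_eq_sum_card_fiberwise (s := (Finset.univ : Finset V)) (t := Finset.univ)
    (f := col) (fun _ _ => Finset.mem_coe.2 (Finset.mem_univ _))
  have e2 := Finset.card_eq_sum_card_fiberwise (s := (Finset.univ : Finset V)) (t := Finset.univ)
    (f := col') (fun _ _ => Finset.mem_coe.2 (Finset.mem_univ _))
  rw [Fin.sum_univ_four] at e1 e2
  have h' : ∀ i, Fintype.card {v // col' v = i} = Fintype.card {v // col v = i} := by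
    intro i
    rw [Fintype.card_subtype, Fintype.card_subtype]
    by_cases hi : i = 2
    · subst hi
      have := h 0 (by decide)
      have := h 1 (by decide)
      have := h 3 (by decide)
      omega
    · exact h i hi
  let σ : V ≃ V := (Equiv.sigmaFiberEquiv col').symm.trans
    ((Equiv.sigmaCongrRight fun i => Fintype.equivOfCardEq (h' i)).trans
      (Equiv.sigmaFiberEquiv col))
  have hσ : ∀ v, col (σ v) = col' v := fun v =>
    (Fintype.equivOfCardEq (h' (col' v)) ⟨v, rfl⟩).2
  exact ⟨⟨σ, fun {u w} => by rw [hF, hF', hσ, hσ]⟩⟩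

lemma StarAt.iso {F F' : SimpleGraph V} {c c' : V} (h : StarAt F c) (h' : StarAt F' c')
    (hd : F'.degree c' = F.degree c) : Nonempty (F' ≃g F) := by
  let col : SimpleGraph V → V → V → Fin 4 := fun K k w =>
    if w = k then 0 else if K.Adj k w then 1 else 2
  have hcol : ∀ (K : SimpleGraph V) k, StarAt K k → ∀ u w, K.Adj u w ↔
      (col K k u = 0 ∧ col K k w = 1) ∨ (col K k u = 1 ∧ col K k w = 0) := by
    intro K k hK u w
    have h1 := hK u w
    have h2 : ¬ K.Adj k k := K.loopless.irrefl k
    have h3 := K.adj_comm u w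
    by_cases hu : u = k
    · subst hu
      by_cases hw : w = u
      · subst hw; simp [col]
      · by_cases ha : K.Adj u w <;> simp [col, hw, ha]
    · by_cases hw : w = k
      · subst hw
        by_cases ha : K.Adj w u <;> simp [col, hu, ha, h3]
      · by_cases ha : K.Adj k w <;> by_cases hb : K.Adj k u <;> simp [col, hu, hw, ha, hb] <;> tauto
  have card0 : ∀ (K : SimpleGraph V) k,
      (Finset.univ.filter fun v => col K k v = 0).card = 1 := by
    intro K k
    rw [Finset.card_eq_one]
    refine ⟨k, ?_⟩
    ext v
    simp only [col, Finset.mem_filter, Finset.mem_univ, true_and, Finset.mem_singleton]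
    split_ifs <;> simp_all
  have card1 : ∀ (K : SimpleGraph V) k,
      (Finset.univ.filter fun v => col K k v = 1).card = K.degree k := by
    intro K k
    rw [← K.card_neighborFinset_eq_degree]
    congr 1
    ext v
    have h2 : ¬ K.Adj k k := K.loopless.irrefl k
    simp only [col, Finset.mem_filter, Finset.mem_univ, true_and, SimpleGraph.mem_neighborFinset]
    split_ifs <;> simp_all
  have card3 : ∀ (K : SimpleGraph V) k,
      (Finset.univ.filter fun v => col K k v = 3).card = 0 := by
    intro K k
    rw [Finset.card_eq_zero, Finset.filter_eq_empty_iff]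
    intro v _
    simp only [col]
    split_ifs <;> simp
  refine iso_of_colouring (fun i j => (i = 0 ∧ j = 1) ∨ (i = 1 ∧ j = 0)) (col F c) (col F' c')
    (hcol F c h) (hcol F' c' h') fun i hi => ?_
  fin_cases i
  · exact (card0 _ _).trans (card0 _ _).symm
  · exact (card1 _ _).trans (hd.trans (card1 _ _).symm)
  · exact absurd rfl hi
  · exact (card3 _ _).trans (card3 _ _).symm

lemma SpiderAt.iso {F F' : SimpleGraph V} {c c' x x' b b' : V} (h : SpiderAt F c x b)
    (h' : SpiderAt F' c' x' b') : Nonempty (F' ≃g F) := by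
  let col : V → V → V → V → Fin 4 := fun k y d w =>
    if w = k then 0 else if w = d then 1 else if w = y then 3 else 2
  have hcol : ∀ (K : SimpleGraph V) k y d, SpiderAt K k y d → ∀ u w, K.Adj u w ↔
      ((col k y d u = 0 ∧ (col k y d w = 1 ∨ col k y d w = 2)) ∨
       (col k y d w = 0 ∧ (col k y d u = 1 ∨ col k y d u = 2)) ∨
       (col k y d u = 3 ∧ col k y d w = 1) ∨ (col k y d u = 1 ∧ col k y d w = 3)) := by
    intro K k y d hK u w
    have h1 := hK.xc
    have h2 := hK.bc
    have h3 := hK.bx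
    have h4 := h1.symm
    have h5 := h2.symm
    have h6 := h3.symm
    rw [hK.adj_iff]
    simp only [col]
    split_ifs <;> simp_all
  have card : ∀ (K : SimpleGraph V) k y d, SpiderAt K k y d → ∀ i : Fin 4, i ≠ 2 →
      (Finset.univ.filter fun v => col k y d v = i).card = 1 := by
    intro K k y d hK i hi
    have h1 := hK.xc
    have h2 := hK.bc
    have h3 := hK.bx
    have h4 := h1.symm
    have h5 := h2.symm
    have h6 := h3.symm
    rw [Finset.card_eq_one]
    fin_cases i
    · refine ⟨k, ?_⟩
      ext v
      simp only [col, Finset.mem_filter, Finset.mem_univ, true_and, Finset.mem_singleton]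
      split_ifs <;> simp_all
    · refine ⟨d, ?_⟩
      ext v
      simp only [col, Finset.mem_filter, Finset.mem_univ, true_and, Finset.mem_singleton]
      split_ifs <;> simp_all
    · exact absurd rfl hi
    · refine ⟨y, ?_⟩
      ext v
      simp only [col, Finset.mem_filter, Finset.mem_univ, true_and, Finset.mem_singleton]
      split_ifs <;> simp_all
  exact iso_of_colouring (fun i j => (i = 0 ∧ (j = 1 ∨ j = 2)) ∨ (j = 0 ∧ (i = 1 ∨ i = 2)) ∨
    (i = 3 ∧ j = 1) ∨ (i = 1 ∧ j = 3)) (col c x b) (col c' x' b')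
    (hcol F c x b h) (hcol F' c' x' b' h') fun i hi =>
      (card F' c' x' b' h' i hi).trans (card F c x b h i hi).symm

/-- Stars with isolated vertices, and spiders, are determined by the Hashimoto spectra of the graph
and of its complement. -/
lemma iso_of_phiT_eq {F H : SimpleGraph V}
    (hF : (∃ c, StarAt F c) ∨ ∃ c x b, SpiderAt F c x b)
    (h : phiT H = phiT F) (hc : phiT Hᶜ = phiT Fᶜ) : Nonempty (H ≃g F) := by
  have hm : H.edgeFinset.card = F.edgeFinset.card := by
    have := sum_degree_eq_of_phiT_eq h
    rw [sum_degree_real, sum_degree_real] at this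
    have : (H.edgeFinset.card : ℝ) = F.edgeFinset.card := by linarith
    exact_mod_cast this
  have hs := sum_degree_sq_eq_of_phiT_eq h hc
  have ht : (∀ a b c, F.Adj a b → F.Adj b c → F.Adj c a → False) →
      ∀ a b c, H.Adj a b → H.Adj b c → H.Adj c a → False := fun hF => by
    rw [← tri_eq_zero_iff] at hF ⊢
    rwa [← trace_hashimoto_cube, trace_pow_eq_of_charpoly_eq _ _ h, trace_hashimoto_cube]
  have hstar : ∀ c, StarAt F c → Nonempty (H ≃g F) := by
    intro c hc
    have : Nonempty V := ⟨c⟩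
    rw [hc.sum_sq, ← hm] at hs
    obtain ⟨d, hd⟩ := exists_starAt (ht hc.triangleFree) hs
    exact hc.iso hd (by rw [← hd.card_edges, hm, hc.card_edges])
  rcases hF with ⟨c, hc⟩ | ⟨c, x, b, hb⟩
  · exact hstar c hc
  · have : Nonempty V := ⟨c⟩
    have e1 := hb.card_edges
    have e2 := hb.degree_center
    by_cases h3 : 3 ≤ F.edgeFinset.card
    · have hq : FourCycleFree H := by
        rw [← trace_hashimoto_four, trace_pow_eq_of_charpoly_eq _ _ h, trace_hashimoto_four]
        exact hb.fourCycleFree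
      have hs' := hb.sum_sq
      rw [← hs, ← hm] at hs'
      obtain ⟨d, y, a, hd⟩ := exists_spiderAt (ht hb.triangleFree) hq (by omega) (by omega) hs'
      exact hb.iso hd
    · -- on three vertices the spider is a path, that is, a star centred at `b`
      refine hstar b fun u w huw => ?_
      have huniv : ({c, x, b} : Finset V) = Finset.univ := by
        apply Finset.eq_univ_of_card
        have hle := Finset.card_le_univ ({c, x, b} : Finset V)
        rw [Finset.card_eq_three.2 ⟨c, x, b, hb.xc.symm, hb.bc.symm, hb.bx.symm, rfl⟩] at hle ⊢
        omega
      have hu : u ∈ ({c, x, b} : Finset V) := huniv ▸ Finset.mem_univ u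
      have hw : w ∈ ({c, x, b} : Finset V) := huniv ▸ Finset.mem_univ w
      rw [hb.adj_iff] at huw
      simp only [Finset.mem_insert, Finset.mem_singleton] at hu hw
      have := hb.xc
      grind

/-! ### Vertices outside both 2-cores -/

omit [DecidableEq V] in
lemma inTwoCore_of_set (G : SimpleGraph V) (S : Set V) {v : V} (hv : v ∈ S)
    (h : ∀ u ∈ S, ∃ a ∈ S, ∃ b ∈ S, a ≠ b ∧ G.Adj u a ∧ G.Adj u b) : InTwoCore G v := by
  refine ⟨(⊤ : G.Subgraph).induce S, hv, fun u hu => ?_⟩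
  obtain ⟨a, ha, b, hb, hab, hua, hub⟩ := h u hu
  have key : ∀ _ : Fintype (((⊤ : G.Subgraph).induce S).neighborSet u),
      1 < Fintype.card (((⊤ : G.Subgraph).induce S).neighborSet u) := by
    intro _
    rw [Fintype.one_lt_card_iff]
    refine ⟨⟨a, ?_⟩, ⟨b, ?_⟩, fun h => hab (congrArg Subtype.val h)⟩
    · exact ⟨hu, ha, hua⟩
    · exact ⟨hu, hb, hub⟩
  exact key _

omit [DecidableEq V] in
lemma inTwoCore_of_triangle {G : SimpleGraph V} {v a b : V} (h1 : G.Adj v a) (h2 : G.Adj a b)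
    (h3 : G.Adj b v) : InTwoCore G v := by
  refine inTwoCore_of_set G {v, a, b} (by simp) fun u hu => ?_
  rcases hu with rfl | rfl | rfl
  · exact ⟨a, by simp, b, by simp, h2.ne, h1, h3.symm⟩
  · exact ⟨v, by simp, b, by simp, h3.ne', h1.symm, h2⟩
  · exact ⟨v, by simp, a, by simp, h1.ne, h3, h2.symm⟩

omit [DecidableEq V] in
lemma inTwoCore_of_four {G : SimpleGraph V} {v a b c : V} (h1 : G.Adj v a) (h2 : G.Adj a b)
    (h3 : G.Adj b c) (h4 : G.Adj c v) (hvb : v ≠ b) (hac : a ≠ c) : InTwoCore G v := by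
  refine inTwoCore_of_set G {v, a, b, c} (by simp) fun u hu => ?_
  rcases hu with rfl | rfl | rfl | rfl
  · exact ⟨a, by simp, c, by simp, hac, h1, h4.symm⟩
  · exact ⟨v, by simp, b, by simp, hvb, h1.symm, h2⟩
  · exact ⟨a, by simp, c, by simp, hac, h2.symm, h3⟩
  · exact ⟨v, by simp, b, by simp, hvb, h4, h3.symm⟩

omit [DecidableEq V] in
lemma inTwoCore_of_five {G : SimpleGraph V} {v a b c d : V} (h1 : G.Adj v a) (h2 : G.Adj a b)
    (h3 : G.Adj b c) (h4 : G.Adj c d) (h5 : G.Adj d v) (hvb : v ≠ b) (hvc : v ≠ c)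
    (hac : a ≠ c) (had : a ≠ d) (hbd : b ≠ d) : InTwoCore G v := by
  refine inTwoCore_of_set G {v, a, b, c, d} (by simp) fun u hu => ?_
  rcases hu with rfl | rfl | rfl | rfl | rfl
  · exact ⟨a, by simp, d, by simp, had, h1, h5.symm⟩
  · exact ⟨v, by simp, b, by simp, hvb, h1.symm, h2⟩
  · exact ⟨a, by simp, c, by simp, hac, h2.symm, h3⟩
  · exact ⟨b, by simp, d, by simp, hbd, h3.symm, h4⟩
  · exact ⟨v, by simp, c, by simp, hvc, h5, h4.symm⟩

omit [DecidableEq V] in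
/-- If `v` lies outside the 2-core of `F` and has at most one non-neighbour in `F` other than
itself, then `F` is a star or a spider. -/
lemma shape_of_subsingleton {F : SimpleGraph V} {v : V} (h : ¬ InTwoCore F v)
    (hA : ∀ a a', Fᶜ.Adj v a → Fᶜ.Adj v a' → a = a') :
    (∃ c, StarAt F c) ∨ ∃ c x b, SpiderAt F c x b := by
  have cases : ∀ w, w = v ∨ F.Adj v w ∨ Fᶜ.Adj v w := fun w => by
    by_cases hw : w = v
    · exact Or.inl hw
    · rw [SimpleGraph.compl_adj]; tauto
  have hB : ∀ u w, F.Adj v u → F.Adj v w → ¬ F.Adj u w := fun u w hu hw huw =>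
    h (inTwoCore_of_triangle hu huw hw.symm)
  by_cases hs : StarAt F v
  · exact Or.inl ⟨v, hs⟩
  · right
    unfold StarAt at hs
    push Not at hs
    have : ∃ x b, F.Adj x b ∧ Fᶜ.Adj v x ∧ b ≠ v := by
      obtain ⟨p, q, hpq, hp, hq⟩ := hs
      rcases cases p with h1 | h1 | h1
      · exact (hp h1).elim
      · rcases cases q with h2 | h2 | h2
        · exact (hq h2).elim
        · exact (hB p q h1 h2 hpq).elim
        · exact ⟨q, p, hpq.symm, h2, hp⟩
      · exact ⟨p, q, hpq, h1, hq⟩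
    obtain ⟨x, b, hxb, hvx, hbv⟩ := this
    have hvx' := (F.compl_adj v x).1 hvx
    have hnb : ∀ w, w ≠ v → w ≠ x → F.Adj v w := by
      intro w hwv hwx
      rcases cases w with h1 | h1 | h1
      · exact (hwv h1).elim
      · exact h1
      · exact (hwx (hA _ _ h1 hvx)).elim
    have hvb : F.Adj v b := hnb b hbv hxb.ne.symm
    -- a second neighbour of `x` would close a 4-cycle through `v`
    have hxu : ∀ w, F.Adj x w → w = b := by
      intro w hxw
      by_contra hwb
      have hwv : w ≠ v := fun e => hvx'.2 (e ▸ hxw.symm)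
      exact h (inTwoCore_of_four hvb hxb.symm hxw (hnb w hwv hxw.ne').symm hvx'.1
        (Ne.symm hwb))
    refine ⟨v, x, b, hvx'.1.symm, hbv, hxb.ne', fun u w => ⟨fun huw => ?_, ?_⟩⟩
    · have h1 := hxu u
      have h2 := hxu w
      have h3 := hnb u
      have h4 := hnb w
      have h5 := hB u w
      have h6 := huw.ne
      have h7 := huw.symm
      have h8 := hvx'.2
      grind
    · rintro (⟨rfl, h1, h2⟩ | ⟨rfl, h1, h2⟩ | ⟨rfl, rfl⟩ | ⟨rfl, rfl⟩)
      · exact hnb _ h1 h2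
      · exact (hnb _ h1 h2).symm
      · exact hxb
      · exact hxb.symm

omit [DecidableEq V] in
/-- A vertex outside both 2-cores has degree at most one in `G` or in its complement. -/
lemma degree_small {G : SimpleGraph V} {v : V} (h : ¬ InTwoCore G v) (hc : ¬ InTwoCore Gᶜ v) :
    (∀ a a', G.Adj v a → G.Adj v a' → a = a') ∨ (∀ b b', Gᶜ.Adj v b → Gᶜ.Adj v b' → b = b') := by
  by_contra! hcon
  obtain ⟨⟨a, a', ha, ha', haa⟩, b, b', hb, hb', hbb⟩ := hcon
  have dis : ∀ {p q}, G.Adj v p → Gᶜ.Adj v q → p ≠ q := fun hp hq e =>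
    ((G.compl_adj _ _).1 hq).2 (e ▸ hp)
  have sw : ∀ {p q}, G.Adj v p → Gᶜ.Adj v q → ¬ G.Adj p q → Gᶜ.Adj q p := fun hp hq h =>
    (G.compl_adj _ _).2 ⟨(dis hp hq).symm, fun e => h e.symm⟩
  have hbadj : G.Adj b b' := by
    by_contra hn
    exact hc (inTwoCore_of_triangle hb ((G.compl_adj _ _).2 ⟨hbb, hn⟩) hb'.symm)
  -- `q` cannot be adjacent in `G` to two neighbours of `v`
  have four : ∀ {p p' q}, G.Adj v p → G.Adj v p' → p ≠ p' → Gᶜ.Adj v q →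
      G.Adj p q → ¬ G.Adj p' q := fun hp hp' hpp hq h1 h2 =>
    h (inTwoCore_of_four hp h1 h2.symm hp'.symm hq.ne hpp)
  -- nor `p` non-adjacent to two non-neighbours of `v`
  have four' : ∀ {p q q'}, G.Adj v p → Gᶜ.Adj v q → Gᶜ.Adj v q' → q ≠ q' →
      ¬ G.Adj p q → G.Adj p q' := fun {p q q'} hp hq hq' hqq h1 => by
    by_contra h2
    exact hc (inTwoCore_of_four hq (sw hp hq h1) (sw hp hq' h2).symm hq'.symm hp.ne hqq)
  have five : ∀ {p p' q q'}, G.Adj v p → G.Adj v p' → p ≠ p' → Gᶜ.Adj v q → Gᶜ.Adj v q' →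
      G.Adj q q' → G.Adj p q → ¬ G.Adj p' q' := fun hp hp' hpp hq hq' hqq h1 h2 =>
    h (inTwoCore_of_five hp h1 hqq h2.symm hp'.symm hq.ne hq'.ne (dis hp hq') hpp
      (dis hp' hq).symm)
  by_cases h1 : G.Adj a b
  · have h2 := four ha ha' haa hb h1
    exact five ha ha' haa hb hb' hbadj h1 (four' ha' hb hb' hbb h2)
  · have h2 := four' ha hb hb' hbb h1
    have h3 := four ha ha' haa hb' h2
    exact five ha ha' haa hb' hb hbadj.symm h2 (four' ha' hb' hb hbb.symm h3)

end

/-- For any graph `G` on `n` vertices, either (i) every graph `H` on `n`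
vertices with `φ_T(H) = φ_T(G)` and `φ_T(co H) = φ_T(co G)` is isomorphic to `G`, or
(ii) every vertex of `G` lies in the 2-core of `G` or of its complement. -/
theorem stmt_6 (n : ℕ) (G : SimpleGraph (Fin n)) :
    (∀ H : SimpleGraph (Fin n), phiT H = phiT G → phiT Hᶜ = phiT Gᶜ →
      Nonempty (H ≃g G)) ∨
    (∀ v : Fin n, InTwoCore G v ∨ InTwoCore Gᶜ v) := by
  rw [or_iff_not_imp_right]
  intro hv H h hc
  push Not at hv
  obtain ⟨v, h1, h2⟩ := hv
  rcases degree_small h1 h2 with hs | hs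
  · obtain ⟨e⟩ := iso_of_phiT_eq (F := Gᶜ) (H := Hᶜ)
      (shape_of_subsingleton h2 (by rwa [compl_compl])) hc (by rwa [compl_compl, compl_compl])
    refine ⟨⟨e.toEquiv, fun {u w} => ?_⟩⟩
    have h3 : Gᶜ.Adj (e.toEquiv u) (e.toEquiv w) ↔ Hᶜ.Adj u w := e.map_rel_iff
    by_cases huw : u = w
    · subst huw; simp
    · rw [SimpleGraph.compl_adj, SimpleGraph.compl_adj] at h3
      have h4 : e.toEquiv u ≠ e.toEquiv w := fun he => huw (e.toEquiv.injective he)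
      tauto
  · exact iso_of_phiT_eq (shape_of_subsingleton h1 hs) h hc
end
end

section
/- Let G be a forest (an acyclic finite simple graph) on n vertices. Then at least one of the following holds: (i) the complement co(G) is connected and has minimum degree at least 2; or (ii) every finite simple graph H on n vertices such that φ_T(H) = φ_T(G) and φ_T(co(H)) = φ_T(co(G)) is isomorphic to G. -/
/-!
The trace of `T(G) ^ k` counts closed non-backtracking walks, so `T(G)` is nilpotent exactly when
`G` is acyclic (`isAcyclic_of_isNilpotent`, `isNilpotent_of_isAcyclic`). Nilpotency is visible in the
characteristic polynomial, hence a graph `H` with `φ_T(H) = φ_T(G)` is again a forest, and comparing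
degrees it has as many edges as `G`, say `m`. The characteristic polynomial also determines
`tr T³` (`trace_pow_three_eq`), that is, six times the number of triangles. Applied to the
complements, and because forests have no triangles, inclusion–exclusion
(`trace_adjMatrix_compl_pow_three`) shows that `G` and `H` have the same sum of squared degrees.

Suppose (i) fails. If all degrees in the complement are at least `2`, a disconnected complement
would produce a `4`-cycle in `G` (`connected_compl_of_isAcyclic`); so some vertex has degree at most
`1` in the complement and at least `n - 2` in `G`. As `m ≤ n - 1` unless `m = 0`, the graph `G` is
either a star with isolated vertices, having a vertex of degree `m`, or `m = n - 1` and `G` is a star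
with one edge subdivided, having a vertex of degree `m - 1`. Bounding the sum of squared degrees
of a forest by its maximum degree (`sum_degree_sq_le`) shows that the sum of squared degrees
recognises both cases, so `H` has the same shape as `G`, and each shape is unique up to isomorphism
once `n` and `m` are given (`nonempty_iso_of_star`, `nonempty_iso_of_subdivided_star`).
-/

open Matrix

noncomputable section
open scoped Classical

/-! ### Non-backtracking walks and nilpotency of the Hashimoto matrix -/

/-- `OEStep e f` says that the oriented edge `f` may follow `e` in a non-backtracking walk. -/
def OEStep {V : Type*} {G : SimpleGraph V} (e f : OrientedEdge G) : Prop :=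
  e.1.2 = f.1.1 ∧ e.1.1 ≠ f.1.2

theorem hashimoto_apply {V : Type*} (G : SimpleGraph V) (e f : OrientedEdge G) :
    hashimotoMatrix G e f = if OEStep e f then 1 else 0 := by
  unfold hashimotoMatrix OEStep
  rw [Matrix.of_apply]
  congr

theorem hashimoto_pow_nonneg {V : Type*} [Fintype V] [DecidableEq V] (G : SimpleGraph V) (k : ℕ)
    (e f : OrientedEdge G) : 0 ≤ (hashimotoMatrix G ^ k) e f := by
  induction k generalizing f with
  | zero => rw [pow_zero, Matrix.one_apply]; split_ifs <;> simp
  | succ k ih =>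
    rw [pow_succ, Matrix.mul_apply]
    refine Finset.sum_nonneg fun g _ => mul_nonneg (ih g) ?_
    rw [hashimoto_apply]; split_ifs <;> simp

theorem exists_pow_pos_of_transGen {V : Type*} [Fintype V] [DecidableEq V] {G : SimpleGraph V}
    {e f : OrientedEdge G} (h : Relation.TransGen OEStep e f) :
    ∃ k, k ≠ 0 ∧ 0 < (hashimotoMatrix G ^ k) e f := by
  induction h with
  | single h => exact ⟨1, one_ne_zero, by rw [pow_one, hashimoto_apply, if_pos h]; norm_num⟩
  | @tail b c _ hbc ih =>
    obtain ⟨k, -, hk⟩ := ih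
    refine ⟨k + 1, by simp, ?_⟩
    rw [pow_succ, Matrix.mul_apply]
    refine lt_of_lt_of_le ?_ (Finset.single_le_sum (f := fun g =>
      (hashimotoMatrix G ^ k) e g * hashimotoMatrix G g c) (fun g _ => ?_) (Finset.mem_univ b))
    · simp only [hashimoto_apply, if_pos hbc, mul_one]; exact hk
    · refine mul_nonneg (hashimoto_pow_nonneg G k e g) ?_
      rw [hashimoto_apply]; split_ifs <;> simp

/-- A closed non-backtracking walk makes the trace of some power of `T(G)` positive, whereas powers of
a nilpotent matrix have trace zero. -/
theorem not_transGen_self_of_isNilpotent {V : Type*} [Fintype V] [DecidableEq V]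
    {G : SimpleGraph V} (hG : IsNilpotent (hashimotoMatrix G)) (e : OrientedEdge G) :
    ¬ Relation.TransGen OEStep e e := by
  intro h
  obtain ⟨k, hk0, hk⟩ := exists_pow_pos_of_transGen h
  have h1 : (hashimotoMatrix G ^ k).trace = 0 :=
    (Matrix.isNilpotent_trace_of_isNilpotent (hG.pow_of_pos hk0)).eq_zero
  have h2 : (hashimotoMatrix G ^ k) e e ≤ (hashimotoMatrix G ^ k).trace :=
    Finset.single_le_sum (f := fun g => (hashimotoMatrix G ^ k) g g)
      (fun g _ => hashimoto_pow_nonneg G k g g) (Finset.mem_univ e)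
  linarith

/-- Going once around a cycle is a closed non-backtracking walk. -/
theorem exists_transGen_self_of_not_isAcyclic {V : Type*} {G : SimpleGraph V}
    (hG : ¬ G.IsAcyclic) : ∃ e : OrientedEdge G, Relation.TransGen OEStep e e := by
  unfold SimpleGraph.IsAcyclic at hG
  push Not at hG
  obtain ⟨u, p, hp⟩ := hG
  have hlen := hp.three_le_length
  have hnd : (p.darts.map SimpleGraph.Dart.edge).Nodup := by
    rw [← SimpleGraph.Walk.edges_eq_map_darts]; exact hp.isCircuit.isTrail.edges_nodup
  let R : G.Dart → G.Dart → Prop := fun d d' => d.snd = d'.fst ∧ d.fst ≠ d'.snd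
  -- consecutive darts carry different edges, which is what rules out backtracking
  have key : ∀ d d' : G.Dart, d.edge ≠ d'.edge → d.snd = d'.fst → R d d' := by
    intro d d' h1 h2
    refine ⟨h2, fun h3 => h1 ?_⟩
    rw [SimpleGraph.Dart.edge, SimpleGraph.Dart.edge, Sym2.mk_eq_mk_iff]
    exact Or.inr (Prod.ext h3 h2)
  have hne : p.darts ≠ [] := by
    intro h; have := p.length_darts; rw [h] at this; simp at this; omega
  have hchain : List.IsChain R p.darts := by
    have h1 := p.isChain_dartAdj_darts
    rw [List.isChain_iff_getElem] at h1 ⊢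
    intro i hi
    refine key _ _ ?_ (h1 i hi)
    intro h
    have := (List.nodup_iff_injective_getElem.1 hnd) (a₁ := ⟨i, by simp at hi ⊢; omega⟩)
      (a₂ := ⟨i + 1, by simpa using hi⟩) (by simpa using h)
    simp at this
  have hRT := List.relationReflTransGen_of_exists_isChain _ hchain hne
  have hlast : R (p.darts.getLast hne) (p.darts.head hne) := by
    refine key _ _ ?_ ?_
    · intro h
      rw [List.getLast_eq_getElem, List.head_eq_getElem] at h
      have := (List.nodup_iff_injective_getElem.1 hnd)
        (a₁ := ⟨p.darts.length - 1, by simp; omega⟩)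
        (a₂ := ⟨0, by simp; omega⟩) (by simpa using h)
      simp at this; omega
    · have hnil : ¬ p.Nil := by
        intro h; have := SimpleGraph.Walk.length_eq_zero_iff.2 h; omega
      rw [p.getLast_darts_eq_lastDart hne, p.head_darts_eq_firstDart hne]
      rfl
  have hT : Relation.TransGen R (p.darts.head hne) (p.darts.head hne) :=
    Relation.TransGen.tail' hRT hlast
  have hlift : ∀ d d', Relation.TransGen R d d' → Relation.TransGen (OEStep (G := G))
      ⟨d.toProd, d.adj⟩ ⟨d'.toProd, d'.adj⟩ := by
    intro d d' h
    induction h with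
    | single h => exact .single h
    | tail _ h ih => exact ih.tail h
  exact ⟨_, hlift _ _ hT⟩

theorem isAcyclic_of_isNilpotent {V : Type*} [Fintype V] [DecidableEq V]
    {G : SimpleGraph V} (hG : IsNilpotent (hashimotoMatrix G)) : G.IsAcyclic := by
  by_contra h
  obtain ⟨e, he⟩ := exists_transGen_self_of_not_isAcyclic h
  exact not_transGen_self_of_isNilpotent hG e he

/-- In a forest the oriented edges carry a rank that strictly decreases along non-backtracking steps:
`r u v` is the number of vertices reachable from `v` once the edge `uv`, a bridge, is deleted.
Besides nilpotency of `T(G)`, this gives a quick way to rule out triangles and `4`-cycles. -/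
theorem exists_rank_of_isAcyclic {V : Type*} [Fintype V] {G : SimpleGraph V} (hG : G.IsAcyclic) :
    ∃ r : V → V → ℕ, ∀ u v w, G.Adj u v → G.Adj v w → u ≠ w → r v w < r u v := by
  rw [SimpleGraph.isAcyclic_iff_forall_adj_isBridge] at hG
  let D : V → V → SimpleGraph V := fun u v => G.deleteEdges {s(u, v)}
  refine ⟨fun u v => (Finset.univ.filter fun x => (D u v).Reachable v x).card, ?_⟩
  intro u v w huv hvw huw
  -- `v` itself is reachable from `v` but, `vw` being a bridge, not from `w`
  have hbr : ¬ (D v w).Reachable w v := by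
    have := hG hvw
    intro h
    rw [SimpleGraph.isBridge_iff] at this
    exact this h.symm
  have hadj : ∀ a b c d, (D a b).Adj c d ↔ G.Adj c d ∧ s(c, d) ≠ s(a, b) := by
    intro a b c d; simp [D, SimpleGraph.deleteEdges_adj]
  have hsub : ∀ x, (D v w).Reachable w x → (D u v).Reachable v x := by
    intro x hx
    rw [SimpleGraph.reachable_iff_reflTransGen] at hx
    induction hx with
    | refl =>
      refine SimpleGraph.Adj.reachable ((hadj _ _ _ _).2 ⟨hvw, ?_⟩)
      intro h; rw [Sym2.eq_iff] at h
      rcases h with ⟨h1, h2⟩ | ⟨h1, h2⟩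
      · exact huv.ne h1.symm
      · exact huw h2.symm
    | @tail y z hy hyz ih =>
      have hy' : y ≠ v := by
        rintro rfl; exact hbr ((SimpleGraph.reachable_iff_reflTransGen _ _).2 hy)
      have hz' : z ≠ v := by
        rintro rfl
        exact hbr ((SimpleGraph.reachable_iff_reflTransGen _ _).2 (hy.tail hyz))
      refine ih.trans (SimpleGraph.Adj.reachable ((hadj _ _ _ _).2
        ⟨((hadj _ _ _ _).1 hyz).1, ?_⟩))
      intro h; rw [Sym2.eq_iff] at h
      rcases h with ⟨h1, h2⟩ | ⟨h1, h2⟩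
      · exact hz' h2
      · exact hy' h1
  refine Finset.card_lt_card ((Finset.ssubset_iff_of_subset ?_).2 ⟨v, ?_, ?_⟩)
  · intro x hx
    simp only [Finset.mem_filter, Finset.mem_univ, true_and] at hx ⊢
    exact hsub x hx
  · simp
  · simpa using hbr

/-- A nonzero entry of `T(G) ^ k` comes from `k` successive steps, each lowering the rank, so `k` is at
most the largest rank. -/
theorem isNilpotent_of_isAcyclic {V : Type*} [Fintype V] [DecidableEq V]
    {G : SimpleGraph V} (hG : G.IsAcyclic) : IsNilpotent (hashimotoMatrix G) := by
  obtain ⟨r, hr⟩ := exists_rank_of_isAcyclic hG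
  have key : ∀ k (e f : OrientedEdge G), (hashimotoMatrix G ^ k) e f ≠ 0 →
      r f.1.1 f.1.2 + k ≤ r e.1.1 e.1.2 := by
    intro k
    induction k with
    | zero =>
      intro e f h
      rw [pow_zero, Matrix.one_apply] at h
      have : e = f := by by_contra h'; exact h (if_neg h')
      subst this; simp
    | succ k ih =>
      intro e f h
      rw [pow_succ, Matrix.mul_apply] at h
      obtain ⟨g, -, hg⟩ := Finset.exists_ne_zero_of_sum_ne_zero h
      have h1 := ih e g (left_ne_zero_of_mul hg)
      have h2 := right_ne_zero_of_mul hg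
      rw [hashimoto_apply] at h2
      have h3 : OEStep g f := by by_contra h'; exact h2 (if_neg h')
      obtain ⟨⟨a, b⟩, hab⟩ := g
      obtain ⟨⟨c, d⟩, hcd⟩ := f
      obtain ⟨h4, h5⟩ := h3
      simp only at h4 h5 hab hcd h1 ⊢
      subst h4
      have := hr a b d hab hcd h5
      omega
  refine ⟨(Finset.univ.sup fun e : OrientedEdge G => r e.1.1 e.1.2) + 1, ?_⟩
  ext e f
  by_contra h
  have h1 := key _ e f h
  have h2 := Finset.le_sup (f := fun e : OrientedEdge G => r e.1.1 e.1.2) (Finset.mem_univ e)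
  omega

theorem charpoly_eq_X_pow_of_isNilpotent {ι : Type*} [Fintype ι] [DecidableEq ι]
    {A : Matrix ι ι ℝ} (hA : IsNilpotent A) : A.charpoly = Polynomial.X ^ Fintype.card ι :=
  sub_eq_zero.1 (Matrix.isNilpotent_charpoly_sub_pow_of_isNilpotent hA).eq_zero

/-- The characteristic polynomial of a nilpotent matrix is a power of `X`, so Cayley–Hamilton makes
every matrix with the same characteristic polynomial nilpotent. -/
theorem isNilpotent_of_charpoly_eq {ι κ : Type*} [Fintype ι] [DecidableEq ι] [Fintype κ]
    [DecidableEq κ] {A : Matrix ι ι ℝ} {B : Matrix κ κ ℝ} (h : B.charpoly = A.charpoly)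
    (hA : IsNilpotent A) : IsNilpotent B := by
  refine ⟨Fintype.card ι, ?_⟩
  have := Matrix.aeval_self_charpoly B
  rw [h, charpoly_eq_X_pow_of_isNilpotent hA] at this
  simpa using this

theorem card_orientedEdge {V : Type*} [Fintype V] [DecidableEq V] (G : SimpleGraph V) :
    Fintype.card (OrientedEdge G) = 2 * G.edgeFinset.card := by
  rw [← SimpleGraph.sum_degrees_eq_twice_card_edges, ← SimpleGraph.dart_card_eq_sum_degrees]
  exact Fintype.card_congr ⟨fun e => ⟨e.1, e.2⟩, fun d => ⟨d.toProd, d.adj⟩,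
    fun _ => rfl, fun _ => rfl⟩

/-- `φ_T` has degree twice the number of edges. -/
theorem card_edges_eq {V : Type*} [Fintype V] [DecidableEq V] {G H : SimpleGraph V}
    (h : phiT H = phiT G) : H.edgeFinset.card = G.edgeFinset.card := by
  have := congrArg Polynomial.natDegree h
  unfold phiT at this
  rw [Matrix.charpoly_natDegree_eq_dim, Matrix.charpoly_natDegree_eq_dim, card_orientedEdge,
    card_orientedEdge] at this
  omega

/-! ### The trace of the cube from the characteristic polynomial -/

open Polynomial in
theorem det_one_sub_X_pow_three {ι : Type*} [Fintype ι] [DecidableEq ι] (A : Matrix ι ι ℂ) :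
    (1 - (X ^ 3 : ℂ[X]) • (A ^ 3).map C).det = expand ℂ 3 (A ^ 3).charpolyRev := by
  rw [Matrix.charpolyRev, ← AlgHom.coe_toRingHom, RingHom.map_det]
  congr 1
  ext1 i j
  by_cases hij : i = j <;> simp [hij]

open Polynomial in
/-- The factorisation `1 - X³A³ = (1 - XA)(1 - ωXA)(1 - ω²XA)`, with `ω` a primitive cube root
of unity, expresses `det (1 - X³A³)`, whose `X³` coefficient is `-tr A³`, through
`det (1 - XA)`. -/
theorem expand_charpolyRev_pow_three {ι : Type*} [Fintype ι] [DecidableEq ι] (A : Matrix ι ι ℂ)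
    {ω : ℂ} (hω : 1 + ω + ω ^ 2 = 0) :
    expand ℂ 3 (A ^ 3).charpolyRev =
      A.charpolyRev * A.charpolyRev.comp (C ω * X) * A.charpolyRev.comp (C (ω ^ 2) * X) := by
  have hcomp : ∀ z : ℂ, A.charpolyRev.comp (C z * X) = (1 - (C z * X : ℂ[X]) • A.map C).det := by
    intro z
    rw [Matrix.charpolyRev, ← Polynomial.coe_compRingHom_apply, RingHom.map_det]
    congr 1
    ext1 i j
    by_cases hij : i = j <;> simp [hij] <;> ring
  rw [hcomp, hcomp, ← det_one_sub_X_pow_three, Matrix.charpolyRev, ← Matrix.det_mul,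
    ← Matrix.det_mul]
  congr 1
  have hmap : (A ^ 3).map (C : ℂ →+* ℂ[X]) = (A.map C) ^ 3 := by
    rw [← RingHom.mapMatrix_apply, map_pow]; rfl
  rw [hmap]
  generalize A.map (C : ℂ →+* ℂ[X]) = M
  have h1 : (C ω : ℂ[X]) ^ 2 = - 1 - C ω := by
    rw [← C_pow, ← C_1, ← C_neg, ← C_sub]; congr 1; linear_combination hω
  have h3 : (C ω : ℂ[X]) ^ 3 = 1 := by linear_combination (C ω - 1) * h1
  rw [C_pow]
  generalize (C ω : ℂ[X]) = w at *
  simp only [sub_mul, mul_sub, one_mul, mul_one, smul_mul_assoc, mul_smul_comm]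
  rw [← sub_eq_zero, pow_three' M, ← sq M]
  have : (0 : Matrix ι ι ℂ[X]) = ((X : ℂ[X]) * (1 + w + w ^ 2)) • M
      - ((X : ℂ[X]) ^ 2 * (w + w ^ 2 + w ^ 3)) • M ^ 2
      + ((X : ℂ[X]) ^ 3 * (w ^ 3 - 1)) • (M ^ 2 * M) := by
    have e1 : 1 + w + w ^ 2 = 0 := by rw [h1]; ring
    have e2 : w + w ^ 2 + w ^ 3 = 0 := by rw [h1, h3]; ring
    rw [e1, e2, h3]; simp
  rw [this]
  module

theorem trace_map_pow_three {ι : Type*} [Fintype ι] [DecidableEq ι] (A : Matrix ι ι ℝ) :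
    ((A.map (algebraMap ℝ ℂ)) ^ 3).trace = algebraMap ℝ ℂ ((A ^ 3).trace) := by
  rw [← RingHom.mapMatrix_apply, ← map_pow, RingHom.mapMatrix_apply, Matrix.trace, Matrix.trace,
    map_sum]
  rfl

theorem trace_neg_eq {ι κ : Type*} [Fintype ι] [DecidableEq ι] [Fintype κ]
    [DecidableEq κ] (A : Matrix ι ι ℂ) (B : Matrix κ κ ℂ) (h : A.charpolyRev = B.charpolyRev) :
    -A.trace = -B.trace := by
  rw [← Matrix.coeff_charpolyRev_eq_neg_trace, h, Matrix.coeff_charpolyRev_eq_neg_trace]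

/-- The trace of the cube of a matrix is determined by the characteristic polynomial. -/
theorem trace_pow_three_eq {ι κ : Type*} [Fintype ι] [DecidableEq ι] [Fintype κ]
    [DecidableEq κ] {A : Matrix ι ι ℝ} {B : Matrix κ κ ℝ} (h : A.charpoly = B.charpoly) :
    (A ^ 3).trace = (B ^ 3).trace := by
  obtain ⟨ω, hω⟩ : ∃ ω : ℂ, 1 + ω + ω ^ 2 = 0 := by
    have h3 := Complex.isPrimitiveRoot_exp 3 (by norm_num)
    have := h3.geom_sum_eq_zero (by norm_num)
    exact ⟨_, by simpa [Finset.sum_range_succ] using this⟩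
  let A' := A.map (algebraMap ℝ ℂ)
  let B' := B.map (algebraMap ℝ ℂ)
  have h' : A'.charpolyRev = B'.charpolyRev := by
    rw [← Matrix.reverse_charpoly, ← Matrix.reverse_charpoly, Matrix.charpoly_map,
      Matrix.charpoly_map, h]
  have h2 := expand_charpolyRev_pow_three A' hω
  rw [h', ← expand_charpolyRev_pow_three B' hω] at h2
  have h3 := neg_inj.1 (trace_neg_eq _ _ (Polynomial.expand_injective (by norm_num) h2))
  rw [trace_map_pow_three, trace_map_pow_three] at h3
  exact (algebraMap ℝ ℂ).injective h3

/-! ### Triangles of a graph and of its complement -/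

/-- A closed walk of length `3` is a triangle, hence automatically non-backtracking. -/
theorem trace_hashimoto_pow_three {V : Type*} [Fintype V] [DecidableEq V] (G : SimpleGraph V) :
    (hashimotoMatrix G ^ 3).trace = (G.adjMatrix ℝ ^ 3).trace := by
  -- sums over oriented edges become sums over pairs weighted by the adjacency matrix
  have hsum : ∀ F : V → V → ℝ, ∑ e : OrientedEdge G, F e.1.1 e.1.2 =
      ∑ a, ∑ b, G.adjMatrix ℝ a b * F a b := by
    intro F
    rw [← Fintype.sum_prod_type' (f := fun a b => G.adjMatrix ℝ a b * F a b)]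
    simp only [SimpleGraph.adjMatrix_apply, ite_mul, one_mul, zero_mul]
    rw [← Finset.sum_filter]
    exact (Finset.sum_subtype (p := fun p : V × V => G.Adj p.1 p.2)
      (Finset.univ.filter fun p : V × V => G.Adj p.1 p.2) (by simp)
      (fun p => F p.1 p.2)).symm
  have hT : ∀ e f : OrientedEdge G, hashimotoMatrix G e f =
      (if e.1.2 = f.1.1 then 1 else 0) * (if e.1.1 ≠ f.1.2 then 1 else 0) := by
    intro e f
    rw [hashimoto_apply]
    by_cases h1 : e.1.2 = f.1.1 <;> by_cases h2 : e.1.1 = f.1.2 <;> simp [OEStep, h1, h2]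
  rw [pow_three, pow_three, Matrix.trace, Matrix.trace]
  simp only [Matrix.diag_apply, Matrix.mul_apply, hT]
  rw [hsum (fun a b => ∑ f : OrientedEdge G,
    ((if b = f.1.1 then 1 else 0) * (if a ≠ f.1.2 then 1 else 0)) *
      ∑ g : OrientedEdge G, ((if f.1.2 = g.1.1 then 1 else 0) * (if f.1.1 ≠ g.1.2 then 1 else 0)) *
        ((if g.1.2 = a then 1 else 0) * (if g.1.1 ≠ b then 1 else 0)))]
  refine Finset.sum_congr rfl fun a _ => Finset.sum_congr rfl fun b _ => ?_
  by_cases hab : G.Adj a b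
  swap
  · simp [hab]
  congr 1
  rw [hsum (fun c d => ((if b = c then 1 else 0) * (if a ≠ d then 1 else 0)) *
      ∑ g : OrientedEdge G, ((if d = g.1.1 then 1 else 0) * (if c ≠ g.1.2 then 1 else 0)) *
        ((if g.1.2 = a then 1 else 0) * (if g.1.1 ≠ b then 1 else 0)))]
  rw [Finset.sum_eq_single b (fun c _ hc => by simp [Ne.symm hc]) (by simp)]
  refine Finset.sum_congr rfl fun c _ => ?_
  rw [hsum (fun x y => ((if c = x then 1 else 0) * (if b ≠ y then 1 else 0)) *
        ((if y = a then 1 else 0) * (if x ≠ b then 1 else 0)))]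
  rw [Finset.sum_eq_single c (fun x _ hx => by simp [Ne.symm hx]) (by simp),
    Finset.sum_eq_single a (fun y _ hy => by simp [hy]) (by simp)]
  by_cases hbc : G.Adj b c
  · by_cases hca : G.Adj c a
    · simp [hbc, hca, hca.ne.symm, hbc.ne.symm, hab.ne.symm]
    · simp [hca]
  · simp [hbc]

/-- Inclusion–exclusion for triangles of the complement: the number of triangles of `Gᶜ` is
determined by the order of `G`, its number of edges, the sum of its squared degrees and
its number of triangles. -/
theorem trace_adjMatrix_compl_pow_three {V : Type*} [Fintype V] [DecidableEq V]
    (G : SimpleGraph V) :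
    (Gᶜ.adjMatrix ℝ ^ 3).trace =
      (((Matrix.of fun _ _ => 1 : Matrix V V ℝ) - 1) ^ 3).trace
        - 3 * ((Fintype.card V - 2 : ℝ) * (2 * G.edgeFinset.card))
        + 3 * (((∑ v, G.degree v ^ 2 : ℕ) : ℝ) - 2 * G.edgeFinset.card)
        - (G.adjMatrix ℝ ^ 3).trace := by
  set J : Matrix V V ℝ := Matrix.of fun _ _ => 1 with hJ
  set A := G.adjMatrix ℝ with hA
  have hcompl : Gᶜ.adjMatrix ℝ = J - 1 - A := by
    ext i j
    by_cases hij : i = j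
    · subst hij; simp [hJ, hA]
    · by_cases h : G.Adj i j <;> simp [hJ, hA, hij, h]
  have hdeg : ∀ v, ∑ w, A v w = G.degree v := by
    intro v
    simp [hA, SimpleGraph.adjMatrix_apply, ← SimpleGraph.card_neighborFinset_eq_degree,
      SimpleGraph.neighborFinset_eq_filter]
  have hdeg' : ∀ v, ∑ w, A w v = G.degree v := by
    intro v; rw [← hdeg]
    exact Finset.sum_congr rfl fun w _ => by simp [hA, SimpleGraph.adjMatrix_apply, G.adj_comm]
  have hsum : ∑ v, (G.degree v : ℝ) = 2 * G.edgeFinset.card := by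
    exact_mod_cast G.sum_degrees_eq_twice_card_edges
  have tA : A.trace = 0 := SimpleGraph.trace_adjMatrix _ _
  have tJA : (J * A).trace = 2 * G.edgeFinset.card := by
    rw [← hsum]; simp [Matrix.trace, Matrix.mul_apply, hJ, hdeg']
  have tJJA : (J * J * A).trace = Fintype.card V * (2 * G.edgeFinset.card) := by
    have : J * J = (Fintype.card V : ℝ) • J := by ext i j; simp [hJ, Matrix.mul_apply]
    rw [this, Matrix.smul_mul, Matrix.trace_smul, tJA, smul_eq_mul]
  have tAA : (A * A).trace = 2 * G.edgeFinset.card := by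
    rw [← hsum]
    refine Finset.sum_congr rfl fun v _ => ?_
    exact SimpleGraph.adjMatrix_mul_self_apply_self G v
  have tJAA : (J * A * A).trace = ((∑ v, G.degree v ^ 2 : ℕ) : ℝ) := by
    have hJA : J * A = Matrix.of fun _ w => (G.degree w : ℝ) := by
      ext i j; simp [hJ, Matrix.mul_apply, hdeg']
    rw [hJA]
    push_cast
    simp only [Matrix.trace, Matrix.diag_apply, Matrix.mul_apply, Matrix.of_apply]
    rw [Finset.sum_comm]
    simp_rw [← Finset.mul_sum, hdeg, sq]
  have expand : (J - 1 - A) ^ 3 = (J - 1) ^ 3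
      - (J * J * A + J * A * J + A * J * J) + (J * A + J * A + J * A + A * J + A * J + A * J)
      - (A + A + A)
      + (J * A * A + A * J * A + A * A * J) - (A * A + A * A + A * A) - A ^ 3 := by
    noncomm_ring
  rw [hcompl, expand]
  have c1 : (J * A * J).trace = (J * J * A).trace := by
    rw [Matrix.trace_mul_comm, Matrix.mul_assoc]
  have c2 : (A * J * J).trace = (J * J * A).trace := by
    rw [Matrix.mul_assoc, Matrix.trace_mul_comm]
  have c3 : (A * J * A).trace = (J * A * A).trace := by
    rw [Matrix.mul_assoc, Matrix.trace_mul_comm, Matrix.mul_assoc, Matrix.trace_mul_comm]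
  have c4 : (A * A * J).trace = (J * A * A).trace := by
    rw [Matrix.trace_mul_comm, Matrix.mul_assoc]
  have c5 : (A * J).trace = (J * A).trace := Matrix.trace_mul_comm _ _
  simp only [Matrix.trace_sub, Matrix.trace_add, c1, c2, c3, c4, c5, tA, tJA,
    tJJA, tAA, tJAA]
  push_cast
  ring

theorem trace_adjMatrix_pow_three_of_isAcyclic {V : Type*} [Fintype V] [DecidableEq V]
    {G : SimpleGraph V} (hG : G.IsAcyclic) : (G.adjMatrix ℝ ^ 3).trace = 0 := by
  rw [← trace_hashimoto_pow_three]
  exact (Matrix.isNilpotent_trace_of_isNilpotent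
    ((isNilpotent_of_isAcyclic hG).pow_of_pos (by norm_num))).eq_zero

theorem isAcyclic_of_phiT_eq {V : Type*} [Fintype V] [DecidableEq V] {G H : SimpleGraph V}
    (hG : G.IsAcyclic) (h : phiT H = phiT G) : H.IsAcyclic :=
  isAcyclic_of_isNilpotent (isNilpotent_of_charpoly_eq h (isNilpotent_of_isAcyclic hG))

/-- The Hashimoto polynomial of the complement counts the triangles of the complement; forests have no
triangles and the numbers of edges agree, so inclusion–exclusion leaves the sum of squared degrees. -/
theorem sum_degree_sq_eq {V : Type*} [Fintype V] [DecidableEq V] {G H : SimpleGraph V}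
    (hG : G.IsAcyclic) (h : phiT H = phiT G) (hc : phiT Hᶜ = phiT Gᶜ) :
    ∑ v, H.degree v ^ 2 = ∑ v, G.degree v ^ 2 := by
  have h1 := trace_pow_three_eq hc
  rw [trace_hashimoto_pow_three, trace_hashimoto_pow_three] at h1
  have h1' : (Hᶜ.adjMatrix ℝ ^ 3).trace = (Gᶜ.adjMatrix ℝ ^ 3).trace := by convert h1
  have hH := trace_adjMatrix_compl_pow_three H
  have hG' := trace_adjMatrix_compl_pow_three G
  rw [trace_adjMatrix_pow_three_of_isAcyclic (isAcyclic_of_phiT_eq hG h), card_edges_eq h] at hH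
  rw [trace_adjMatrix_pow_three_of_isAcyclic hG] at hG'
  have : ((∑ v, H.degree v ^ 2 : ℕ) : ℝ) = ((∑ v, G.degree v ^ 2 : ℕ) : ℝ) := by linarith
  exact_mod_cast this

/-! ### Sums of squared degrees in forests -/

/-- A forest with an edge has more non-isolated vertices than edges. -/
theorem card_edges_lt_card_support {V : Type*} [Fintype V] [DecidableEq V] {G : SimpleGraph V}
    (hG : G.IsAcyclic) (hm : G.edgeFinset.card ≠ 0) :
    G.edgeFinset.card + 1 ≤ (Finset.univ.filter fun v => G.degree v ≠ 0).card := by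
  have hk : (Finset.univ.filter fun v => G.degree v ≠ 0).card = Fintype.card G.support := by
    rw [← Set.toFinset_card]
    congr 1
    ext v
    simp only [Finset.mem_filter, Finset.mem_univ, true_and, Set.mem_toFinset,
      SimpleGraph.mem_support, ← SimpleGraph.degree_pos_iff_exists_adj, Nat.pos_iff_ne_zero]
  have hne : Nonempty G.support := by
    obtain ⟨e, he⟩ := Finset.card_ne_zero.1 hm
    induction e with
    | _ a b => exact ⟨⟨a, b, by simpa using he⟩⟩
  -- extend the forest on the non-isolated vertices to a spanning tree of the complete graph
  obtain ⟨F, hF, -, hT⟩ :=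
    (SimpleGraph.connected_top (V := G.support)).exists_isTree_le_of_le_of_isAcyclic
      le_top (hG.induce G.support)
  have h1 := hT.card_edgeFinset
  have h2 : (G.induce G.support).edgeFinset.card ≤ F.edgeFinset.card :=
    Finset.card_le_card (SimpleGraph.edgeFinset_mono hF)
  have h3 := G.card_edgeFinset_induce_support
  rw [hk, ← h1]
  have h4 : (G.induce G.support).edgeFinset.card = G.edgeFinset.card := by
    convert h3
  omega

/-- In a forest with `m` edges and maximum degree at most `D`, summing
`(d - 1)² ≤ (D - 1)(d - 1)` over the more than `m` non-isolated vertices bounds the sum of the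
squared degrees. -/
theorem sum_degree_sq_le_s7 {V : Type*} [Fintype V] [DecidableEq V] {G : SimpleGraph V}
    (hG : G.IsAcyclic) (hm : G.edgeFinset.card ≠ 0) {D : ℕ} (hD : ∀ v, G.degree v ≤ D) :
    1 ≤ D ∧ ((∑ v, G.degree v ^ 2 : ℕ) : ℤ) - 3 * G.edgeFinset.card + 1 ≤
      (D - 1) * (G.edgeFinset.card - 1) := by
  have hk := card_edges_lt_card_support hG hm
  set s := Finset.univ.filter fun v => G.degree v ≠ 0 with hs
  have hsum := G.sum_degrees_eq_twice_card_edges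
  set m := G.edgeFinset.card
  have hD1 : 1 ≤ D := by
    obtain ⟨v, hv⟩ : s.Nonempty := Finset.card_pos.1 (by omega)
    have h1 := (Finset.mem_filter.1 hv).2
    have := hD v
    omega
  refine ⟨hD1, ?_⟩
  have e1 : ∑ v ∈ s, (G.degree v : ℤ) = 2 * m := by
    have : ∑ v ∈ s, G.degree v = ∑ v, G.degree v := Finset.sum_filter_ne_zero _
    rw [hsum] at this
    exact_mod_cast this
  have e2 : ∑ v ∈ s, (G.degree v : ℤ) ^ 2 = ((∑ v, G.degree v ^ 2 : ℕ) : ℤ) := by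
    push_cast
    refine Finset.sum_subset (Finset.subset_univ _) fun v _ hv => ?_
    have : G.degree v = 0 := by simpa [hs] using hv
    simp [this]
  have e3 : ∑ v ∈ s, ((G.degree v : ℤ) - 1) ^ 2 ≤
      ∑ v ∈ s, ((D : ℤ) - 1) * ((G.degree v : ℤ) - 1) := by
    refine Finset.sum_le_sum fun v hv => ?_
    have h1 : (1 : ℤ) ≤ G.degree v := by
      have := (Finset.mem_filter.1 hv).2; omega
    have h2 : (G.degree v : ℤ) ≤ D := by exact_mod_cast hD v
    nlinarith
  have e4 : ∑ v ∈ s, ((G.degree v : ℤ) - 1) ^ 2 =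
      ∑ v ∈ s, (G.degree v : ℤ) ^ 2 - 2 * ∑ v ∈ s, (G.degree v : ℤ) + s.card := by
    rw [Finset.mul_sum, ← Finset.sum_sub_distrib, Finset.card_eq_sum_ones, Nat.cast_sum,
      ← Finset.sum_add_distrib]
    exact Finset.sum_congr rfl fun v _ => by push_cast; ring
  rw [← Finset.mul_sum, Finset.sum_sub_distrib, e4, e1, e2] at e3
  simp only [Finset.sum_const, nsmul_eq_mul, mul_one] at e3
  have hk' : (m : ℤ) + 1 ≤ s.card := by exact_mod_cast hk
  have hD1' : (1 : ℤ) ≤ D := by exact_mod_cast hD1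
  nlinarith [mul_nonneg (sub_nonneg.2 hD1') (sub_nonneg.2 hk')]

/-- The star maximises the sum of squared degrees, with value `m² + m`: maximum degree at most `m - 1`
gives at most `(m - 2)(m - 1) + 3m - 1 = m² + 1`, which is less than `m² + m` when `m ≥ 2`. -/
theorem exists_degree_eq_card_edges {V : Type*} [Fintype V] [DecidableEq V] {G : SimpleGraph V}
    (hG : G.IsAcyclic) (hm : G.edgeFinset.card ≠ 0)
    (hS : G.edgeFinset.card ^ 2 + G.edgeFinset.card ≤ ∑ v, G.degree v ^ 2) :
    ∃ v, G.degree v = G.edgeFinset.card := by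
  by_contra! h
  have hD : ∀ v, G.degree v ≤ G.edgeFinset.card - 1 := by
    intro v
    have h1 := h v
    have h2 := G.degree_le_card_edgeFinset v
    omega
  obtain ⟨h1, h2⟩ := sum_degree_sq_le_s7 hG hm hD
  generalize G.edgeFinset.card = m at *
  generalize ∑ v, G.degree v ^ 2 = S at *
  obtain ⟨k, rfl⟩ : ∃ k, m = k + 2 := ⟨m - 2, by omega⟩
  simp only [show k + 2 - 1 = k + 1 by omega] at h2
  push_cast at h2
  zify at hS
  nlinarith

/-- The value `m² - m + 4` is that of a star with one edge subdivided; maximum degree at most `m - 2`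
gives at most `(m - 3)(m - 1) + 3m - 1 = m² - m + 2`. -/
theorem exists_card_edges_le_degree_add_one {V : Type*} [Fintype V] [DecidableEq V]
    {G : SimpleGraph V} (hG : G.IsAcyclic) (hm : G.edgeFinset.card ≠ 0)
    (hS : G.edgeFinset.card ^ 2 + 4 ≤ ∑ v, G.degree v ^ 2 + G.edgeFinset.card) :
    ∃ v, G.edgeFinset.card ≤ G.degree v + 1 := by
  by_contra! h
  have hD : ∀ v, G.degree v ≤ G.edgeFinset.card - 2 := by
    intro v
    have h1 := h v
    omega
  obtain ⟨h1, h2⟩ := sum_degree_sq_le_s7 hG hm hD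
  generalize G.edgeFinset.card = m at *
  generalize ∑ v, G.degree v ^ 2 = S at *
  obtain ⟨k, rfl⟩ : ∃ k, m = k + 3 := ⟨m - 3, by omega⟩
  simp only [show k + 3 - 2 = k + 1 by omega] at h2
  push_cast at h2
  zify at hS
  nlinarith

/-- The other degrees sum to `m`, and so do their squares at least. -/
theorem sum_degree_sq_ge_of_degree_eq {V : Type*} [Fintype V] [DecidableEq V]
    {G : SimpleGraph V} {v : V} (hv : G.degree v = G.edgeFinset.card) :
    G.edgeFinset.card ^ 2 + G.edgeFinset.card ≤ ∑ v, G.degree v ^ 2 := by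
  have hsum := G.sum_degrees_eq_twice_card_edges
  rw [← Finset.add_sum_erase _ _ (Finset.mem_univ v)] at hsum ⊢
  rw [hv] at hsum ⊢
  have : ∑ x ∈ Finset.univ.erase v, G.degree x ≤ ∑ x ∈ Finset.univ.erase v, G.degree x ^ 2 :=
    Finset.sum_le_sum fun x _ => Nat.le_self_pow (by norm_num) _
  omega

/-- Follows from `d² ≥ 3d - 2` at every vertex other than `v`. -/
theorem sum_degree_sq_ge_of_degree_add_one_eq {V : Type*} [Fintype V] [DecidableEq V]
    {G : SimpleGraph V} {v : V} (hv : G.degree v + 1 = G.edgeFinset.card)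
    (hn : Fintype.card V = G.edgeFinset.card + 1) :
    G.edgeFinset.card ^ 2 + 4 ≤ ∑ v, G.degree v ^ 2 + G.edgeFinset.card := by
  have hsum := G.sum_degrees_eq_twice_card_edges
  rw [← Finset.add_sum_erase _ _ (Finset.mem_univ v)] at hsum ⊢
  have h1 : ∑ x ∈ Finset.univ.erase v, (3 * (G.degree x : ℤ) - 2) ≤
      ∑ x ∈ Finset.univ.erase v, (G.degree x : ℤ) ^ 2 := by
    refine Finset.sum_le_sum fun x _ => ?_
    generalize (G.degree x : ℤ) = d
    rcases le_or_gt d 1 with h | h <;> nlinarith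
  rw [Finset.sum_sub_distrib, ← Finset.mul_sum, Finset.sum_const,
    Finset.card_erase_of_mem (Finset.mem_univ _), Finset.card_univ, hn] at h1
  simp only [Nat.add_sub_cancel, nsmul_eq_mul] at h1
  zify at hsum hv ⊢
  rw [← hv] at h1 hsum ⊢
  nlinarith

/-! ### Stars and subdivided stars -/

/-- If the degree of `v` is the number of edges, every edge contains `v`. -/
theorem adj_imp_of_degree_eq {V : Type*} [Fintype V] [DecidableEq V]
    {G : SimpleGraph V} {v : V} (hv : G.degree v = G.edgeFinset.card) {a b : V}
    (h : G.Adj a b) : a = v ∨ b = v := by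
  have h1 : G.incidenceFinset v = G.edgeFinset :=
    Finset.eq_of_subset_of_card_le (G.incidenceFinset_subset v)
      (by rw [SimpleGraph.card_incidenceFinset_eq_degree, hv])
  have h2 : s(a, b) ∈ G.incidenceFinset v := by rw [h1]; simpa using h
  rw [SimpleGraph.mem_incidenceFinset] at h2
  have := h2.2
  rw [Sym2.mem_iff] at this
  rcases this with h | h
  · exact Or.inl h.symm
  · exact Or.inr h.symm

/-- Two graphs on the same vertex set that are stars, possibly with isolated vertices, and have the
same number of edges are isomorphic: match the leaves, then correct the image of the centre by a
transposition of two non-leaves. -/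
theorem nonempty_iso_of_star {V : Type*} [Fintype V] [DecidableEq V]
    {G H : SimpleGraph V} {v w : V} (hv : G.degree v = G.edgeFinset.card)
    (hw : H.degree w = H.edgeFinset.card) (hm : H.edgeFinset.card = G.edgeFinset.card) :
    Nonempty (G ≃g H) := by
  have hc : Fintype.card {x // G.Adj v x} = Fintype.card {x // H.Adj w x} := by
    rw [Fintype.card_subtype, Fintype.card_subtype, ← SimpleGraph.neighborFinset_eq_filter,
      ← SimpleGraph.neighborFinset_eq_filter, SimpleGraph.card_neighborFinset_eq_degree,
      SimpleGraph.card_neighborFinset_eq_degree]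
    omega
  let e₀ : {x // G.Adj v x} ≃ {x // H.Adj w x} := Fintype.equivOfCardEq hc
  let e := e₀.extendSubtype
  have he : ∀ x, H.Adj w (e x) ↔ G.Adj v x := fun x =>
    ⟨fun h => by_contra fun h' => e₀.extendSubtype_not_mem x h' h, e₀.extendSubtype_mem x⟩
  have hev : ¬ H.Adj w (e v) := fun h => G.loopless.irrefl v ((he v).1 h)
  -- neither `e v` nor `w` is a neighbour of `w`, so the transposition keeps the leaves
  let f := e.trans (Equiv.swap (e v) w)
  have hfv : f v = w := by simp [f]
  have hf : ∀ x, H.Adj w (f x) ↔ G.Adj v x := by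
    intro x
    rw [← he]
    simp only [f, Equiv.trans_apply]
    rcases eq_or_ne (e x) (e v) with h1 | h1
    · rw [h1, Equiv.swap_apply_left]; simp [hev]
    · rcases eq_or_ne (e x) w with h2 | h2
      · rw [h2, Equiv.swap_apply_right]; simp [hev]
      · rw [Equiv.swap_apply_of_ne_of_ne h1 h2]
  refine ⟨⟨f, ?_⟩⟩
  intro a b
  constructor
  · intro h
    rcases adj_imp_of_degree_eq hw h with h1 | h1
    · rw [← hfv] at h1
      rw [f.injective h1] at h ⊢
      rw [hfv] at h; exact (hf b).1 h
    · rw [← hfv] at h1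
      rw [f.injective h1] at h ⊢
      rw [hfv] at h; exact ((hf a).1 h.symm).symm
  · intro h
    rcases adj_imp_of_degree_eq hv h with h1 | h1
    · rw [h1] at h ⊢
      rw [hfv]; exact (hf b).2 h
    · rw [h1] at h ⊢
      rw [hfv]; exact ((hf a).2 h.symm).symm

/-- A forest with `n - 1` edges and a vertex `v` of degree `n - 2` is a star centred at `v` with
one edge subdivided: the only non-neighbour `u` of `v` hangs from a neighbour `w` of `v`. -/
theorem structure_of_degree_add_one_eq {V : Type*} [Fintype V] [DecidableEq V]
    {G : SimpleGraph V} (hG : G.IsAcyclic) {v : V} (hv : G.degree v + 1 = G.edgeFinset.card)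
    (hn : Fintype.card V = G.edgeFinset.card + 1) :
    ∃ u w, u ≠ v ∧ w ≠ v ∧ u ≠ w ∧ ∀ a b, G.Adj a b ↔
      (a = v ∧ b ≠ v ∧ b ≠ u) ∨ (b = v ∧ a ≠ v ∧ a ≠ u) ∨ (a = u ∧ b = w) ∨ (a = w ∧ b = u) := by
  obtain ⟨r, hr⟩ := exists_rank_of_isAcyclic hG
  have hu : ((Finset.univ.erase v) \ G.neighborFinset v).card = 1 := by
    rw [Finset.card_sdiff_of_subset, Finset.card_erase_of_mem (Finset.mem_univ _), Finset.card_univ,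
      SimpleGraph.card_neighborFinset_eq_degree]
    · omega
    · intro x hx
      rw [SimpleGraph.mem_neighborFinset] at hx
      exact Finset.mem_erase.2 ⟨hx.ne.symm, Finset.mem_univ _⟩
  obtain ⟨u, hu⟩ := Finset.card_eq_one.1 hu
  have hu' : ∀ x, (x ≠ v ∧ ¬ G.Adj v x) ↔ x = u := by
    intro x
    have := Finset.ext_iff.1 hu x
    simpa using this
  have hE : (G.edgeFinset \ G.incidenceFinset v).card = 1 := by
    rw [Finset.card_sdiff_of_subset (G.incidenceFinset_subset v),
      SimpleGraph.card_incidenceFinset_eq_degree]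
    omega
  obtain ⟨e, he⟩ := Finset.card_eq_one.1 hE
  have he' : ∀ a b, (G.Adj a b ∧ a ≠ v ∧ b ≠ v) ↔ s(a, b) = e := by
    intro a b
    have := Finset.ext_iff.1 he s(a, b)
    simp only [Finset.mem_sdiff, SimpleGraph.mem_edgeFinset, SimpleGraph.mem_edgeSet,
      SimpleGraph.mem_incidenceFinset, Finset.mem_singleton,
      SimpleGraph.mk'_mem_incidenceSet_iff] at this
    rw [← this]
    grind
  obtain ⟨huv, huv'⟩ := (hu' u).2 rfl
  have hnadj : ∀ x, G.Adj v x ↔ x ≠ v ∧ x ≠ u := by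
    intro x
    constructor
    · rintro h
      exact ⟨h.ne.symm, fun h' => huv' (h' ▸ h)⟩
    · rintro ⟨h1, h2⟩
      by_contra h
      exact h2 ((hu' x).1 ⟨h1, h⟩)
  -- `u` is the non-neighbour of `v`, and `e` the edge missing `v`;
  -- one end of the edge `e` is `u`, since otherwise `e` and `v` span a triangle
  obtain ⟨w, hw⟩ : ∃ w, e = s(u, w) := by
    induction e with
    | _ a b =>
      obtain ⟨hab, hav, hbv⟩ := (he' a b).2 rfl
      by_cases hau : a = u
      · exact ⟨b, by rw [hau]⟩
      · by_cases hbu : b = u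
        · exact ⟨a, by rw [hbu, Sym2.eq_swap]⟩
        · exfalso
          have h1 := (hnadj a).2 ⟨hav, hau⟩
          have h2 := (hnadj b).2 ⟨hbv, hbu⟩
          have := hr v a b h1 hab hbv.symm
          have := hr a b v hab h2.symm hav
          have := hr b v a h2.symm h1 hab.ne.symm
          omega
  subst hw
  obtain ⟨huw, -, hwv⟩ := (he' u w).2 rfl
  refine ⟨u, w, huv, hwv, huw.ne, fun a b => ?_⟩
  by_cases ha : a = v
  · subst ha
    rw [hnadj]
    grind
  · by_cases hb : b = v
    · subst hb
      rw [G.adj_comm, hnadj]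
      grind
    · have := he' a b
      rw [Sym2.eq_iff] at this
      grind

theorem exists_perm_three {V : Type*} [Fintype V] [DecidableEq V] {v u w v' u' w' : V}
    (h1 : u ≠ v) (h2 : w ≠ v) (h3 : u ≠ w) (h1' : u' ≠ v') (h2' : w' ≠ v') (h3' : u' ≠ w') :
    ∃ e : Equiv.Perm V, e v = v' ∧ e u = u' ∧ e w = w' := by
  let s1 := Equiv.swap v v'
  let s2 := Equiv.swap (s1 u) u'
  let s3 := Equiv.swap (s2 (s1 w)) w'
  have a1 : s1 v = v' := Equiv.swap_apply_left _ _
  have b1 : s1 u ≠ v' := fun h => h1 (s1.injective (h.trans a1.symm))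
  have c1 : s1 w ≠ v' := fun h => h2 (s1.injective (h.trans a1.symm))
  have a2 : s2 v' = v' := Equiv.swap_apply_of_ne_of_ne b1.symm h1'.symm
  have b2 : s2 (s1 u) = u' := Equiv.swap_apply_left _ _
  have c2 : s2 (s1 w) ≠ v' := fun h => c1 (s2.injective (h.trans a2.symm))
  have d2 : s2 (s1 w) ≠ u' := fun h => h3 (s1.injective (s2.injective (h.trans b2.symm))).symm
  refine ⟨(s1.trans s2).trans s3, ?_, ?_, ?_⟩
  · simp only [Equiv.trans_apply, a1, a2]
    exact Equiv.swap_apply_of_ne_of_ne c2.symm h2'.symm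
  · simp only [Equiv.trans_apply, b2]
    exact Equiv.swap_apply_of_ne_of_ne d2.symm h3'
  · exact Equiv.swap_apply_left _ _

theorem nonempty_iso_of_subdivided_star {V : Type*} [Fintype V] [DecidableEq V]
    {G H : SimpleGraph V} (hG : G.IsAcyclic) (hH : H.IsAcyclic) {v w : V}
    (hv : G.degree v + 1 = G.edgeFinset.card) (hw : H.degree w + 1 = H.edgeFinset.card)
    (hm : H.edgeFinset.card = G.edgeFinset.card)
    (hn : Fintype.card V = G.edgeFinset.card + 1) : Nonempty (G ≃g H) := by
  obtain ⟨u, x, h1, h2, h3, hadj⟩ := structure_of_degree_add_one_eq hG hv hn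
  obtain ⟨u', x', h1', h2', h3', hadj'⟩ := structure_of_degree_add_one_eq hH hw (by omega)
  obtain ⟨e, rfl, rfl, rfl⟩ := exists_perm_three h1 h2 h3 h1' h2' h3'
  refine ⟨⟨e, ?_⟩⟩
  intro a b
  rw [hadj, hadj']
  simp only [e.injective.eq_iff, ne_eq]

/-! ### The complement of a forest -/

/-- If two vertices `a`, `b` lay in different components of the complement, then with a neighbour
`c` of `a` and a neighbour `d` of `b` in the complement they would form a `4`-cycle `a b c d`
in `G`. -/
theorem connected_compl_of_isAcyclic {V : Type*} [Fintype V] [DecidableEq V] [Nonempty V]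
    {G : SimpleGraph V} (hG : G.IsAcyclic) (hd : ∀ v, 2 ≤ Gᶜ.degree v) : Gᶜ.Connected := by
  obtain ⟨r, hr⟩ := exists_rank_of_isAcyclic hG
  refine ⟨fun a b => ?_⟩
  by_contra hab
  obtain ⟨a', ha⟩ := (Gᶜ.degree_pos_iff_exists_adj a).1 (by have := hd a; omega)
  obtain ⟨b', hb⟩ := (Gᶜ.degree_pos_iff_exists_adj b).1 (by have := hd b; omega)
  have key : ∀ x y, ¬ Gᶜ.Reachable x y → G.Adj x y := by
    intro x y h
    by_contra h'
    refine h ?_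
    rcases eq_or_ne x y with rfl | hxy
    · exact SimpleGraph.Reachable.refl _
    · exact SimpleGraph.Adj.reachable ((SimpleGraph.compl_adj _ _ _).2 ⟨hxy, h'⟩)
  have e1 := key a b hab
  have e2 := key a' b fun h => hab (ha.reachable.trans h)
  have e3 := key a' b' fun h => hab (ha.reachable.trans (h.trans hb.symm.reachable))
  have e4 := key a b' fun h => hab (h.trans hb.symm.reachable)
  have := hr a b a' e1 e2.symm ha.ne
  have := hr b a' b' e2.symm e3 hb.ne
  have := hr a' b' a e3 e4.symm ha.ne.symm
  have := hr b' a b e4.symm e1 hb.ne.symm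
  omega

/-- A forest with a vertex adjacent to all but at most one of the other vertices is determined by
its number of edges and its sum of squared degrees among forests of the same order. -/
theorem nonempty_iso_of_card_le_degree {V : Type*} [Fintype V] [DecidableEq V]
    {G H : SimpleGraph V} (hG : G.IsAcyclic) (hH : H.IsAcyclic)
    (hm : H.edgeFinset.card = G.edgeFinset.card)
    (hS : ∑ v, H.degree v ^ 2 = ∑ v, G.degree v ^ 2) {v : V}
    (hv : Fintype.card V ≤ G.degree v + 2) : Nonempty (G ≃g H) := by
  by_cases h0 : G.edgeFinset.card = 0
  · have h1 := G.degree_le_card_edgeFinset v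
    have h2 := H.degree_le_card_edgeFinset v
    exact nonempty_iso_of_star (v := v) (w := v) (by omega) (by omega) hm
  have hn : G.edgeFinset.card + 1 ≤ Fintype.card V :=
    (card_edges_lt_card_support hG h0).trans (Finset.card_le_univ _)
  have hdeg := G.degree_le_card_edgeFinset v
  by_cases hbig : G.edgeFinset.card ^ 2 + G.edgeFinset.card ≤ ∑ v, G.degree v ^ 2
  · obtain ⟨x, hx⟩ := exists_degree_eq_card_edges hG h0 hbig
    obtain ⟨y, hy⟩ := exists_degree_eq_card_edges hH (hm ▸ h0) (by rwa [hm, hS])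
    exact nonempty_iso_of_star hx hy hm
  · have hne : G.degree v ≠ G.edgeFinset.card := fun h =>
      hbig (sum_degree_sq_ge_of_degree_eq h)
    have hn' : Fintype.card V = G.edgeFinset.card + 1 := by omega
    have hv' : G.degree v + 1 = G.edgeFinset.card := by omega
    have hsq := sum_degree_sq_ge_of_degree_add_one_eq hv' hn'
    obtain ⟨y, hy⟩ := exists_card_edges_le_degree_add_one hH (hm ▸ h0) (by rwa [hm, hS])
    have hy1 := H.degree_le_card_edgeFinset y
    have hy2 : H.degree y ≠ H.edgeFinset.card := fun h =>
      hbig (by have := sum_degree_sq_ge_of_degree_eq h; rwa [hm, hS] at this)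
    exact nonempty_iso_of_subdivided_star (v := v) (w := y) hG hH hv' (by omega) hm (by omega)

/-- If `G` is a forest on `n` vertices, then either (i) the complement of
`G` is connected with minimum degree at least `2`, or (ii) every graph `H` on `n` vertices
with `φ_T(H) = φ_T(G)` and `φ_T(co H) = φ_T(co G)` is isomorphic to `G`. -/
theorem stmt_7 (n : ℕ) (G : SimpleGraph (Fin n)) (hG : G.IsAcyclic) :
    (Gᶜ.Connected ∧ ∀ v : Fin n, 2 ≤ Gᶜ.degree v) ∨
    (∀ H : SimpleGraph (Fin n), phiT H = phiT G → phiT Hᶜ = phiT Gᶜ →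
      Nonempty (H ≃g G)) := by
  rcases isEmpty_or_nonempty (Fin n) with hn | hn
  · exact Or.inr fun H _ _ => ⟨⟨Equiv.refl _, fun {a} => isEmptyElim a⟩⟩
  by_cases hd : ∀ v : Fin n, 2 ≤ Gᶜ.degree v
  · exact Or.inl ⟨connected_compl_of_isAcyclic hG (fun v => by convert hd v), hd⟩
  · right
    intro H h hc
    push Not at hd
    obtain ⟨v, hv⟩ := hd
    have hdeg : Fintype.card (Fin n) ≤ G.degree v + 2 := by
      have h1 := G.degree_compl v
      have h2 : Gᶜ.degree v < 2 := by convert hv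
      omega
    obtain ⟨e⟩ := nonempty_iso_of_card_le_degree hG (isAcyclic_of_phiT_eq hG h)
      (card_edges_eq h) (sum_degree_sq_eq hG h hc) hdeg
    exact ⟨e.symm⟩
end
end

section
/- Let n ≥ 3 and let d₁, …, dₙ and d₁', …, dₙ' be natural numbers with 0 ≤ dᵢ ≤ n−1 and 0 ≤ dᵢ' ≤ n−1 for all i. Suppose that Σᵢ dᵢ = Σᵢ dᵢ', and that there exist n−2 distinct integers h₁, …, h_{n−2}, each at least 2, such that ∏ᵢ (dᵢ + hⱼ − 1) = ∏ᵢ (dᵢ' + hⱼ − 1) for every j. Then the multisets {d₁, …, dₙ} and {d₁', …, dₙ'} are equal. -/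
open Finset

/-!
Let `N = n - 1` and let `F` be the difference of the monic polynomials `∏ (X + d i)` and
`∏ (X + d' i)`. As the sums agree, `deg F ≤ n - 2`, while `F` vanishes at the `n - 2` distinct
positive integers `h j - 1`; hence `F = c ∏ (X - (h j - 1))` with `c` an integer. If `c ≠ 0`, then
`|F (-k)| ≥ (k + 1) (k + 2) ⋯ (k + n - 2)` for every `k ≥ 0`
(`ascFactorial_le_prod`), and in particular
`|F 0| * |F (-N)| ≥ (n - 2)! * (2 n - 3)! / (n - 1)!`.

On the other hand `F 0` is the difference of two products of nonnegative numbers with sum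
`S = ∑ d i`, and `F (-N)` is, up to sign, the difference of two products of nonnegative
numbers with sum `n N - S`. By the inequality of arithmetic and geometric means
(`prod_mul_prod_le`), `|F 0| * |F (-N)| ≤ (N / 2) ^ (2 n)`. The two bounds are incompatible
(`pow_lt_factorial`), so `F = 0` and the two multisets of roots coincide.
-/

/-- A product of distinct natural numbers, all at least `b`, is at least the product of the
first ones available, `b (b + 1) ⋯`. -/
lemma ascFactorial_le_prod (b : ℕ) (s : Finset ℕ) (hs : ∀ x ∈ s, b ≤ x) :
    b.ascFactorial s.card ≤ ∏ x ∈ s, x := by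
  induction s using Finset.induction_on_max with
  | empty => simp
  | insert a s ha ih =>
    have hna : a ∉ s := fun h => lt_irrefl _ (ha a h)
    rw [Finset.card_insert_of_notMem hna, Finset.prod_insert hna, Nat.ascFactorial_succ]
    have hcard : s.card ≤ a - b := by
      have hsub : s ⊆ Finset.Ico b a := fun x hx =>
        Finset.mem_Ico.2 ⟨hs x (Finset.mem_insert_of_mem hx), ha x hx⟩
      simpa using Finset.card_le_card hsub
    have hba := hs a (Finset.mem_insert_self _ _)
    exact Nat.mul_le_mul (by omega) (ih fun x hx => hs x (Finset.mem_insert_of_mem hx))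

lemma ascFactorial_le_prod_abs {m : ℕ} (a : Fin m → ℤ) (ha : Function.Injective a)
    (h1 : ∀ j, 1 ≤ a j) (k : ℕ) :
    ((k + 1).ascFactorial m : ℤ) ≤ |∏ j, (-(k : ℤ) - a j)| := by
  have hinj : Function.Injective fun j => (k + a j).toNat := by
    intro i j hij
    have hi := h1 i
    have hj := h1 j
    apply ha
    simp only at hij
    omega
  have key := ascFactorial_le_prod (k + 1) (univ.image fun j => (k + a j).toNat) (by
    intro x hx
    obtain ⟨j, -, rfl⟩ := Finset.mem_image.1 hx
    have := h1 j
    omega)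
  rw [Finset.card_image_of_injective _ hinj, Finset.prod_image hinj.injOn, Finset.card_univ,
    Fintype.card_fin] at key
  rw [Finset.abs_prod]
  calc ((k + 1).ascFactorial m : ℤ) ≤ ((∏ j, (k + a j).toNat : ℕ) : ℤ) := by exact_mod_cast key
    _ = ∏ j, |(-(k : ℤ) - a j)| := by
      push_cast
      refine Finset.prod_congr rfl fun j _ => ?_
      have := h1 j
      rw [abs_of_nonpos (by omega)]
      omega

/-- The inequality of arithmetic and geometric means for `2 n` nonnegative numbers of mean `t`. -/
lemma prod_mul_prod_le {n : ℕ} (u v : Fin n → ℝ) (hu : ∀ i, 0 ≤ u i) (hv : ∀ i, 0 ≤ v i)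
    {t : ℝ} (ht : 0 < t) (hs : ∑ i, u i + ∑ i, v i = 2 * n * t) :
    (∏ i, u i) * ∏ i, v i ≤ t ^ (2 * n) := by
  have key : ∀ x : ℝ, x ≤ t * Real.exp (x / t - 1) := fun x => by
    have h := Real.add_one_le_exp (x / t - 1)
    calc x = t * (x / t - 1 + 1) := by field_simp; ring
      _ ≤ _ := by gcongr
  have hp : ∀ w : Fin n → ℝ, (∀ i, 0 ≤ w i) →
      ∏ i, w i ≤ t ^ n * Real.exp ((∑ i, w i) / t - n) := by
    intro w hw
    calc ∏ i, w i ≤ ∏ i, (t * Real.exp (w i / t - 1)) :=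
          Finset.prod_le_prod (fun i _ => hw i) fun i _ => key _
      _ = _ := by
        rw [Finset.prod_mul_distrib, ← Real.exp_sum, Finset.sum_sub_distrib, ← Finset.sum_div]
        simp
  calc (∏ i, u i) * ∏ i, v i
      ≤ (t ^ n * Real.exp ((∑ i, u i) / t - n)) * (t ^ n * Real.exp ((∑ i, v i) / t - n)) :=
        mul_le_mul (hp u hu) (hp v hv) (Finset.prod_nonneg fun i _ => hv i) (by positivity)
    _ = t ^ (2 * n) * Real.exp ((∑ i, u i + ∑ i, v i) / t - 2 * n) := by
        rw [mul_mul_mul_comm, ← Real.exp_add, ← pow_add]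
        congr 2 <;> ring
    _ = t ^ (2 * n) := by
        rw [hs, mul_div_assoc, div_self ht.ne']
        simp

/-- The comparison of `(2 N)!` with `(N / 2) ^ (2 N + 2)`, cleared of denominators. From `N = 6`
on, the ratio of consecutive terms is controlled by `(1 + 1 / N) ^ N ≤ e`. -/
lemma pow_lt_factorial (N : ℕ) (hN : 2 ≤ N) :
    2 * (N : ℝ) ^ (2 * N + 4) < (2 * N).factorial * 4 ^ (N + 1) := by
  by_cases h6 : N < 6
  · interval_cases N <;> norm_num [Nat.factorial]
  push Not at h6
  clear hN
  induction N, h6 using Nat.le_induction with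
  | base => norm_num [Nat.factorial]
  | succ N hN ih =>
    have hN' : (6 : ℝ) ≤ N := by exact_mod_cast hN
    have hpos : (0 : ℝ) < N := by linarith
    have h1 : (1 + 1 / (N : ℝ)) ^ (2 * N) ≤ 7.4 := by
      calc (1 + 1 / (N : ℝ)) ^ (2 * N) ≤ (Real.exp (1 / N)) ^ (2 * N) := by
            gcongr
            linarith [Real.add_one_le_exp (1 / (N : ℝ))]
        _ = Real.exp 1 ^ 2 := by
            rw [← Real.exp_nat_mul, ← Real.exp_nat_mul]
            congr 1
            push_cast
            field_simp
        _ ≤ 2.7183 ^ 2 := by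
            gcongr
            linarith [Real.exp_one_lt_d9]
        _ ≤ 7.4 := by norm_num
    have h2 : (1 + 1 / (N : ℝ)) ^ 4 ≤ 1.86 := by
      calc (1 + 1 / (N : ℝ)) ^ 4 ≤ (1 + 1 / 6) ^ 4 := by gcongr
        _ ≤ 1.86 := by norm_num
    have h3 : (1 + 1 / (N : ℝ)) ^ (2 * N + 4) ≤ 7.4 * 1.86 := by
      rw [pow_add]
      gcongr
    have h4 : ((N : ℝ) + 1) ^ (2 * N + 4) = N ^ (2 * N + 4) * (1 + 1 / (N : ℝ)) ^ (2 * N + 4) := by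
      rw [← mul_pow]
      congr 1
      field_simp
    have h5 : (((2 * (N + 1)).factorial : ℕ) : ℝ)
        = (2 * N + 2) * ((2 * N + 1) * (2 * N).factorial) := by
      rw [show 2 * (N + 1) = 2 * N + 1 + 1 by ring, Nat.factorial_succ, Nat.factorial_succ]
      push_cast
      ring
    rw [h5]
    push_cast
    calc 2 * ((N : ℝ) + 1) ^ (2 * (N + 1) + 4)
        = (2 * N ^ (2 * N + 4)) * ((1 + 1 / (N : ℝ)) ^ (2 * N + 4) * (N + 1) ^ 2) := by
          rw [show 2 * (N + 1) + 4 = (2 * N + 4) + 2 by ring, pow_add, h4]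
          ring
      _ ≤ (2 * N ^ (2 * N + 4)) * (7.4 * 1.86 * (N + 1) ^ 2) := by gcongr
      _ ≤ (2 * N ^ (2 * N + 4)) * ((2 * N + 2) * (2 * N + 1) * 4) := by
          refine mul_le_mul_of_nonneg_left ?_ (by positivity)
          nlinarith
      _ < ((2 * N).factorial * 4 ^ (N + 1)) * ((2 * N + 2) * (2 * N + 1) * 4) := by gcongr
      _ = _ := by ring

/-- Two products of nonnegative numbers differ by at most the larger of the two. -/
lemma abs_prod_sub_prod_le {n : ℕ} (u v : Fin n → ℝ) (hu : ∀ i, 0 ≤ u i) (hv : ∀ i, 0 ≤ v i) :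
    |∏ i, u i - ∏ i, v i| ≤ max (∏ i, u i) (∏ i, v i) := by
  have h1 : 0 ≤ ∏ i, u i := Finset.prod_nonneg fun i _ => hu i
  have h2 : 0 ≤ ∏ i, v i := Finset.prod_nonneg fun i _ => hv i
  rw [abs_le]
  constructor
  · linarith [le_max_right (∏ i, u i) (∏ i, v i)]
  · linarith [le_max_left (∏ i, u i) (∏ i, v i)]

open Polynomial in
/-- If two monic products of `m + 2` linear factors with equal sums of constants agree at `m`
points, then their difference is a constant multiple of the product of `X - a j`. -/
lemma exists_sub_eq {m : ℕ} (d d' : Fin (m + 2) → ℤ) (hsum : ∑ i, d i = ∑ i, d' i)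
    (a : Fin m → ℤ) (ha : Function.Injective a)
    (hprod : ∀ j, ∏ i, (a j + d i) = ∏ i, (a j + d' i)) :
    ∃ c : ℤ, (∏ i, (X + C (d i)) - ∏ i, (X + C (d' i)) : ℤ[X]) = C c * ∏ j, (X - C (a j)) := by
  have hmon : ∀ e : Fin (m + 2) → ℤ, (∏ i, (X + C (e i)) : ℤ[X]).Monic := fun e =>
    monic_prod_of_monic _ _ fun i _ => monic_X_add_C _
  have hdeg : ∀ e : Fin (m + 2) → ℤ, (∏ i, (X + C (e i)) : ℤ[X]).natDegree = m + 2 := fun e => by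
    rw [natDegree_prod_of_monic _ _ fun i _ => monic_X_add_C _]
    simp [-eq_intCast]
  have hnext : ∀ e : Fin (m + 2) → ℤ, (∏ i, (X + C (e i)) : ℤ[X]).coeff (m + 1) = ∑ i, e i := by
    intro e
    have h := Monic.nextCoeff_prod univ (fun i => (X + C (e i) : ℤ[X]))
      fun i _ => monic_X_add_C _
    rw [nextCoeff_of_natDegree_pos (by rw [hdeg]; omega), hdeg] at h
    simpa [-eq_intCast] using h
  set F : ℤ[X] := ∏ i, (X + C (d i)) - ∏ i, (X + C (d' i)) with hF
  have hFdeg : F.natDegree ≤ m := by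
    rw [natDegree_le_iff_coeff_eq_zero]
    intro k hk
    rw [hF, coeff_sub]
    rcases (by omega : k = m + 1 ∨ k = m + 2 ∨ m + 2 < k) with rfl | rfl | hk2
    · rw [hnext, hnext, hsum, sub_self]
    · have h1 := (hmon d).coeff_natDegree
      have h2 := (hmon d').coeff_natDegree
      rw [hdeg] at h1 h2
      rw [h1, h2, sub_self]
    · rw [coeff_eq_zero_of_natDegree_lt (by rw [hdeg]; exact hk2),
        coeff_eq_zero_of_natDegree_lt (by rw [hdeg]; exact hk2), sub_self]
  by_cases hF0 : F = 0
  · exact ⟨0, by simp [hF0]⟩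
  have hdvd : (∏ j, (X - C (a j)) : ℤ[X]) ∣ F := by
    have h1 : (univ.val.map a) ≤ F.roots := by
      rw [Multiset.le_iff_subset (Multiset.Nodup.map ha univ.nodup)]
      intro x hx
      obtain ⟨j, -, rfl⟩ := Multiset.mem_map.1 hx
      rw [mem_roots hF0, IsRoot.def, hF]
      simp [eval_prod, hprod]
    have h2 := (Multiset.prod_X_sub_C_dvd_iff_le_roots hF0 _).2 h1
    rwa [Multiset.map_map] at h2
  obtain ⟨g, hg⟩ := hdvd
  have hRmon : (∏ j, (X - C (a j)) : ℤ[X]).Monic :=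
    monic_prod_of_monic _ _ fun i _ => monic_X_sub_C _
  have hRdeg : (∏ j, (X - C (a j)) : ℤ[X]).natDegree = m := by
    rw [natDegree_prod_of_monic _ _ fun i _ => monic_X_sub_C _]
    simp [-eq_intCast]
  have hg0 : g ≠ 0 := by
    rintro rfl
    exact hF0 (by rw [hg, mul_zero])
  have hgdeg : g.natDegree = 0 := by
    have := hRmon.natDegree_mul' hg0
    rw [← hg, hRdeg] at this
    omega
  refine ⟨g.coeff 0, ?_⟩
  rw [← eq_C_of_natDegree_eq_zero hgdeg, hg, mul_comm]

open Polynomial in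
/-- Let `n ≥ 3` and let `d, d' : Fin n → ℕ` with all values at most
`n - 1` and equal sums.  If there are `n - 2` distinct integers `h j ≥ 2` such that
`∏ i (d i + h j - 1) = ∏ i (d' i + h j - 1)` for every `j`, then `d` and `d'` have the
same multiset of values. -/
theorem stmt_9 (n : ℕ) (hn : 3 ≤ n) (d d' : Fin n → ℕ)
    (hd : ∀ i, d i ≤ n - 1) (hd' : ∀ i, d' i ≤ n - 1)
    (hsum : ∑ i, d i = ∑ i, d' i)
    (h : Fin (n - 2) → ℤ) (hinj : Function.Injective h) (h2 : ∀ j, 2 ≤ h j)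
    (hprod : ∀ j, ∏ i, ((d i : ℤ) + h j - 1) = ∏ i, ((d' i : ℤ) + h j - 1)) :
    Multiset.map d Finset.univ.val = Multiset.map d' Finset.univ.val := by
  obtain ⟨m, rfl⟩ : ∃ m, n = m + 2 := ⟨n - 2, by omega⟩
  replace hd : ∀ i, d i ≤ m + 1 := hd
  replace hd' : ∀ i, d' i ≤ m + 1 := hd'
  change Fin m → ℤ at h
  have hainj : Function.Injective fun j => h j - 1 := fun i j hij => hinj (by simpa using hij)
  obtain ⟨c, hc⟩ := exists_sub_eq (fun i => (d i : ℤ)) (fun i => (d' i : ℤ))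
    (by exact_mod_cast hsum) (fun j => h j - 1) hainj (by
      intro j
      convert hprod j using 2 <;> ring)
  have hc0 : c = 0 := by
    by_contra hne
    have hc1 : 1 ≤ |c| := Int.one_le_abs hne
    have lower : ∀ k : ℕ, ((k + 1).ascFactorial m : ℤ) ≤
        |∏ i, (-(k : ℤ) + d i) - ∏ i, (-(k : ℤ) + d' i)| := by
      intro k
      have he := congrArg (eval (-(k : ℤ))) hc
      simp only [eval_sub, eval_prod, eval_add, eval_mul, eval_X, eval_C] at he
      rw [he, abs_mul]
      have hk := ascFactorial_le_prod_abs (fun j => h j - 1) hainj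
        (fun j => by have := h2 j; omega) k
      nlinarith [abs_nonneg (∏ j, (-(k : ℤ) - (h j - 1)))]
    have hA : (m.factorial : ℝ) ≤ |∏ i, (d i : ℝ) - ∏ i, (d' i : ℝ)| := by
      have := lower 0
      simp only [Nat.cast_zero, neg_zero, zero_add, Nat.one_ascFactorial] at this
      exact_mod_cast this
    have hB : ((m + 2).ascFactorial m : ℝ) ≤
        |∏ i, ((m + 1 : ℝ) - d i) - ∏ i, ((m + 1 : ℝ) - d' i)| := by
      have h1 := lower (m + 1)
      -- Negating every factor changes both products by the same sign.
      have hneg : ∀ e : Fin (m + 2) → ℕ, ∏ i, (-((m + 1 : ℕ) : ℤ) + e i)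
          = (-1) ^ (m + 2) * ∏ i, ((m + 1 : ℤ) - e i) := by
        intro e
        have : (-1 : ℤ) ^ (m + 2) = ∏ _i : Fin (m + 2), (-1 : ℤ) := by simp
        rw [this, ← Finset.prod_mul_distrib]
        refine Finset.prod_congr rfl fun i _ => ?_
        push_cast
        ring
      rw [hneg, hneg, ← mul_sub, abs_mul, abs_pow, abs_neg, abs_one, one_pow, one_mul] at h1
      exact_mod_cast h1
    have hdR : ∀ i, (0 : ℝ) ≤ m + 1 - d i := fun i => by
      have : (d i : ℝ) ≤ m + 1 := by exact_mod_cast hd i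
      linarith
    have hdR' : ∀ i, (0 : ℝ) ≤ m + 1 - d' i := fun i => by
      have : (d' i : ℝ) ≤ m + 1 := by exact_mod_cast hd' i
      linarith
    have hsR : ∑ i, (d i : ℝ) = ∑ i, (d' i : ℝ) := by exact_mod_cast hsum
    have hup : |∏ i, (d i : ℝ) - ∏ i, (d' i : ℝ)| *
        |∏ i, ((m + 1 : ℝ) - d i) - ∏ i, ((m + 1 : ℝ) - d' i)|
        ≤ ((m + 1 : ℝ) / 2) ^ (2 * (m + 2)) := by
      refine (mul_le_mul
        (abs_prod_sub_prod_le _ _ (fun i => Nat.cast_nonneg _) fun i => Nat.cast_nonneg _)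
        (abs_prod_sub_prod_le _ _ hdR hdR') (abs_nonneg _)
        (le_max_of_le_left (Finset.prod_nonneg fun i _ => Nat.cast_nonneg _))).trans ?_
      have ht : (0 : ℝ) < (m + 1) / 2 := by positivity
      -- The maxima may come from different sequences; only the common sum matters.
      rcases max_choice (∏ i, (d i : ℝ)) (∏ i, (d' i : ℝ)) with e1 | e1 <;>
      rcases max_choice (∏ i, ((m + 1 : ℝ) - d i)) (∏ i, ((m + 1 : ℝ) - d' i)) with e2 | e2 <;>
      · rw [e1, e2]
        refine prod_mul_prod_le _ _ (fun i => Nat.cast_nonneg _) (by assumption) ht ?_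
        rw [Finset.sum_sub_distrib]
        simp only [hsR, Finset.sum_const, Finset.card_univ, Fintype.card_fin, nsmul_eq_mul]
        push_cast
        ring
    have hAB : (m.factorial : ℝ) * (m + 2).ascFactorial m
        ≤ ((m + 1 : ℝ) / 2) ^ (2 * (m + 2)) :=
      (mul_le_mul hA hB (Nat.cast_nonneg _) (abs_nonneg _)).trans hup
    have hfac : ((2 * (m + 1)).factorial : ℝ)
        = 2 * (m + 1) ^ 2 * (m.factorial * (m + 2).ascFactorial m) := by
      have h1 := Nat.factorial_mul_ascFactorial (m + 1) m
      rw [show 2 * (m + 1) = m + 1 + m + 1 by ring, Nat.factorial_succ, ← h1,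
        Nat.factorial_succ m]
      push_cast
      ring
    have hlt := pow_lt_factorial (m + 1) (by omega)
    rw [hfac] at hlt
    have hpow : ((m + 1 : ℝ) / 2) ^ (2 * (m + 2)) * 4 ^ (m + 1 + 1) = (m + 1) ^ (2 * (m + 2)) := by
      rw [div_pow, pow_mul (2 : ℝ)]
      norm_num
    have : 2 * (m + 1 : ℝ) ^ 2 * (m.factorial * (m + 2).ascFactorial m) * 4 ^ (m + 1 + 1)
        ≤ 2 * (m + 1 : ℝ) ^ (2 * (m + 1) + 4) := by
      calc _ ≤ 2 * (m + 1 : ℝ) ^ 2 * ((m + 1 : ℝ) / 2) ^ (2 * (m + 2)) * 4 ^ (m + 1 + 1) := by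
            gcongr
        _ = _ := by
            rw [mul_assoc, hpow]
            ring
    push_cast at hlt
    linarith
  rw [hc0, C_0, zero_mul, sub_eq_zero] at hc
  have hroots : ∀ e : Fin (m + 2) → ℕ, (∏ i, (X + C (e i : ℤ)) : ℤ[X]).roots
      = (univ.val.map e).map fun k : ℕ => -(k : ℤ) := by
    intro e
    have := roots_multiset_prod_X_sub_C ((univ.val.map e).map fun k : ℕ => -(k : ℤ))
    rw [← this]
    simp only [Multiset.map_map, Finset.prod, Function.comp_def, C_neg, sub_neg_eq_add]
  have hr := congrArg roots hc
  rw [hroots, hroots] at hr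
  exact Multiset.map_injective (fun a b hab => by simpa using hab) hr
end

section
/- Let r ≥ 1, let a₁ < a₂ < … < a_r be real numbers, and let c₁, c₂, b₁, …, b_r be real numbers, not all zero. Then the function f(t) = c₁ + c₂·t + Σⱼ bⱼ·log(t + aⱼ) has at most r + 1 zeros in the interval (−a₁, ∞) (on which all the logarithms are defined); that is, the set {t ∈ ℝ : t > −a₁ and f(t) = 0} has at most r + 1 elements. -/
/-!
On `(-a 0, ∞)` all the factors `t + a j` are positive, so the derivative
`c₂ + ∑ j, b j / (t + a j)` vanishes exactly where the numerator polynomial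
`c₂ ∏ j, (X + a j) + ∑ j, b j ∏ k ≠ j, (X + a k)` does. This polynomial has degree at most `r`,
and unless `c₂` and all the `b j` vanish it is nonzero (`logNumerator_ne_zero`: evaluate at the
distinct points `-a j`), so it has at most `r` roots. By Rolle's theorem a root lies strictly
between any two zeros of the function, which therefore number at most `r + 1`. If `c₂` and all the
`b j` vanish, then the function is the nonzero constant `c₁`.
-/

open Finset

open Polynomial in
/-- The numerator of `c₂ + ∑ j, b j / (X + a j)` over the common denominator `∏ j, (X + a j)`. -/
noncomputable def logNumerator {r : ℕ} (a : Fin r → ℝ) (c₂ : ℝ) (b : Fin r → ℝ) : ℝ[X] :=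
  C c₂ * ∏ j, (X + C (a j)) + ∑ j, C (b j) * ∏ k ∈ univ.erase j, (X + C (a k))

open Polynomial in
lemma natDegree_logNumerator_le {r : ℕ} (a : Fin r → ℝ) (c₂ : ℝ) (b : Fin r → ℝ) :
    (logNumerator a c₂ b).natDegree ≤ r := by
  have hdeg : ∀ s : Finset (Fin r), (∏ k ∈ s, (X + C (a k))).natDegree ≤ r := fun s => by
    rw [natDegree_prod_of_monic _ _ fun k _ => monic_X_add_C (a k)]
    simpa using s.card_le_univ
  refine natDegree_add_le_of_degree_le ((natDegree_C_mul_le _ _).trans (hdeg _)) ?_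
  exact natDegree_sum_le_of_forall_le _ _ fun j _ => (natDegree_C_mul_le _ _).trans (hdeg _)

open Polynomial in
lemma logNumerator_ne_zero {r : ℕ} {a : Fin r → ℝ} (ha : Function.Injective a) {c₂ : ℝ}
    {b : Fin r → ℝ} (h : ¬ (c₂ = 0 ∧ ∀ j, b j = 0)) : logNumerator a c₂ b ≠ 0 := by
  intro hQ
  -- At `-a i` every product containing the factor `X + a i` vanishes, which isolates `b i`.
  have hb : ∀ i, b i = 0 := by
    intro i
    have he := congrArg (eval (-a i)) hQ
    simp only [logNumerator, eval_add, eval_mul, eval_C, eval_prod, eval_finsetSum, eval_X,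
      eval_zero] at he
    rw [Finset.prod_eq_zero (mem_univ i) (by ring), Finset.sum_eq_single i] at he
    · have hp : ∏ k ∈ univ.erase i, (-a i + a k) ≠ 0 := by
        refine Finset.prod_ne_zero_iff.2 fun k hk h0 => (Finset.mem_erase.1 hk).1 (ha ?_)
        linarith
      simpa [hp] using he
    · intro j _ hj
      rw [Finset.prod_eq_zero (Finset.mem_erase.2 ⟨hj.symm, mem_univ i⟩) (by ring), mul_zero]
    · simp
  refine h ⟨?_, hb⟩
  have hP : ∏ j, (X + C (a j)) ≠ 0 :=
    (monic_prod_of_monic _ _ fun k _ => monic_X_add_C (a k)).ne_zero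
  simpa [logNumerator, hb, hP] using hQ

open Polynomial in
lemma eval_logNumerator {r : ℕ} (a : Fin r → ℝ) (c₂ : ℝ) (b : Fin r → ℝ) {t : ℝ}
    (ht : ∀ j, t + a j ≠ 0) :
    (logNumerator a c₂ b).eval t = (∏ j, (t + a j)) * (c₂ + ∑ j, b j * (1 / (t + a j))) := by
  simp only [logNumerator, eval_add, eval_mul, eval_C, eval_prod, eval_finsetSum, eval_X]
  rw [mul_add, Finset.mul_sum, mul_comm]
  congr 1
  refine Finset.sum_congr rfl fun j _ => ?_
  rw [← Finset.mul_prod_erase univ (fun k => t + a k) (mem_univ j)]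
  field_simp [ht j]

/-- Let `r ≥ 1`, let `a 0 < a 1 < ⋯ < a (r-1)` be real numbers, and let
`c₁, c₂, b 0, …, b (r-1)` be real numbers, not all zero.  Then
`f t = c₁ + c₂ * t + ∑ j, b j * log (t + a j)` has at most `r + 1` zeros on `(-a 0, ∞)`. -/
theorem stmt_10 (r : ℕ) (hr : 1 ≤ r) (a : Fin r → ℝ) (ha : StrictMono a)
    (c₁ c₂ : ℝ) (b : Fin r → ℝ)
    (hne : ¬ (c₁ = 0 ∧ c₂ = 0 ∧ ∀ j, b j = 0)) :
    {t : ℝ | -a ⟨0, hr⟩ < t ∧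
        c₁ + c₂ * t + ∑ j, b j * Real.log (t + a j) = 0}.Finite ∧
    {t : ℝ | -a ⟨0, hr⟩ < t ∧
        c₁ + c₂ * t + ∑ j, b j * Real.log (t + a j) = 0}.ncard ≤ r + 1 := by
  by_cases h : c₂ = 0 ∧ ∀ j, b j = 0
  · have hc : c₁ ≠ 0 := fun hc => hne ⟨hc, h⟩
    simp [h.1, h.2, hc]
  set S := {t : ℝ | -a ⟨0, hr⟩ < t ∧ c₁ + c₂ * t + ∑ j, b j * Real.log (t + a j) = 0}
  have hpos : ∀ t, -a ⟨0, hr⟩ < t → ∀ j, t + a j ≠ 0 := fun t ht j => by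
    have : a ⟨0, hr⟩ ≤ a j := ha.monotone (Fin.mk_le_of_le_val (Nat.zero_le _))
    linarith
  have hder : ∀ t, -a ⟨0, hr⟩ < t →
      HasDerivAt (fun t => c₁ + c₂ * t + ∑ j, b j * Real.log (t + a j))
        (c₂ + ∑ j, b j * (1 / (t + a j))) t := fun t ht => by
    refine HasDerivAt.add ?_ (HasDerivAt.fun_sum fun j _ => ?_)
    · simpa using ((hasDerivAt_id t).const_mul c₂).const_add c₁
    · exact (((hasDerivAt_id t).add_const (a j)).log (hpos t ht j)).const_mul (b j)
  have hcard : ∀ s : Finset ℝ, (s : Set ℝ) ⊆ S → s.card ≤ r + 1 := by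
    intro s hs
    have hQ := logNumerator_ne_zero ha.injective h
    have hroots : (logNumerator a c₂ b).roots.toFinset.card ≤ r :=
      (Multiset.toFinset_card_le _).trans
        ((Polynomial.card_roots' _).trans (natDegree_logNumerator_le a c₂ b))
    refine (Finset.card_le_of_interleaved (t := (logNumerator a c₂ b).roots.toFinset)
      fun x hx y hy hxy _ => ?_).trans (Nat.add_le_add_right hroots 1)
    obtain ⟨hx1, hx2⟩ := hs hx
    obtain ⟨hy1, hy2⟩ := hs hy
    obtain ⟨z, hz, hz0⟩ := exists_hasDerivAt_eq_zero hxy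
      (fun t ht => (hder t (hx1.trans_le ht.1)).continuousAt.continuousWithinAt)
      (hx2.trans hy2.symm) (fun t ht => hder t (hx1.trans ht.1))
    refine ⟨z, ?_, hz.1, hz.2⟩
    rw [Multiset.mem_toFinset, Polynomial.mem_roots hQ, Polynomial.IsRoot,
      eval_logNumerator a c₂ b (hpos z (hx1.trans hz.1)), hz0, mul_zero]
  have hfin : S.Finite := by
    by_contra hinf
    obtain ⟨s, hs, hs'⟩ := Set.Infinite.exists_subset_card_eq hinf (r + 2)
    have := hcard s hs
    omega
  refine ⟨hfin, ?_⟩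
  rw [Set.ncard_eq_toFinset_card S hfin]
  exact hcard _ (by simp)
end

section
/- For every natural number n, the central binomial coefficient satisfies C(2n, n) · √(3n + 1) ≤ 4ⁿ, i.e., C(2n, n) ≤ 2^{2n} / √(3n + 1), where the inequality is between real numbers. -/
/-!
Squaring turns the bound into the integer inequality `C(2n, n)² (3n + 1) ≤ 16ⁿ`, which follows by
induction from the recurrence `(n + 1) C(2n + 2, n + 1) = 2 (2n + 1) C(2n, n)`. The inductive step
reduces to `(2n + 1)² (3n + 4) ≤ 4 (n + 1)² (3n + 1)`, whose two sides differ by exactly `n`.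
-/

theorem centralBinom_sq_mul_le (n : ℕ) : n.centralBinom ^ 2 * (3 * n + 1) ≤ 16 ^ n := by
  induction n with
  | zero => simp
  | succ n ih =>
    have hrec := Nat.succ_mul_centralBinom_succ n
    have hpoly : (2 * n + 1) ^ 2 * (3 * n + 4) ≤ 4 * (n + 1) ^ 2 * (3 * n + 1) := by
      nlinarith
    refine le_of_mul_le_mul_left ?_ (by positivity : 0 < (n + 1) ^ 2)
    calc (n + 1) ^ 2 * ((n + 1).centralBinom ^ 2 * (3 * (n + 1) + 1))
        = ((n + 1) * (n + 1).centralBinom) ^ 2 * (3 * n + 4) := by ring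
      _ = 4 * n.centralBinom ^ 2 * ((2 * n + 1) ^ 2 * (3 * n + 4)) := by rw [hrec]; ring
      _ ≤ 4 * n.centralBinom ^ 2 * (4 * (n + 1) ^ 2 * (3 * n + 1)) := by gcongr
      _ = 16 * (n + 1) ^ 2 * (n.centralBinom ^ 2 * (3 * n + 1)) := by ring
      _ ≤ 16 * (n + 1) ^ 2 * 16 ^ n := by gcongr
      _ = (n + 1) ^ 2 * 16 ^ (n + 1) := by ring

/-- For every natural number `n`, the central binomial coefficient
satisfies `C(2n, n) * √(3n + 1) ≤ 4 ^ n`. -/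
theorem stmt_11 (n : ℕ) :
    (Nat.choose (2 * n) n : ℝ) * Real.sqrt (3 * n + 1) ≤ 4 ^ n := by
  have h : ((2 * n).choose n : ℝ) ^ 2 * (3 * n + 1) ≤ 16 ^ n := by
    exact_mod_cast centralBinom_sq_mul_le n
  refine (abs_le_of_sq_le_sq' ?_ (by positivity)).2
  rw [mul_pow, Real.sq_sqrt (by positivity), ← pow_mul, mul_comm n 2, pow_mul]
  norm_num
  exact h
end

section
/- For every ε > 0 there exists N₀ such that for all n ≥ N₀ the following holds. Let B be the adjacency matrix of any regular simple graph on 4 vertices (a 4×4 symmetric 0-1 matrix with zero diagonal and constant row sums) and let C be the adjacency matrix of any simple graph on n vertices with minimum degree at least 2. For a 4×n matrix N with entries in {0,1}, each of whose columns contains exactly 0, 2, or 4 ones, let G be the graph with adjacency matrix [[B, N], [Nᵀ, C]] and let G̃ be the graph with adjacency matrix [[B, Ñ], [Ñᵀ, C]], where Ñ is obtained from N by replacing each column with exactly two ones by its 0-1 complement. Then the number of such matrices N for which ∏_v (deg_G(v) − 1) ≠ ∏_v (deg_{G̃}(v) − 1) (the products over all vertices, taken in ℤ) is at least (1 − ε)·8ⁿ.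 -/
/-!
Write `r i` for the row sums of `N`, `d` for the degree of `B`, and `T` for half the number of
ones in `N`, so that `r 0 + r 1 + r 2 + r 3 = 2 * T`. Switching keeps every column sum and turns
`r i` into `T - r i`. The `n` vertices of `C` therefore contribute the same nonzero factor to both
products, and the remaining four factors satisfy, with `D = d - 1`,
`∏ (D + r i) - ∏ (D + T - r i) = (2 * D + T) * S 1 * S 2 * S 3`, where `S k = r 0 + r k - T`
(`prod_sub_prod`). Moreover `|S 1| + |S 2| + |S 3| ≤ T`, so if all `S k` are nonzero then
`T ≥ 3` and `2 * D + T > 0`. Hence the two products agree only if some `S k` vanishes.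

Now `S k` is the sum over the `n` columns of a function `defect k` that takes the values
`0, 1, -1` on `6, 1, 1` of the eight admissible columns: it is the end point of a lazy random walk
on `ℤ`. By Fourier inversion the number of `N` with `S k = 0` is
`π⁻¹ * ∫ θ in 0..π, (6 + 2 * cos θ) ^ n` (`card_mul_pi`), and dominated convergence shows that this
is `o(8 ^ n)` (`tendsto_returns`).
-/

open Matrix Finset

noncomputable section
open scoped Classical

/-- Given the adjacency blocks `B`, `C` and the connection block `N`, the product
`∏_v (deg v - 1)` over all vertices of the graph with adjacency matrix
`[[B, N], [Nᵀ, C]]`, computed in `ℤ`. -/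
def switchDegProd {n : ℕ} (B : Matrix (Fin 4) (Fin 4) ℕ) (C : Matrix (Fin n) (Fin n) ℕ)
    (N : Matrix (Fin 4) (Fin n) ℕ) : ℤ :=
  ∏ v : Fin 4 ⊕ Fin n, (((∑ w, (Matrix.fromBlocks B N Nᵀ C) v w : ℕ) : ℤ) - 1)

/-- The GM switch `Ñ` of `N`: every column with exactly two ones is replaced by its
`0`-`1` complement. -/
def gmSwitch {n : ℕ} (N : Matrix (Fin 4) (Fin n) ℕ) : Matrix (Fin 4) (Fin n) ℕ :=
  Matrix.of fun i j => if (∑ i', N i' j) = 2 then 1 - N i j else N i j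

/-- The eight admissible columns: `0`-`1` vectors of length four with `0`, `2` or `4` ones. -/
def admissible : Finset (Fin 4 → Fin 2) :=
  Finset.univ.filter fun c => (∑ i, (c i).val) = 0 ∨ (∑ i, (c i).val) = 2 ∨ (∑ i, (c i).val) = 4

/-- Half the number of ones of a column. The integer division is exact on admissible columns. -/
def halfSum (c : Fin 4 → Fin 2) : ℤ := (∑ i, ((c i).val : ℤ)) / 2

/-- On an admissible column this is `1` if the ones are exactly in the rows `0` and `k`, `-1` if
they are exactly in the other two rows, and `0` otherwise (for `k ≠ 0`). -/
def defect (k : Fin 4) (c : Fin 4 → Fin 2) : ℤ := (c 0).val + (c k).val - halfSum c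

lemma card_admissible : admissible.card = 8 := by decide

lemma two_mul_halfSum : ∀ c ∈ admissible, ∑ i, ((c i).val : ℤ) = 2 * halfSum c := by decide

/-- The row-wise effect of the switch on a single admissible column. -/
lemma switch_column : ∀ c ∈ admissible, ∀ i : Fin 4,
    ((if (∑ i', (c i').val) = 2 then 1 - (c i).val else (c i).val : ℕ) : ℤ)
      = halfSum c - (c i).val := by decide

lemma abs_defect_le : ∀ c ∈ admissible,
    |defect 1 c| + |defect 2 c| + |defect 3 c| ≤ halfSum c := by decide

lemma image_defect : ∀ k : Fin 4, k ≠ 0 → admissible.image (defect k) = {0, 1, -1} := by decide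

lemma fiber_defect : ∀ k : Fin 4, k ≠ 0 → (admissible.filter fun c => defect k c = 0).card = 6 ∧
    (admissible.filter fun c => defect k c = 1).card = 1 ∧
    (admissible.filter fun c => defect k c = -1).card = 1 := by decide

/-- The sequences of `n` admissible columns along which the walk with steps `defect k` returns to
the origin. -/
def returns (k : Fin 4) (n : ℕ) : Finset (Fin n → Fin 4 → Fin 2) :=
  (Fintype.piFinset fun _ : Fin n => admissible).filter fun M => ∑ j, defect k (M j) = 0

/-- The characteristic function of a single step, times eight. -/
lemma sum_exp_defect {k : Fin 4} (hk : k ≠ 0) (θ : ℝ) :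
    ∑ c ∈ admissible, Complex.exp (θ * Complex.I * (defect k c : ℂ))
      = ((6 + 2 * Real.cos θ : ℝ) : ℂ) := by
  have h := Finset.sum_comp (s := admissible)
    (fun z : ℤ => Complex.exp (θ * Complex.I * (z : ℂ))) (defect k)
  obtain ⟨h0, h1, h2⟩ := fiber_defect k hk
  rw [h, image_defect k hk, Finset.sum_insert (by decide), Finset.sum_insert (by decide),
    Finset.sum_singleton, h0, h1, h2]
  push_cast
  rw [Complex.cos]
  simp
  ring

lemma sum_cos_defect {k : Fin 4} (hk : k ≠ 0) (n : ℕ) (θ : ℝ) :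
    ∑ M ∈ Fintype.piFinset fun _ : Fin n => admissible,
      Real.cos (((∑ j, defect k (M j) : ℤ) : ℝ) * θ) = (6 + 2 * Real.cos θ) ^ n := by
  have h := Finset.sum_prod_piFinset (ι := Fin n) admissible
    (fun _ c => Complex.exp (θ * Complex.I * (defect k c : ℂ)))
  simp only [sum_exp_defect hk, Finset.prod_const, Finset.card_univ, Fintype.card_fin,
    ← Complex.exp_sum, ← Finset.mul_sum] at h
  have h' := congrArg Complex.re h
  rw [← Complex.ofReal_pow, Complex.ofReal_re, Complex.re_sum] at h'
  rw [← h']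
  refine Finset.sum_congr rfl fun M _ => ?_
  rw [← Complex.exp_ofReal_mul_I_re]
  push_cast
  ring_nf

lemma integral_cos_int_mul (z : ℤ) :
    ∫ θ in (0 : ℝ)..Real.pi, Real.cos ((z : ℝ) * θ) = if z = 0 then Real.pi else 0 := by
  split_ifs with hz
  · simp [hz]
  · have : (z : ℝ) ≠ 0 := by exact_mod_cast hz
    rw [intervalIntegral.integral_comp_mul_left _ this]
    simp [Real.sin_int_mul_pi]

/-- Fourier inversion for the number of returning walks. -/
lemma card_mul_pi {k : Fin 4} (hk : k ≠ 0) (n : ℕ) :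
    ((returns k n).card : ℝ) * Real.pi
      = ∫ θ in (0 : ℝ)..Real.pi, (6 + 2 * Real.cos θ) ^ n := by
  simp only [← sum_cos_defect hk n]
  rw [intervalIntegral.integral_finsetSum
    (fun M _ => (by fun_prop : Continuous _).intervalIntegrable _ _)]
  simp only [integral_cos_int_mul]
  rw [← Finset.sum_filter, Finset.sum_const, nsmul_eq_mul]
  rfl

lemma tendsto_returns {k : Fin 4} (hk : k ≠ 0) :
    Filter.Tendsto (fun n => ((returns k n).card : ℝ) / 8 ^ n) Filter.atTop (nhds 0) := by
  have key : Filter.Tendsto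
      (fun n : ℕ => ∫ θ in (0 : ℝ)..Real.pi, ((6 + 2 * Real.cos θ) / 8) ^ n)
      Filter.atTop (nhds (∫ _ in (0 : ℝ)..Real.pi, (0 : ℝ))) := by
    refine intervalIntegral.tendsto_integral_filter_of_dominated_convergence (fun _ => 1)
      (Filter.Eventually.of_forall fun n =>
        (by fun_prop : Continuous _).aestronglyMeasurable) ?_ (by simp) ?_
    · refine Filter.Eventually.of_forall fun n => Filter.Eventually.of_forall fun θ _ => ?_
      rw [norm_pow]
      refine pow_le_one₀ (norm_nonneg _) ?_
      rw [Real.norm_eq_abs, abs_le]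
      constructor <;> linarith [Real.cos_le_one θ, Real.neg_one_le_cos θ]
    · refine Filter.Eventually.of_forall fun θ hθ => ?_
      rw [Set.uIoc_of_le Real.pi_pos.le] at hθ
      have : Real.cos θ < 1 := by
        rw [← Real.cos_zero]
        exact Real.cos_lt_cos_of_nonneg_of_le_pi le_rfl hθ.2 hθ.1
      exact tendsto_pow_atTop_nhds_zero_of_lt_one
        (by linarith [Real.neg_one_le_cos θ]) (by linarith)
  have h2 := key.div_const Real.pi
  simp only [intervalIntegral.integral_zero, zero_div] at h2
  refine h2.congr fun n => ?_
  simp only [div_pow]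
  rw [intervalIntegral.integral_div, ← card_mul_pi hk]
  field_simp [Real.pi_ne_zero]

lemma prod_sub_prod (D T r₀ r₁ r₂ r₃ : ℤ) (h : r₀ + r₁ + r₂ + r₃ = 2 * T) :
    (D + r₀) * (D + r₁) * (D + r₂) * (D + r₃)
      - (D + (T - r₀)) * (D + (T - r₁)) * (D + (T - r₂)) * (D + (T - r₃))
      = (2 * D + T) * (r₀ + r₁ - T) * (r₀ + r₂ - T) * (r₀ + r₃ - T) := by
  obtain rfl : r₃ = 2 * T - r₀ - r₁ - r₂ := by linarith
  ring

lemma switchDegProd_eq {n : ℕ} (B : Matrix (Fin 4) (Fin 4) ℕ) (C : Matrix (Fin n) (Fin n) ℕ)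
    (N : Matrix (Fin 4) (Fin n) ℕ) (d : ℕ) (hd : ∀ i, ∑ j, B i j = d) :
    switchDegProd B C N = (∏ i, ((d : ℤ) - 1 + ∑ j, (N i j : ℤ))) *
      ∏ j, ((∑ i, (N i j : ℤ)) + ∑ l, (C j l : ℤ) - 1) := by
  unfold switchDegProd
  rw [Fintype.prod_sum_type]
  congr 1
  · refine Finset.prod_congr rfl fun i _ => ?_
    simp only [Fintype.sum_sum_type, Matrix.fromBlocks_apply₁₁, Matrix.fromBlocks_apply₁₂, hd]
    push_cast
    ring
  · refine Finset.prod_congr rfl fun i _ => ?_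
    simp [Fintype.sum_sum_type]

/-- If none of the three walks returns to the origin, then switching changes the product. -/
lemma switchDegProd_ne {n : ℕ} (B : Matrix (Fin 4) (Fin 4) ℕ) (C : Matrix (Fin n) (Fin n) ℕ)
    (d : ℕ) (hd : ∀ i, ∑ j, B i j = d) (hC : ∀ i, 2 ≤ ∑ j, C i j)
    (M : Fin n → Fin 4 → Fin 2) (hM : ∀ j, M j ∈ admissible)
    (h1 : ∑ j, defect 1 (M j) ≠ 0) (h2 : ∑ j, defect 2 (M j) ≠ 0)
    (h3 : ∑ j, defect 3 (M j) ≠ 0) :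
    switchDegProd B C (Matrix.of fun i j => (M j i).val) ≠
      switchDegProd B C (gmSwitch (Matrix.of fun i j => (M j i).val)) := by
  have hent : ∀ i j, ((gmSwitch (Matrix.of fun i j => (M j i).val) i j : ℕ) : ℤ)
      = halfSum (M j) - (M j i).val := fun i j => switch_column (M j) (hM j) i
  rw [switchDegProd_eq B C _ d hd, switchDegProd_eq B C _ d hd]
  simp only [hent, Matrix.of_apply]
  have hcol : ∀ j, ∑ i, (halfSum (M j) - ((M j i).val : ℤ)) = ∑ i, ((M j i).val : ℤ) := by
    intro j
    rw [Finset.sum_sub_distrib, two_mul_halfSum _ (hM j)]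
    simp
    ring
  simp only [hcol]
  have hne : ∏ j, ((∑ i, ((M j i).val : ℤ)) + ∑ l, (C j l : ℤ) - 1) ≠ 0 := by
    refine Finset.prod_ne_zero_iff.mpr fun j _ => ?_
    have h : (2 : ℤ) ≤ ∑ l, (C j l : ℤ) := by exact_mod_cast hC j
    have h' : (0 : ℤ) ≤ ∑ i, ((M j i).val : ℤ) := Finset.sum_nonneg fun i _ => by positivity
    omega
  intro heq
  have heq := mul_right_cancel₀ hne heq
  simp only [Finset.sum_sub_distrib, Fin.prod_univ_four] at heq
  have hT : ∑ j, ((M j 0).val : ℤ) + ∑ j, ((M j 1).val : ℤ) + ∑ j, ((M j 2).val : ℤ)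
      + ∑ j, ((M j 3).val : ℤ) = 2 * ∑ j, halfSum (M j) := by
    simp only [← Finset.sum_add_distrib, Finset.mul_sum]
    refine Finset.sum_congr rfl fun j _ => ?_
    rw [← two_mul_halfSum _ (hM j), Fin.sum_univ_four]
  have habs : |∑ j, defect 1 (M j)| + |∑ j, defect 2 (M j)| + |∑ j, defect 3 (M j)|
      ≤ ∑ j, halfSum (M j) := by
    refine le_trans ?_ (Finset.sum_le_sum fun j _ => abs_defect_le _ (hM j))
    simp only [Finset.sum_add_distrib]
    gcongr <;> exact Finset.abs_sum_le_sum_abs _ _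
  have p1 := Int.one_le_abs h1
  have p2 := Int.one_le_abs h2
  have p3 := Int.one_le_abs h3
  have hprod := prod_sub_prod ((d : ℤ) - 1) _ _ _ _ _ hT
  rw [heq, sub_self] at hprod
  simp only [defect, Finset.sum_sub_distrib, Finset.sum_add_distrib] at h1 h2 h3
  have hu : 2 * ((d : ℤ) - 1) + ∑ j, halfSum (M j) ≠ 0 := by omega
  exact mul_ne_zero (mul_ne_zero (mul_ne_zero hu h1) h2) h3 hprod.symm

/-- For every `ε > 0` there is `N₀` such that for all `n ≥ N₀`, every
adjacency matrix `B` of a regular graph on `4` vertices and every adjacency matrix `C` of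
a graph on `n` vertices of minimum degree at least `2`, the number of admissible `0`-`1`
matrices `N` (each column containing exactly `0`, `2` or `4` ones) for which the graph
`G` with adjacency matrix `[[B, N],[Nᵀ, C]]` and its GM switch `G̃` have different values
of `∏_v (deg v - 1)` is at least `(1 - ε) * 8 ^ n`. -/
theorem stmt_12 :
    ∀ ε : ℝ, 0 < ε → ∃ N₀ : ℕ, ∀ n : ℕ, N₀ ≤ n →
    ∀ B : Matrix (Fin 4) (Fin 4) ℕ, B.IsSymm → (∀ i, B i i = 0) → (∀ i j, B i j ≤ 1) →
      (∃ d, ∀ i, ∑ j, B i j = d) →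
    ∀ C : Matrix (Fin n) (Fin n) ℕ, C.IsSymm → (∀ i, C i i = 0) → (∀ i j, C i j ≤ 1) →
      (∀ i, 2 ≤ ∑ j, C i j) →
    (1 - ε) * 8 ^ n ≤
      ((Finset.univ.filter fun N : Fin 4 → Fin n → Fin 2 =>
          (∀ j, (∑ i, (N i j).val) = 0 ∨ (∑ i, (N i j).val) = 2 ∨
            (∑ i, (N i j).val) = 4) ∧
          switchDegProd B C (Matrix.of fun i j => (N i j).val) ≠
            switchDegProd B C (gmSwitch (Matrix.of fun i j => (N i j).val))).card : ℝ) := by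
  intro ε hε
  have hev : ∀ k : Fin 4, k ≠ 0 → ∀ᶠ n in Filter.atTop,
      ((returns k n).card : ℝ) / 8 ^ n < ε / 3 := fun k hk =>
    (tendsto_returns hk).eventually (gt_mem_nhds (by positivity))
  obtain ⟨N₀, hN₀⟩ := Filter.eventually_atTop.mp
    ((hev 1 (by decide)).and ((hev 2 (by decide)).and (hev 3 (by decide))))
  refine ⟨N₀, fun n hn B _ _ _ hB C _ _ _ hC => ?_⟩
  obtain ⟨d, hd⟩ := hB
  obtain ⟨b1, b2, b3⟩ := hN₀ n hn
  have h8 : (0 : ℝ) < 8 ^ n := by positivity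
  rw [div_lt_iff₀ h8] at b1 b2 b3
  set S := Finset.univ.filter fun N : Fin 4 → Fin n → Fin 2 =>
          (∀ j, (∑ i, (N i j).val) = 0 ∨ (∑ i, (N i j).val) = 2 ∨
            (∑ i, (N i j).val) = 4) ∧
          switchDegProd B C (Matrix.of fun i j => (N i j).val) ≠
            switchDegProd B C (gmSwitch (Matrix.of fun i j => (N i j).val)) with hS
  set P := Fintype.piFinset fun _ : Fin n => admissible with hP
  have hPcard : P.card = 8 ^ n := by simp [hP, card_admissible]
  have hle : (P \ (returns 1 n ∪ returns 2 n ∪ returns 3 n)).card ≤ S.card := by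
    refine Finset.card_le_card_of_injOn (fun M i j => M j i) ?_ ?_
    · intro M hM
      simp only [Finset.coe_sdiff, Set.mem_sdiff, Finset.mem_coe, Finset.mem_union, not_or] at hM
      obtain ⟨hMP, ⟨n1, n2⟩, n3⟩ := hM
      have hMA : ∀ j, M j ∈ admissible := Fintype.mem_piFinset.mp hMP
      have hw : ∀ k, M ∉ returns k n → ∑ j, defect k (M j) ≠ 0 := fun k hk h0 =>
        hk (Finset.mem_filter.mpr ⟨hMP, h0⟩)
      simp only [hS, Finset.coe_filter, Finset.mem_univ, true_and, Set.mem_ofPred_eq]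
      exact ⟨fun j => (Finset.mem_filter.mp (hMA j)).2,
        switchDegProd_ne B C d hd hC M hMA (hw 1 n1) (hw 2 n2) (hw 3 n3)⟩
    · intro M _ M' _ h
      funext j i
      exact congrFun (congrFun h i) j
  have hcard : 8 ^ n ≤ S.card + ((returns 1 n).card + (returns 2 n).card + (returns 3 n).card) := by
    have ha := Finset.le_card_sdiff (returns 1 n ∪ returns 2 n ∪ returns 3 n) P
    have hb := Finset.card_union_le (returns 1 n ∪ returns 2 n) (returns 3 n)
    have hc := Finset.card_union_le (returns 1 n) (returns 2 n)
    omega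
  have hcard' : (8 : ℝ) ^ n ≤
      S.card + ((returns 1 n).card + (returns 2 n).card + (returns 3 n).card) := by
    exact_mod_cast hcard
  linarith
end
end

section
/- Let n ≥ 1 and let d₁, …, dₙ and d₁', …, dₙ' be natural numbers such that Σᵢ dᵢ = Σᵢ dᵢ' and the multisets {d₁, …, dₙ} and {d₁', …, dₙ'} are not equal. Then the set of positive integers r such that ∏ᵢ (dᵢ + r − 1) = ∏ᵢ (dᵢ' + r − 1) has at most n − 1 elements. -/
/-!
Both sides are values at `r` of monic integer polynomials of degree `n`, with roots `1 - d i` and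
`1 - d' i` respectively. Distinct multisets of roots make the polynomials distinct, and the leading
terms cancel, so their difference is a nonzero polynomial of degree less than `n`; every admissible
`r` is one of its roots, of which there are at most `n - 1`.
-/

open Finset

/-- The monic polynomial `∏ i, (X + d i - 1)`, written so that its roots `1 - d i` are visible. -/
noncomputable def shiftPoly {n : ℕ} (d : Fin n → ℕ) : Polynomial ℤ :=
  ((Finset.univ.val.map fun i => (1 : ℤ) - d i).map
    fun a => Polynomial.X - Polynomial.C a).prod

lemma shiftPoly_roots {n : ℕ} (d : Fin n → ℕ) :
    (shiftPoly d).roots = Finset.univ.val.map fun i => (1 : ℤ) - d i :=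
  Polynomial.roots_multiset_prod_X_sub_C _

lemma shiftPoly_monic {n : ℕ} (d : Fin n → ℕ) : (shiftPoly d).Monic :=
  Polynomial.monic_multiset_prod_of_monic _ _ fun a _ => Polynomial.monic_X_sub_C a

lemma shiftPoly_natDegree {n : ℕ} (d : Fin n → ℕ) : (shiftPoly d).natDegree = n := by
  rw [shiftPoly, Polynomial.natDegree_multiset_prod_X_sub_C_eq_card]
  simp

lemma shiftPoly_eval {n : ℕ} (d : Fin n → ℕ) (r : ℤ) :
    (shiftPoly d).eval r = ∏ i, ((d i : ℤ) + r - 1) := by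
  rw [shiftPoly, Polynomial.eval_multiset_prod, Multiset.map_map, Multiset.map_map,
    Finset.prod_eq_multiset_prod]
  congr 1
  refine Multiset.map_congr rfl fun i _ => ?_
  simp
  ring

lemma shiftPoly_injective {n : ℕ} {d d' : Fin n → ℕ} (h : shiftPoly d = shiftPoly d') :
    Multiset.map d Finset.univ.val = Multiset.map d' Finset.univ.val := by
  have h1 := congrArg Polynomial.roots h
  rw [shiftPoly_roots, shiftPoly_roots] at h1
  -- The map `a ↦ 1 - a` from `ℕ` to `ℤ` is injective, so it can be cancelled.
  have hinj : Function.Injective fun a : ℕ => (1 : ℤ) - a := fun a b hab => by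
    simpa using hab
  apply Multiset.map_injective hinj
  simpa only [Multiset.map_map, Function.comp_def] using h1

/-- Let `n ≥ 1` and let `d, d' : Fin n → ℕ` have equal sums but distinct
multisets of values.  Then there are at most `n - 1` positive integers `r` with
`∏ i (d i + r - 1) = ∏ i (d' i + r - 1)`. -/
theorem stmt_14 (n : ℕ) (hn : 1 ≤ n) (d d' : Fin n → ℕ)
    (hsum : ∑ i, d i = ∑ i, d' i)
    (hne : Multiset.map d Finset.univ.val ≠ Multiset.map d' Finset.univ.val) :
    {r : ℕ | 0 < r ∧
        ∏ i, ((d i : ℤ) + r - 1) = ∏ i, ((d' i : ℤ) + r - 1)}.Finite ∧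
    {r : ℕ | 0 < r ∧
        ∏ i, ((d i : ℤ) + r - 1) = ∏ i, ((d' i : ℤ) + r - 1)}.ncard ≤ n - 1 := by
  have hpq : shiftPoly d - shiftPoly d' ≠ 0 := fun h =>
    hne (shiftPoly_injective (sub_eq_zero.mp h))
  have hdeg : (shiftPoly d - shiftPoly d').natDegree < n := by
    have hd : (shiftPoly d).degree = n := by
      rw [Polynomial.degree_eq_natDegree (shiftPoly_monic d).ne_zero, shiftPoly_natDegree]
    have hd' : (shiftPoly d').degree = n := by
      rw [Polynomial.degree_eq_natDegree (shiftPoly_monic d').ne_zero, shiftPoly_natDegree]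
    rw [Polynomial.natDegree_lt_iff_degree_lt hpq, ← hd]
    exact Polynomial.degree_sub_lt (hd.trans hd'.symm) (shiftPoly_monic d).ne_zero
      ((shiftPoly_monic d).leadingCoeff.trans (shiftPoly_monic d').leadingCoeff.symm)
  set S := {r : ℕ | 0 < r ∧
    ∏ i, ((d i : ℤ) + r - 1) = ∏ i, ((d' i : ℤ) + r - 1)}
  have hmaps : ∀ r ∈ S, (r : ℤ) ∈
      ((shiftPoly d - shiftPoly d').roots.toFinset : Set ℤ) := by
    rintro r ⟨-, hr⟩
    simp only [Finset.mem_coe, Multiset.mem_toFinset, Polynomial.mem_roots hpq,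
      Polynomial.IsRoot.def, Polynomial.eval_sub, shiftPoly_eval, hr, sub_self]
  have hinj : Set.InjOn (fun r : ℕ => (r : ℤ)) S := Nat.cast_injective.injOn
  refine ⟨Set.Finite.of_injOn hmaps hinj (Finset.finite_toSet _), ?_⟩
  have h1 := Set.ncard_le_ncard_of_injOn _ hmaps hinj (Finset.finite_toSet _)
  rw [Set.ncard_coe_finset] at h1
  have h2 := Multiset.toFinset_card_le (shiftPoly d - shiftPoly d').roots
  have h3 := Polynomial.card_roots' (shiftPoly d - shiftPoly d')
  omega
end
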